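/- arXiv:1603.08651 — 4 statements merged into one kernel-verified Lean document; each statement's English description precedes it below -/
import Mathlib

section
/- Let B ⊆ ℝ³ be a centrally symmetric convex body such that every closed convex subset of B is parkable in B, and let u ∈ ℝ³ be a unit vector. Then the midpoints of the nonempty chords of B in direction u are coplanar: there exists a two-dimensional linear subspace P ⊆ ℝ³ such that for every y ∈ ℝ³, if the set S = {t ∈ ℝ : y + t•u ∈ B} is nonempty, then y + ((sup S + inf S)/2)•u ∈ P. -/
open Set

/-- Compactness of the join of two compact sets. -/
theorem compact_convexJoin {V : Type*} [NormedAddCommGroup V] [NormedSpace ℝ V]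
    {s t : Set V} (hs : IsCompact s) (ht : IsCompact t) : IsCompact (convexJoin ℝ s t) := by
  have h := ((isCompact_Icc (a := (0 : ℝ)) (b := 1)).prod (hs.prod ht)).image
    (f := fun p : ℝ × V × V => (1 - p.1) • p.2.1 + p.1 • p.2.2) (by fun_prop)
  convert h using 1
  ext x
  simp only [mem_convexJoin, segment_eq_image, mem_image, Prod.exists, mem_prod]
  constructor
  · rintro ⟨a, ha, b, hb, θ, hθ, rfl⟩
    exact ⟨θ, a, b, ⟨hθ, ha, hb⟩, rfl⟩
  · rintro ⟨θ, a, b, ⟨hθ, ha, hb⟩, rfl⟩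
    exact ⟨a, ha, b, hb, θ, hθ, rfl⟩

/-- A function whose increments are controlled by `(t - s) * (N t - N s)` is constant. -/
theorem eq_of_increment (R N : ℝ → ℝ)
    (h : ∀ s t, 0 ≤ s → s ≤ t → t ≤ 1 → |R t - R s| ≤ (t - s) * (N t - N s)) : R 0 = R 1 := by
  have key : ∀ n : ℕ, 0 < n → |R 1 - R 0| ≤ (1 / (n : ℝ)) * (N 1 - N 0) := by
    intro n hn
    have hn' : (0 : ℝ) < n := by exact_mod_cast hn
    have ind : ∀ k : ℕ, k ≤ n →
        |R ((k : ℝ) / n) - R 0| ≤ (1 / (n : ℝ)) * (N ((k : ℝ) / n) - N 0) := by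
      intro k
      induction k with
      | zero => intro _; simp
      | succ k ih =>
        intro hk
        have h1 := ih (by omega)
        have hk' : ((k + 1 : ℕ) : ℝ) ≤ n := by exact_mod_cast hk
        have h2 := h ((k : ℝ) / n) (((k + 1 : ℕ) : ℝ) / n) (by positivity)
          (by gcongr; simp) (by rw [div_le_one hn']; exact hk')
        have h3 : ((k + 1 : ℕ) : ℝ) / n - (k : ℝ) / n = 1 / n := by push_cast; ring
        rw [h3] at h2
        have h4 := abs_sub_le (R (((k + 1 : ℕ) : ℝ) / n)) (R ((k : ℝ) / n)) (R 0)
        linarith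
    have := ind n le_rfl
    rwa [div_self hn'.ne'] at this
  have hlim : Filter.Tendsto (fun n : ℕ => (1 / (n : ℝ)) * (N 1 - N 0)) Filter.atTop (nhds 0) := by
    simpa using (tendsto_one_div_atTop_nhds_zero_nat (𝕜 := ℝ)).mul_const (N 1 - N 0)
  have h0 : |R 1 - R 0| ≤ 0 := ge_of_tendsto hlim
    (Filter.eventually_atTop.2 ⟨1, fun n hn => key n hn⟩)
  have := abs_nonpos_iff.1 h0
  linarith

section body
variable {V : Type*} [NormedAddCommGroup V] [InnerProductSpace ℝ V]

/-- Support function. -/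
noncomputable def supp (B : Set V) (n : V) : ℝ := sSup ((fun x => inner ℝ n x) '' B)

theorem le_supp {B : Set V} (hB : IsCompact B) (n : V) {x : V} (hx : x ∈ B) :
    inner ℝ n x ≤ supp B n :=
  le_csSup (hB.image (f := fun x => inner ℝ n x) (by fun_prop)).bddAbove ⟨x, hx, rfl⟩

theorem exists_supp {B : Set V} (hB : IsCompact B) (hne : B.Nonempty) (n : V) :
    ∃ x ∈ B, inner ℝ n x = supp B n :=
  (hB.image (f := fun x => inner ℝ n x) (by fun_prop)).sSup_mem (hne.image _)

/-- Face of `B` in direction `n`. -/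
def faceOf (B : Set V) (n : V) : Set V := {x | x ∈ B ∧ inner ℝ n x = supp B n}

theorem faceOf_compact {B : Set V} (hB : IsCompact B) (n : V) : IsCompact (faceOf B n) := by
  refine hB.inter_right (t := {x | inner ℝ n x = supp B n}) ?_
  exact isClosed_eq (by fun_prop) (by fun_prop)

theorem faceOf_convex {B : Set V} (hB : Convex ℝ B) (n : V) : Convex ℝ (faceOf B n) := by
  rintro x ⟨hx, hx'⟩ y ⟨hy, hy'⟩ a b ha hb hab
  refine ⟨hB hx hy ha hb hab, ?_⟩
  rw [inner_add_right, inner_smul_right, inner_smul_right, hx', hy', ← add_mul, hab, one_mul]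

/-- A bounded nonempty set cannot be translated into itself. -/
theorem translate_self_zero {F : Set V} (hF : IsCompact F) (hne : F.Nonempty) (w : V)
    (h : ∀ x ∈ F, x + w ∈ F) : w = 0 := by
  obtain ⟨x, hx, hmax⟩ := exists_supp hF hne w
  have h1 := le_supp hF w (h x hx)
  rw [inner_add_right, hmax] at h1
  have h2 : inner ℝ w w ≤ 0 := by linarith
  exact real_inner_self_nonpos.1 h2

theorem supp_neg {B : Set V} (hBsym : B = -B) (n : V) : supp B (-n) = supp B n := by
  unfold supp
  congr 1
  ext r
  constructor
  · rintro ⟨x, hx, rfl⟩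
    refine ⟨-x, ?_, by simp⟩
    rw [hBsym] at hx; simpa using hx
  · rintro ⟨x, hx, rfl⟩
    refine ⟨-x, ?_, by simp⟩
    rw [hBsym] at hx; simpa using hx

/-- Consequence of parkability. -/
theorem park_key {B : Set V} (hBcomp : IsCompact B) (hBconv : Convex ℝ B) (hne : B.Nonempty)
    (hBsym : B = -B)
    (hpark : ∀ C : Set V, C ⊆ B → C.Nonempty → IsClosed C → Convex ℝ C →
      ∃ v : V, (0 : V) ∈ (fun x => x + v) '' C ∧ (fun x => x + v) '' C ⊆ B)
    {z ζ : V} (hz : z ∈ B) (hζz : inner ℝ ζ z = 1) (hζ : ∀ x ∈ B, inner ℝ ζ x ≤ 1)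
    {η : V} (hη : inner ℝ η z = 0) (hpos : 0 < supp B η) {s : ℝ} (hs : 0 < s) :
    ∃ x ∈ B, ∃ y ∈ B, ∃ l k : ℝ, 0 ≤ l ∧ inner ℝ (η + s • ζ) x = supp B (η + s • ζ) ∧
      inner ℝ η y = supp B η ∧ x = l • y + k • z := by
  have hneg : ∀ {x}, x ∈ B → -x ∈ B := by
    intro x hx; rw [hBsym]; simpa using hx
  set F := faceOf B (η + s • ζ) with hF
  set G := faceOf B (-η) with hG
  have hFne : F.Nonempty := exists_supp hBcomp hne _
  have hGne : G.Nonempty := exists_supp hBcomp hne _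
  have hFB : F ⊆ B := fun x hx => hx.1
  have hGB : G ⊆ B := fun x hx => hx.1
  have hFG : convexJoin ℝ F G ⊆ B := by
    intro x hx
    obtain ⟨a, ha, b, hb, hx⟩ := mem_convexJoin.1 hx
    exact hBconv.segment_subset (hFB ha) (hGB hb) hx
  set C := convexJoin ℝ (convexJoin ℝ F G) {-z} with hC
  have hFC : F ⊆ C := (subset_convexJoin_left hGne).trans (subset_convexJoin_left (by simp))
  have hGC : G ⊆ C := (subset_convexJoin_right hFne).trans (subset_convexJoin_left (by simp))
  have hFGne : (convexJoin ℝ F G).Nonempty := hFne.mono (subset_convexJoin_left hGne)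
  have hzC : -z ∈ C := subset_convexJoin_right hFGne (by simp)
  have hCB : C ⊆ B := by
    intro x hx
    obtain ⟨a, ha, b, hb, hx⟩ := mem_convexJoin.1 hx
    rw [mem_singleton_iff] at hb
    subst hb
    exact hBconv.segment_subset (hFG ha) (hneg hz) hx
  have hCcomp : IsCompact C := compact_convexJoin (compact_convexJoin (faceOf_compact hBcomp _)
    (faceOf_compact hBcomp _)) isCompact_singleton
  have hCconv : Convex ℝ C := ((faceOf_convex hBconv _).convexJoin (faceOf_convex hBconv _)).convexJoin
    (convex_singleton _)
  obtain ⟨w, ⟨c, hc, hcw⟩, hw⟩ := hpark C hCB (hFne.mono hFC) hCcomp.isClosed hCconv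
  have hwB : ∀ x ∈ C, x + w ∈ B := fun x hx => hw ⟨x, hx, rfl⟩
  -- the translation is trivial
  have h1 : inner ℝ (η + s • ζ) w ≤ 0 := by
    obtain ⟨x, hx⟩ := hFne
    have := le_supp hBcomp (η + s • ζ) (hwB x (hFC hx))
    rw [inner_add_right, hx.2] at this
    linarith
  have h2 : inner ℝ (-η) w ≤ 0 := by
    obtain ⟨x, hx⟩ := hGne
    have := le_supp hBcomp (-η) (hwB x (hGC hx))
    rw [inner_add_right, hx.2] at this
    linarith
  have h3 : 0 ≤ inner ℝ ζ w := by
    have := hζ _ (hneg (hwB _ hzC))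
    rw [inner_neg_right, inner_add_right, inner_neg_right, hζz] at this
    linarith
  have h1' : inner ℝ η w + s * inner ℝ ζ w ≤ 0 := by
    simpa [inner_add_left, inner_smul_left] using h1
  have h2' : 0 ≤ inner ℝ η w := by simpa using h2
  have h4 : inner ℝ (η + s • ζ) w = 0 := by
    rw [inner_add_left, inner_smul_left]
    simp only [conj_trivial]
    have := mul_nonneg hs.le h3
    linarith
  have hw0 : w = 0 := by
    refine translate_self_zero (faceOf_compact hBcomp (η + s • ζ)) hFne w ?_
    intro x hx
    refine ⟨hwB x (hFC hx), ?_⟩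
    rw [inner_add_right, h4, add_zero, hx.2]
  have hc0 : c = 0 := by
    have : c + w = 0 := hcw
    rwa [hw0, add_zero] at this
  rw [hc0] at hc
  obtain ⟨m, hm, b, hb, a1, b1, ha1, hb1, hab1, h0⟩ := mem_convexJoin.1 hc
  rw [mem_singleton_iff] at hb
  obtain ⟨x, hx, y', hy', a2, b2, ha2, hb2, hab2, hm'⟩ := mem_convexJoin.1 hm
  rw [hb, ← hm', smul_add, smul_smul, smul_smul, smul_neg] at h0
  have hη0 := congrArg (fun v => inner ℝ η v) h0
  simp only [inner_add_right, inner_neg_right, inner_smul_right, hη, inner_zero_right] at hη0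
  have hy'η : inner ℝ η y' = - supp B η := by
    have := hy'.2
    rw [inner_neg_left, supp_neg hBsym] at this
    linarith
  rw [hy'η] at hη0
  have hA : a1 * a2 ≠ 0 := by
    intro hA
    rw [hA] at hη0
    have hb0 : a1 * b2 = 0 := by
      have : a1 * b2 * supp B η = 0 := by linarith
      rcases mul_eq_zero.1 this with h | h
      · exact h
      · exact absurd h hpos.ne'
    have ha10 : a1 = 0 := by
      have : a1 * (a2 + b2) = 0 := by rw [mul_add, hA, hb0, add_zero]
      rwa [hab2, mul_one] at this
    have hb11 : b1 = 1 := by linarith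
    rw [hA, hb0, hb11] at h0
    have hz0 : z = 0 := by simpa using h0
    rw [hz0] at hζz
    simp at hζz
  refine ⟨x, hFB hx, -y', hneg (hGB hy'), (a1 * a2)⁻¹ * (a1 * b2), (a1 * a2)⁻¹ * b1,
    by positivity, hx.2, by rw [inner_neg_right, hy'η, neg_neg], ?_⟩
  have h5 : (a1 * a2) • x = (a1 * b2) • (-y') + b1 • z := by
    rw [smul_neg, ← sub_eq_zero, ← h0]; abel
  rw [mul_smul _ (a1 * b2), mul_smul _ b1, ← smul_add, ← h5, smul_smul, inv_mul_cancel₀ hA, one_smul]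

/-- Constancy of the ratio along segments avoiding the origin. -/
theorem ratio_const {B : Set V} (hBcomp : IsCompact B) (hBconv : Convex ℝ B) (hne : B.Nonempty)
    (hBsym : B = -B)
    (hpark : ∀ C : Set V, C ⊆ B → C.Nonempty → IsClosed C → Convex ℝ C →
      ∃ v : V, (0 : V) ∈ (fun x => x + v) '' C ∧ (fun x => x + v) '' C ⊆ B)
    {δ : ℝ} (hδ : 0 < δ) (hball : ∀ n, δ * ‖n‖ ≤ supp B n)
    {z ζ : V} (hz : z ∈ B) (hζz : inner ℝ ζ z = 1) (hζ : ∀ x ∈ B, inner ℝ ζ x ≤ 1)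
    {a b : V} (ha : inner ℝ a z = 0) (hb : inner ℝ b z = 0)
    (h0 : ∀ τ : ℝ, 0 ≤ τ → τ ≤ 1 → a + τ • (b - a) ≠ 0) {k : ℝ} (hk : 0 < k) :
    supp B (a + (k * supp B a) • ζ) / supp B a = supp B (b + (k * supp B b) • ζ) / supp B b := by
  set e : ℝ → V := fun τ => a + τ • (b - a) with he
  obtain ⟨m, hm, hme⟩ : ∃ m : ℝ, 0 < m ∧ ∀ τ, 0 ≤ τ → τ ≤ 1 → m ≤ supp B (e τ) := by
    obtain ⟨τ0, hτ0, hmin⟩ := (isCompact_Icc (a := (0 : ℝ)) (b := 1)).exists_isMinOn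
      ⟨0, by simp⟩ (f := fun τ => ‖e τ‖) (by simp only [he]; fun_prop)
    refine ⟨δ * ‖e τ0‖, mul_pos hδ (norm_pos_iff.2 (h0 τ0 hτ0.1 hτ0.2)), ?_⟩
    intro τ h1 h2
    have h3 : ‖e τ0‖ ≤ ‖e τ‖ := hmin (mem_Icc.2 ⟨h1, h2⟩)
    exact (mul_le_mul_of_nonneg_left h3 hδ.le).trans (hball _)
  have hez : ∀ τ, inner ℝ (e τ) z = 0 := by
    intro τ
    simp [he, inner_add_left, inner_smul_left, inner_sub_left, ha, hb]
  have hdiff : ∀ s t, e t - e s = (t - s) • (b - a) := by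
    intro s t
    simp only [he]; module
  set R : ℝ → ℝ := fun τ => supp B (e τ + (k * supp B (e τ)) • ζ) / supp B (e τ) with hR
  have key : ∀ τ : ℝ, ∃ y ∈ B, 0 ≤ τ → τ ≤ 1 → inner ℝ (e τ) y = supp B (e τ) ∧
      ∀ η : V, inner ℝ η z = 0 →
      (R τ - supp B (η + (k * supp B η) • ζ) / supp B η) * supp B η ≤
        inner ℝ (e τ - η) y - (supp B (e τ) - supp B η) ∨ supp B η = 0 := by
    intro τ
    by_cases hτ : 0 ≤ τ ∧ τ ≤ 1
    swap
    · obtain ⟨y, hy⟩ := hne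
      exact ⟨y, hy, fun h1 h2 => absurd ⟨h1, h2⟩ hτ⟩
    have hq : 0 < supp B (e τ) := hm.trans_le (hme τ hτ.1 hτ.2)
    obtain ⟨x, hx, y, hy, l, κ, hl, hx1, hy1, hxy⟩ := park_key hBcomp hBconv hne hBsym hpark hz hζz
      hζ (hez τ) hq (mul_pos hk hq)
    refine ⟨y, hy, fun _ _ => ⟨hy1, ?_⟩⟩
    intro η hη
    by_cases hη0 : supp B η = 0
    · right; exact hη0
    left
    have hproj : ∀ μ : V, inner ℝ μ z = 0 → inner ℝ μ x = l * inner ℝ μ y := by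
      intro μ hμ
      rw [hxy, inner_add_right, inner_smul_right, inner_smul_right, hμ]; ring
    have hl1 : l ≤ 1 := by
      have h1 := le_supp hBcomp (e τ) hx
      rw [hproj _ (hez τ), hy1] at h1
      by_contra hcon
      push Not at hcon
      nlinarith
    have hRq : R τ * supp B (e τ) = supp B (e τ + (k * supp B (e τ)) • ζ) := by
      simp only [hR]; field_simp
    have hE : supp B (e τ + (k * supp B (e τ)) • ζ) =
        l * supp B (e τ) + k * supp B (e τ) * inner ℝ ζ x := by
      rw [← hx1, inner_add_left, inner_smul_left, hproj _ (hez τ), hy1]; simp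
    have hRv : R τ = l + k * inner ℝ ζ x := by
      have : R τ * supp B (e τ) = (l + k * inner ℝ ζ x) * supp B (e τ) := by
        rw [hRq, hE]; ring
      exact mul_right_cancel₀ hq.ne' this
    have hlow : l * inner ℝ η y + k * supp B η * inner ℝ ζ x ≤ supp B (η + (k * supp B η) • ζ) := by
      have := le_supp hBcomp (η + (k * supp B η) • ζ) hx
      rw [inner_add_left, inner_smul_left, hproj _ hη] at this
      simpa using this
    have hηy := le_supp hBcomp η hy
    rw [sub_mul, div_mul_cancel₀ _ hη0, hRv, inner_sub_left, hy1]
    nlinarith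
  choose y hyB hy using key
  have hinc : ∀ s t, 0 ≤ s → s ≤ 1 → 0 ≤ t → t ≤ 1 →
      (R t - R s) * m ≤ (t - s) * (inner ℝ (b - a) (y t) - inner ℝ (b - a) (y s)) := by
    intro s t hs0 hs1 ht0 ht1
    have hqs := hme s hs0 hs1
    obtain ⟨hyt, hyt'⟩ := hy t ht0 ht1
    obtain ⟨hys, -⟩ := hy s hs0 hs1
    have h1 := (hyt' (e s) (hez s)).resolve_right (hm.trans_le hqs).ne'
    have h2 := le_supp hBcomp (e t) (hyB s)
    have h3 : inner ℝ (e t - e s) (y t) - (supp B (e t) - supp B (e s)) ≤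
        (t - s) * (inner ℝ (b - a) (y t) - inner ℝ (b - a) (y s)) := by
      have h4 : inner ℝ (e t - e s) (y s) = (t - s) * inner ℝ (b - a) (y s) := by
        rw [hdiff, inner_smul_left]; simp
      have h5 : inner ℝ (e t - e s) (y t) = (t - s) * inner ℝ (b - a) (y t) := by
        rw [hdiff, inner_smul_left]; simp
      rw [inner_sub_left, hys] at h4
      linarith
    have h6 : 0 ≤ inner ℝ (e t - e s) (y t) - (supp B (e t) - supp B (e s)) := by
      have := le_supp hBcomp (e s) (hyB t)
      rw [inner_sub_left, hyt]; linarith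
    have h7 : (R t - R s) * supp B (e s) ≤
      (t - s) * (inner ℝ (b - a) (y t) - inner ℝ (b - a) (y s)) := h1.trans h3
    rcases le_total 0 (R t - R s) with h | h
    · exact (mul_le_mul_of_nonneg_left hqs h).trans h7
    · exact (mul_nonpos_of_nonpos_of_nonneg h hm.le).trans (h6.trans h3)
  have hfin : R 0 = R 1 := by
    refine eq_of_increment R (fun τ => m⁻¹ * inner ℝ (b - a) (y τ)) ?_
    intro s t hs hst ht
    have h1 := hinc s t hs (hst.trans ht) (hs.trans hst) ht
    have h2 := hinc t s (hs.trans hst) ht hs (hst.trans ht)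
    have h3 : |R t - R s| * m ≤ (t - s) * (inner ℝ (b - a) (y t) - inner ℝ (b - a) (y s)) := by
      rcases abs_cases (R t - R s) with ⟨h, _⟩ | ⟨h, _⟩ <;> rw [h] <;> linarith
    have h4 := mul_le_mul_of_nonneg_right h3 (inv_pos.2 hm).le
    rw [mul_assoc, mul_inv_cancel₀ hm.ne', mul_one] at h4
    linarith
  simpa [hR, he] using hfin


theorem supp_smul {B : Set V} (hB : IsCompact B) (hne : B.Nonempty) (n : V) {c : ℝ} (hc : 0 ≤ c) :
    supp B (c • n) = c * supp B n := by
  apply le_antisymm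
  · obtain ⟨x, hx, hx'⟩ := exists_supp hB hne (c • n)
    rw [← hx', inner_smul_left]
    exact mul_le_mul_of_nonneg_left (le_supp hB n hx) hc
  · obtain ⟨x, hx, hx'⟩ := exists_supp hB hne n
    have := le_supp hB (c • n) hx
    rw [inner_smul_left, hx'] at this
    exact this

/-- The support function is invariant under the dual reflection. -/
theorem supp_reflect {B : Set V} (hBcomp : IsCompact B) (hBconv : Convex ℝ B) (hne : B.Nonempty)
    (hBsym : B = -B)
    (hpark : ∀ C : Set V, C ⊆ B → C.Nonempty → IsClosed C → Convex ℝ C →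
      ∃ v : V, (0 : V) ∈ (fun x => x + v) '' C ∧ (fun x => x + v) '' C ⊆ B)
    (hdim : ∀ p q : V, ∃ v : V, v ≠ 0 ∧ inner ℝ v p = 0 ∧ inner ℝ v q = 0)
    {δ : ℝ} (hδ : 0 < δ) (hball : ∀ n, δ * ‖n‖ ≤ supp B n)
    {z ζ : V} (hz : z ∈ B) (hζz : inner ℝ ζ z = 1) (hζ : ∀ x ∈ B, inner ℝ ζ x ≤ 1)
    {η : V} (hη : inner ℝ η z = 0) {s : ℝ} (hs : 0 < s) :
    supp B (-η + s • ζ) = supp B (η + s • ζ) := by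
  by_cases hη0 : η = 0
  · simp [hη0]
  obtain ⟨v, hv0, hvz, hvη⟩ := hdim z η
  have hq : 0 < supp B η := (mul_pos hδ (norm_pos_iff.2 hη0)).trans_le (hball η)
  have hvv : inner ℝ v v ≠ 0 := inner_self_ne_zero.2 hv0
  have hηη : inner ℝ η η ≠ 0 := inner_self_ne_zero.2 hη0
  have hk : 0 < s / supp B η := div_pos hs hq
  have h1 := ratio_const hBcomp hBconv hne hBsym hpark hδ hball hz hζz hζ hη hvz (k := s / supp B η)
    (by
      intro τ _ _ h
      have e1 := congrArg (fun w => inner ℝ w v) h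
      have e2 := congrArg (fun w => inner ℝ w η) h
      have hηv : inner ℝ η v = 0 := by rw [real_inner_comm]; exact hvη
      simp only [inner_add_left, inner_smul_left, inner_sub_left, hvη, hηv, inner_zero_left,
        conj_trivial] at e1 e2
      have : τ = 0 := by
        have : τ * inner ℝ v v = 0 := by linarith
        exact (mul_eq_zero.1 this).resolve_right hvv
      rw [this] at e2
      apply hηη; linarith) hk
  have hη' : inner ℝ (-η) z = 0 := by simp [hη]
  have h2 := ratio_const hBcomp hBconv hne hBsym hpark hδ hball hz hζz hζ hη' hvz
    (k := s / supp B η)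
    (by
      intro τ _ _ h
      have e1 := congrArg (fun w => inner ℝ w v) h
      have e2 := congrArg (fun w => inner ℝ w η) h
      have hηv : inner ℝ η v = 0 := by rw [real_inner_comm]; exact hvη
      simp only [inner_add_left, inner_smul_left, inner_sub_left, hvη, hηv, inner_zero_left,
        conj_trivial, inner_neg_left] at e1 e2
      have : τ = 0 := by
        have : τ * inner ℝ v v = 0 := by linarith
        exact (mul_eq_zero.1 this).resolve_right hvv
      rw [this] at e2
      apply hηη; linarith) hk
  have h3 := h2.trans h1.symm
  rw [supp_neg hBsym η, div_mul_cancel₀ _ hq.ne'] at h3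
  field_simp at h3
  exact h3

/-- The body is invariant under the affine reflection. -/
theorem body_reflect {B : Set V} (hBcomp : IsCompact B) (hBconv : Convex ℝ B) (hne : B.Nonempty)
    (hBsym : B = -B) [CompleteSpace V]
    (hpark : ∀ C : Set V, C ⊆ B → C.Nonempty → IsClosed C → Convex ℝ C →
      ∃ v : V, (0 : V) ∈ (fun x => x + v) '' C ∧ (fun x => x + v) '' C ⊆ B)
    (hdim : ∀ p q : V, ∃ v : V, v ≠ 0 ∧ inner ℝ v p = 0 ∧ inner ℝ v q = 0)
    {δ : ℝ} (hδ : 0 < δ) (hball : ∀ n, δ * ‖n‖ ≤ supp B n)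
    {z ζ : V} (hz : z ∈ B) (hζz : inner ℝ ζ z = 1) (hζ : ∀ x ∈ B, inner ℝ ζ x ≤ 1)
    {x : V} (hx : x ∈ B) : x - (2 * inner ℝ ζ x) • z ∈ B := by
  by_contra hcon
  obtain ⟨f, r, hf1, hf2⟩ := geometric_hahn_banach_closed_point hBconv hBcomp.isClosed hcon
  set n := (InnerProductSpace.toDual ℝ V).symm f with hn
  have hfn : ∀ y, f y = inner ℝ n y := by
    intro y; rw [hn, InnerProductSpace.toDual_symm_apply]
  obtain ⟨y, hy, hy'⟩ := exists_supp hBcomp hne n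
  have h1 := hf1 y hy
  rw [hfn, hy'] at h1
  rw [hfn] at hf2
  set s := inner ℝ n z with hs
  set η := n - s • ζ with hη
  have hηz : inner ℝ η z = 0 := by
    rw [hη, inner_sub_left, inner_smul_left, hζz]; simp [hs]
  have hnη : n = η + s • ζ := by rw [hη]; abel
  have h2 : inner ℝ n (x - (2 * inner ℝ ζ x) • z) = inner ℝ (η + (-s) • ζ) x := by
    rw [inner_sub_right, inner_smul_right, ← hs, hη]
    simp only [inner_add_left, inner_sub_left, inner_smul_left, conj_trivial]
    ring
  have h3 := le_supp hBcomp (η + (-s) • ζ) hx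
  have h4 : supp B (η + (-s) • ζ) = supp B n := by
    rw [hnη]
    rcases lt_trichotomy s 0 with h | h | h
    · have := supp_reflect hBcomp hBconv hne hBsym hpark hdim hδ hball hz hζz hζ hηz
        (s := -s) (by linarith)
      rw [← this, ← supp_neg hBsym]
      congr 1; module
    · rw [h]; simp
    · have := supp_reflect hBcomp hBconv hne hBsym hpark hdim hδ hball hz hζz hζ hηz h
      rw [← this, ← supp_neg hBsym]
      congr 1; module
  linarith

end body

theorem dim_three (p q : EuclideanSpace ℝ (Fin 3)) :
    ∃ v : EuclideanSpace ℝ (Fin 3), v ≠ 0 ∧ inner ℝ v p = 0 ∧ inner ℝ v q = 0 := by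
  have hlt : Submodule.span ℝ {p, q} < ⊤ := by
    apply Submodule.lt_top_of_finrank_lt_finrank
    have h1 : Module.finrank ℝ (Submodule.span ℝ (({p, q} : Finset (EuclideanSpace ℝ (Fin 3))) :
      Set (EuclideanSpace ℝ (Fin 3)))) ≤ _ := finrank_span_finset_le_card _
    have h2 := Finset.card_le_two (a := p) (b := q)
    have h3 : Module.finrank ℝ (EuclideanSpace ℝ (Fin 3)) = 3 := by simp
    rw [Finset.coe_pair] at h1
    omega
  have hne : (Submodule.span ℝ {p, q})ᗮ ≠ ⊥ := by
    intro h
    exact hlt.ne (Submodule.orthogonal_eq_bot_iff.1 h)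
  obtain ⟨v, hv, hv0⟩ := Submodule.exists_mem_ne_zero_of_ne_bot hne
  refine ⟨v, hv0, ?_, ?_⟩
  · exact Submodule.inner_left_of_mem_orthogonal (Submodule.subset_span (by simp)) hv
  · exact Submodule.inner_left_of_mem_orthogonal (Submodule.subset_span (by simp)) hv

/-- For a centrally symmetric parkable convex body `B ⊆ ℝ³` and any unit vector
`u`, the midpoints of the nonempty chords of `B` in direction `u` are coplanar:
they lie on a two-dimensional linear subspace. -/
theorem stmt_15 (B : Set (EuclideanSpace ℝ (Fin 3)))
    (hBcomp : IsCompact B) (hBconv : Convex ℝ B)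
    (hBint : (interior B).Nonempty) (hB0 : (0 : EuclideanSpace ℝ (Fin 3)) ∈ B)
    (hBsym : B = -B)
    (hpark : ∀ C : Set (EuclideanSpace ℝ (Fin 3)),
      C ⊆ B → C.Nonempty → IsClosed C → Convex ℝ C →
      ∃ v : EuclideanSpace ℝ (Fin 3),
        (0 : EuclideanSpace ℝ (Fin 3)) ∈ (fun x => x + v) '' C ∧
        (fun x => x + v) '' C ⊆ B)
    (u : EuclideanSpace ℝ (Fin 3)) (hu : ‖u‖ = 1) :
    ∃ P : Submodule ℝ (EuclideanSpace ℝ (Fin 3)), Module.finrank ℝ P = 2 ∧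
      ∀ y : EuclideanSpace ℝ (Fin 3), {t : ℝ | y + t • u ∈ B}.Nonempty →
        y + ((sSup {t : ℝ | y + t • u ∈ B} + sInf {t : ℝ | y + t • u ∈ B}) / 2) • u ∈ P := by
  obtain ⟨x0, hx0⟩ := hBint
  have hneg : ∀ {x}, x ∈ B → -x ∈ B := by
    intro x hx; rw [hBsym]; simpa using hx
  have hne : B.Nonempty := ⟨0, hB0⟩
  have hu0 : u ≠ 0 := by
    intro h; rw [h] at hu; simp at hu
  -- a ball around the origin
  obtain ⟨ε, hε, hεB⟩ : ∃ ε > 0, Metric.ball (0 : EuclideanSpace ℝ (Fin 3)) ε ⊆ B := by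
    obtain ⟨ε, hε, hb⟩ := Metric.isOpen_iff.1 isOpen_interior x0 hx0
    refine ⟨ε, hε, ?_⟩
    intro y hy
    have h1 : x0 + y ∈ B := interior_subset (hb (by simpa using hy))
    have h2 : -(x0 - y) ∈ B := hneg (interior_subset (hb (by simpa using hy)))
    have := hBconv h1 h2 (a := 1/2) (b := 1/2) (by norm_num) (by norm_num) (by norm_num)
    convert this using 1
    module
  have hball : ∀ n, ε / 2 * ‖n‖ ≤ supp B n := by
    intro n
    by_cases hn : n = 0
    · have := le_supp hBcomp n hB0
      rw [inner_zero_right] at this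
      simpa [hn] using this
    have hn' : 0 < ‖n‖ := norm_pos_iff.2 hn
    have hmem : (ε / 2 / ‖n‖) • n ∈ B := by
      apply hεB
      rw [mem_ball_zero_iff, norm_smul, Real.norm_eq_abs, abs_of_pos (by positivity),
        div_mul_cancel₀ _ hn'.ne']
      linarith
    have := le_supp hBcomp n hmem
    rw [inner_smul_right, real_inner_self_eq_norm_sq] at this
    calc ε / 2 * ‖n‖ = ε / 2 / ‖n‖ * ‖n‖ ^ 2 := by field_simp
      _ ≤ _ := this
  -- chords are compact
  have hcomp : ∀ y : EuclideanSpace ℝ (Fin 3), IsCompact {t : ℝ | y + t • u ∈ B} := by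
    intro y
    obtain ⟨M, hM⟩ := hBcomp.isBounded.exists_norm_le
    refine Metric.isCompact_of_isClosed_isBounded ?_ ?_
    · exact hBcomp.isClosed.preimage (f := fun t : ℝ => y + t • u) (by fun_prop)
    · refine (Metric.isBounded_iff_subset_closedBall 0).2 ⟨M + ‖y‖, ?_⟩
      intro t ht
      have h1 := hM _ ht
      have h2 : ‖t • u‖ ≤ ‖y + t • u‖ + ‖y‖ := by
        have := norm_sub_le (y + t • u) y
        simpa using this
      rw [norm_smul, hu, mul_one] at h2
      rw [mem_closedBall_zero_iff]
      linarith
  -- the boundary point in direction u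
  have hr0 : (ε / 2) ∈ {t : ℝ | (0 : EuclideanSpace ℝ (Fin 3)) + t • u ∈ B} := by
    apply hεB
    rw [zero_add, mem_ball_zero_iff, norm_smul, hu, Real.norm_eq_abs, abs_of_pos (by positivity)]
    linarith
  set r := sSup {t : ℝ | (0 : EuclideanSpace ℝ (Fin 3)) + t • u ∈ B} with hr
  have hrB : (0 : EuclideanSpace ℝ (Fin 3)) + r • u ∈ B := (hcomp 0).sSup_mem ⟨_, hr0⟩
  rw [zero_add] at hrB
  have hrle : ∀ t : ℝ, t • u ∈ B → t ≤ r := by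
    intro t ht
    exact le_csSup (hcomp 0).bddAbove (by simpa using ht)
  have hrpos : 0 < r := by
    have := hrle (ε / 2) (by simpa using hr0)
    linarith
  have hnint : r • u ∉ interior B := by
    intro h
    obtain ⟨e, he, hb⟩ := Metric.isOpen_iff.1 isOpen_interior _ h
    have : (r + e / 2) • u ∈ B := by
      apply interior_subset
      apply hb
      rw [mem_ball_iff_norm, add_smul, add_sub_cancel_left, norm_smul, hu, Real.norm_eq_abs,
        abs_of_pos (by positivity)]
      linarith
    have := hrle _ this
    linarith
  obtain ⟨f, hf0, hf⟩ := geometric_hahn_banach_of_nonempty_interior_point hBconv hnint ⟨x0, hx0⟩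
  set n := (InnerProductSpace.toDual ℝ (EuclideanSpace ℝ (Fin 3))).symm f with hn
  have hfn : ∀ y, f y = inner ℝ n y := by
    intro y; rw [hn, InnerProductSpace.toDual_symm_apply]
  have hn0 : n ≠ 0 := by
    intro h
    apply hf0
    ext y
    rw [hfn, h]; simp
  have hpos : 0 < inner ℝ n (r • u) := by
    obtain ⟨x, hx, hx'⟩ := exists_supp hBcomp hne n
    have h1 := hf x hx
    rw [hfn, hfn, hx'] at h1
    have h2 := hball n
    have h3 : 0 < ε / 2 * ‖n‖ := mul_pos (by linarith) (norm_pos_iff.2 hn0)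
    linarith
  set m := inner ℝ n (r • u) with hm
  set ζ := m⁻¹ • n with hζd
  have hζ0 : ζ ≠ 0 := smul_ne_zero (inv_pos.2 hpos).ne' hn0
  have hζz : inner ℝ ζ (r • u) = 1 := by
    rw [hζd, inner_smul_left, ← hm]
    simp [hpos.ne']
  have hζ : ∀ x ∈ B, inner ℝ ζ x ≤ 1 := by
    intro x hx
    have h1 := hf x hx
    rw [hfn, hfn, ← hm] at h1
    rw [hζd, inner_smul_left]
    simp only [conj_trivial]
    rw [inv_mul_le_iff₀ hpos]; linarith
  have hrefl : ∀ x ∈ B, x - (2 * inner ℝ ζ x) • (r • u) ∈ B := fun x hx =>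
    body_reflect hBcomp hBconv hne hBsym hpark dim_three (half_pos hε) hball hrB hζz hζ hx
  have hζu : r * inner ℝ ζ u = 1 := by rw [← hζz, inner_smul_right]
  haveI : Fact (Module.finrank ℝ (EuclideanSpace ℝ (Fin 3)) = 2 + 1) := ⟨by simp⟩
  refine ⟨(Submodule.span ℝ {ζ})ᗮ, Submodule.finrank_orthogonal_span_singleton hζ0, ?_⟩
  intro y hy
  set S := {t : ℝ | y + t • u ∈ B} with hS
  set c := -(2 * r * inner ℝ ζ y) with hc
  have hsym : ∀ t ∈ S, c - t ∈ S := by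
    intro t ht
    have h1 := hrefl _ ht
    have h2 : y + t • u - (2 * inner ℝ ζ (y + t • u)) • (r • u) = y + (c - t) • u := by
      have h3 : 2 * inner ℝ ζ (y + t • u) * r = 2 * t - c := by
        rw [inner_add_right, inner_smul_right, hc]
        linear_combination 2 * t * hζu
      rw [smul_smul, h3]; module
    rw [h2] at h1
    exact h1
  have hsup : sSup S ∈ S := (hcomp y).sSup_mem hy
  have hinf : sInf S ∈ S := (hcomp y).sInf_mem hy
  have hle1 : c - sInf S ≤ sSup S := le_csSup (hcomp y).bddAbove (hsym _ hinf)
  have hle2 : sInf S ≤ c - sSup S := csInf_le (hcomp y).bddBelow (hsym _ hsup)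
  have hsum : sSup S + sInf S = c := by linarith
  rw [hsum, Submodule.mem_orthogonal_singleton_iff_inner_right, inner_add_right, inner_smul_right,
    hc]
  linear_combination (- inner ℝ ζ y) * hζu
end

section
/- Let B ⊆ ℝ³ be a convex body with the weak Blaschke property. Then B is an ellipsoid: B is the image of the closed Euclidean unit ball under an invertible affine transformation of ℝ³. -/
/-- `B` has the weak Blaschke property: for every direction `u ≠ 0` there is an
affine plane `H + x` meeting the interior of `B` such that every point of
`(H + x) ∩ ∂B` lies on a `B`-supporting line of direction `u`. -/
def WeakBlaschke (B : Set (EuclideanSpace ℝ (Fin 3))) : Prop :=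
  ∀ u : EuclideanSpace ℝ (Fin 3), u ≠ 0 →
    ∃ H : Submodule ℝ (EuclideanSpace ℝ (Fin 3)), Module.finrank ℝ H = 2 ∧
      ∃ x : EuclideanSpace ℝ (Fin 3),
        (((fun h => h + x) '' (H : Set (EuclideanSpace ℝ (Fin 3)))) ∩ interior B).Nonempty ∧
        ∀ p ∈ ((fun h => h + x) '' (H : Set (EuclideanSpace ℝ (Fin 3)))) ∩ frontier B,
          ∀ t : ℝ, p + t • u ∉ interior B


section Kak
variable {V : Type*} [NormedAddCommGroup V] [NormedSpace ℝ V]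

def Trn (y x x' : V) : Prop := ∀ s : ℝ, ‖x' + s • y‖ ≤ ‖x + s • y‖

theorem Trn.trans {y a b c : V} (h : Trn y a b) (h' : Trn y b c) : Trn y a c :=
  fun s => (h' s).trans (h s)

theorem Trn.shift {y a b : V} (h : Trn y a b) (t : ℝ) : Trn y (a + t • y) (b + t • y) := by
  intro s
  have := h (t + s)
  simpa [add_smul, add_assoc] using this

theorem Trn.smul {y a b : V} (h : Trn y a b) {c : ℝ} (hc : 0 < c) : Trn y (c • a) (c • b) := by
  intro s
  have := h (c⁻¹ * s)
  have e : ∀ z : V, c • z + s • y = c • (z + (c⁻¹ * s) • y) := by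
    intro z
    rw [smul_add, smul_smul, mul_inv_cancel_left₀ hc.ne']
  rw [e, e, norm_smul, norm_smul]
  gcongr

def KProj (V : Type*) [NormedAddCommGroup V] [NormedSpace ℝ V] : Prop :=
  ∀ y n : V, y ≠ 0 → n ∉ Submodule.span ℝ {y} → ∃ P : V →ₗ[ℝ] V, P y = y ∧ P n = n ∧
    (∀ x, P x ∈ Submodule.span ℝ {y, n}) ∧ ∀ x, ‖P x‖ ≤ ‖x‖

noncomputable abbrev qg (y x : V) : ℝ := ‖(Submodule.Quotient.mk x : V ⧸ Submodule.span ℝ {y})‖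

theorem qg_le {y x x' : V} (h : Trn y x x') : qg y x' ≤ qg y x := by
  refine le_of_forall_pos_le_add fun ε hε => ?_
  obtain ⟨m, hm, hm'⟩ := Submodule.Quotient.norm_mk_lt
    (Submodule.Quotient.mk x : V ⧸ Submodule.span ℝ {y}) hε
  have h1 : m - x ∈ Submodule.span ℝ {y} := by
    rw [← Submodule.Quotient.eq]; exact hm
  obtain ⟨s, hs⟩ := Submodule.mem_span_singleton.1 h1
  have h2 : m = x + s • y := by rw [hs]; abel
  have h3 : (Submodule.Quotient.mk x' : V ⧸ Submodule.span ℝ {y}) =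
      Submodule.Quotient.mk (x' + s • y) := by
    rw [Submodule.Quotient.eq]
    refine Submodule.mem_span_singleton.2 ⟨-s, ?_⟩
    simp
  have h4 := Submodule.Quotient.norm_mk_le (Submodule.span ℝ {y}) (x' + s • y)
  have h5 := h s
  rw [← h2] at h5
  unfold qg
  rw [h3]
  linarith

theorem qg_comb (y n : V) (c b : ℝ) : qg y (c • n + b • y) = |c| * qg y n := by
  have h3 : (Submodule.Quotient.mk (c • n + b • y) : V ⧸ Submodule.span ℝ {y}) =
      c • Submodule.Quotient.mk n := by
    rw [← Submodule.Quotient.mk_smul, Submodule.Quotient.eq]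
    refine Submodule.mem_span_singleton.2 ⟨b, ?_⟩
    simp
  unfold qg
  rw [h3, norm_smul, Real.norm_eq_abs]

theorem qg_pos {y n : V} (hn : n ∉ Submodule.span ℝ {y}) : 0 < qg y n := by
  have : IsClosed (Submodule.span ℝ {y} : Set V) := Submodule.closed_of_finiteDimensional _
  have h := norm_pos_iff (a := (Submodule.Quotient.mk n : V ⧸ Submodule.span ℝ {y}))
  refine h.2 fun h0 => hn ?_
  exact (Submodule.Quotient.mk_eq_zero _).1 h0

/-- step functional -/
theorem exists_step (hK : KProj V) {y n : V} (hy : y ≠ 0) (hn : n ∉ Submodule.span ℝ {y}) :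
    ∃ d : V →ₗ[ℝ] ℝ, d n = qg y n ∧ (∀ x, |d x| ≤ qg y x) ∧
      (d y = 0) ∧ ∀ x, ∃ b : ℝ, Trn y x ((d x / qg y n) • n + b • y) := by
  obtain ⟨P, hPy, hPn, hPs, hPc⟩ := hK y n hy hn
  obtain ⟨f, hf, hf'⟩ := Submodule.exists_dual_map_eq_bot_of_notMem hn inferInstance
  have hg := qg_pos hn
  have hfy : f y = 0 := by
    have : f y ∈ Submodule.map f (Submodule.span ℝ {y}) :=
      Submodule.mem_map_of_mem (Submodule.mem_span_singleton_self y)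
    rw [hf'] at this
    simpa using this
  set φ : V →ₗ[ℝ] ℝ := (f n)⁻¹ • (f ∘ₗ P) with hφ
  have hφn : φ n = 1 := by simp [hφ, hPn, hf]
  have hφy : φ y = 0 := by simp [hφ, hPy, hfy]
  have hT : ∀ x, ∃ b : ℝ, Trn y x (φ x • n + b • y) := by
    intro x
    obtain ⟨b, a, hab⟩ := Submodule.mem_span_pair.1 (hPs x)
    have ha : φ x = a := by
      simp only [hφ, LinearMap.smul_apply, LinearMap.comp_apply, ← hab, map_add, map_smul, hfy,
        smul_eq_mul]
      field_simp
      simp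
    refine ⟨b, fun s => ?_⟩
    have h1 : φ x • n + b • y + s • y = P (x + s • y) := by
      rw [map_add, map_smul, hPy, ha, ← hab]; abel
    rw [h1]
    exact hPc _
  refine ⟨qg y n • φ, by simp [hφn], fun x => ?_, by simp [hφy], fun x => ?_⟩
  · obtain ⟨b, hb⟩ := hT x
    have := qg_le hb
    rw [qg_comb] at this
    simp only [LinearMap.smul_apply, smul_eq_mul, abs_mul, abs_of_pos hg]
    linarith
  · obtain ⟨b, hb⟩ := hT x
    refine ⟨b, ?_⟩
    simp only [LinearMap.smul_apply, smul_eq_mul]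
    rw [mul_div_cancel_left₀ _ hg.ne']
    exact hb

theorem transport_step (hK : KProj V) {y n m : V} (hy : y ≠ 0)
    (hn : ∀ t ∈ Set.Icc (0:ℝ) 1, n + t • m ∉ Submodule.span ℝ {y}) :
    ∃ C : ℝ, ∃ N₀ : ℕ, ∀ N : ℕ, N₀ ≤ N → 0 < N →
      ∃ c b : ℝ, 0 ≤ c ∧ Trn y n (c • (n + m) + b • y) ∧
        qg y n - C * (1 / (N:ℝ)) ≤ c * qg y (n + m) := by
  obtain ⟨γ, hγ, hγ'⟩ : ∃ γ : ℝ, 0 < γ ∧ ∀ t ∈ Set.Icc (0:ℝ) 1, γ ≤ qg y (n + t • m) := by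
    have hcont : Continuous fun t : ℝ => qg y (n + t • m) := by
      have : (fun t : ℝ => qg y (n + t • m)) = fun t : ℝ =>
          ‖(Submodule.Quotient.mk n : V ⧸ Submodule.span ℝ {y}) + t • Submodule.Quotient.mk m‖ := by
        ext t; rfl
      rw [this]
      fun_prop
    obtain ⟨t, ht, hmin⟩ := isCompact_Icc.exists_isMinOn (s := Set.Icc (0:ℝ) 1)
      ⟨0, by simp⟩ hcont.continuousOn
    exact ⟨_, qg_pos (hn t ht), fun s hs => hmin hs⟩
  have hd : ∀ t : ℝ, ∃ d : V →ₗ[ℝ] ℝ, t ∈ Set.Icc (0:ℝ) 1 → d (n + t • m) = qg y (n + t • m) ∧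
      (∀ x, |d x| ≤ qg y x) ∧ (d y = 0) ∧
      ∀ x, ∃ b : ℝ, Trn y x ((d x / qg y (n + t • m)) • (n + t • m) + b • y) := by
    intro t
    by_cases ht : t ∈ Set.Icc (0:ℝ) 1
    · obtain ⟨d, hd⟩ := exists_step hK hy (hn t ht)
      exact ⟨d, fun _ => hd⟩
    · exact ⟨0, fun h => absurd h ht⟩
  choose d hd using hd
  set G := qg y m with hG
  have hG0 : 0 ≤ G := norm_nonneg _
  set g0 := qg y n with hg0
  have hg0' : 0 ≤ g0 := norm_nonneg _
  obtain ⟨N₀, hN₀⟩ := exists_nat_gt (2 * G / γ)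
  refine ⟨(g0 / γ) * (2 * G), N₀, fun N hN hN0 => ?_⟩
  have hNr : (0:ℝ) < N := by exact_mod_cast hN0
  set δ : ℝ := 1 / (N:ℝ) with hδ
  have hδ0 : 0 < δ := by positivity
  have hδN : (N:ℝ) * δ = 1 := by rw [hδ]; field_simp
  have hsmall : δ * (2 * G) ≤ γ := by
    have h1 : 2 * G / γ < N := hN₀.trans_le (by exact_mod_cast hN)
    rw [div_lt_iff₀ hγ] at h1
    rw [hδ, div_mul_eq_mul_div, one_mul, div_le_iff₀ hNr]
    linarith
  have key : ∀ k : ℕ, k ≤ N → ∃ c b : ℝ, 0 ≤ c ∧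
      Trn y n (c • (n + ((k:ℝ) * δ) • m) + b • y) ∧
      g0 - δ * (g0 / γ) * (d ((k:ℝ) * δ) m - d 0 m) ≤ c * qg y (n + ((k:ℝ) * δ) • m) := by
    intro k
    induction k with
    | zero =>
      intro _
      refine ⟨1, 0, zero_le_one, ?_, ?_⟩
      · intro s; simp
      · simp [hg0]
    | succ k ih =>
      intro hk
      obtain ⟨c, b, hc, hT, hb⟩ := ih (by omega)
      have hkN : (k:ℝ) + 1 ≤ N := by exact_mod_cast hk
      set t := (k:ℝ) * δ with ht
      have ht' : ((k+1:ℕ):ℝ) * δ = t + δ := by push_cast; ring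
      rw [ht']
      have hk0 : (0:ℝ) ≤ k := Nat.cast_nonneg k
      have ht0 : 0 ≤ t := by positivity
      have ht1 : t + δ ≤ 1 := by
        rw [ht, ← hδN]; nlinarith
      have hmt : t ∈ Set.Icc (0:ℝ) 1 := ⟨ht0, by linarith⟩
      have hmt' : t + δ ∈ Set.Icc (0:ℝ) 1 := ⟨by linarith, ht1⟩
      obtain ⟨a1, a2, -, -⟩ := hd t hmt
      obtain ⟨b1, b2, b3, b4⟩ := hd (t + δ) hmt'
      have hgt := hγ' t hmt
      have hgt' := hγ' _ hmt'
      set D := d (t + δ) with hD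
      have hsp : n + (t + δ) • m = (n + t • m) + δ • m := by rw [add_smul, add_assoc]
      have e1 : D (n + t • m) = qg y (n + (t + δ) • m) - δ * D m := by
        have h := map_add D (n + t • m) (δ • m)
        rw [← hsp, b1, map_smul, smul_eq_mul] at h
        linarith
      have e2 : qg y (n + t • m) + δ * d t m ≤ qg y (n + (t + δ) • m) := by
        have := (le_abs_self _).trans (a2 (n + (t + δ) • m))
        rw [hsp, map_add, map_smul, smul_eq_mul, a1] at this
        rw [hsp]; exact this
      have e3 : D (n + t • m) ≤ qg y (n + t • m) := (le_abs_self _).trans (b2 _)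
      have e4 : |D m| ≤ G := b2 m
      have e5 : |d t m| ≤ G := a2 m
      have e4' := abs_le.1 e4
      have e5' := abs_le.1 e5
      have hDnn : 0 ≤ D (n + t • m) := by nlinarith
      have hcg : c * qg y (n + t • m) ≤ g0 := by
        have := qg_le hT
        rwa [qg_comb, abs_of_nonneg hc] at this
      have hcγ : c ≤ g0 / γ := by
        rw [le_div_iff₀ hγ]; nlinarith
      have hmono : 0 ≤ δ * (D m - d t m) := by linarith
      obtain ⟨b', hb'⟩ := b4 (c • (n + t • m) + b • y)
      refine ⟨_, b', ?_, hT.trans hb', ?_⟩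
      · rw [map_add, map_smul, map_smul, b3, smul_zero, add_zero, smul_eq_mul]
        positivity
      · rw [map_add, map_smul, map_smul, b3, smul_zero, add_zero, smul_eq_mul,
          div_mul_cancel₀ _ (by linarith)]
        have : c * (δ * (D m - d t m)) ≤ (g0 / γ) * (δ * (D m - d t m)) :=
          mul_le_mul_of_nonneg_right hcγ hmono
        have h2 : c * (qg y (n + t • m) - δ * (D m - d t m)) ≤ c * D (n + t • m) :=
          mul_le_mul_of_nonneg_left (by linarith) hc
        linarith
  obtain ⟨c, b, hc, hT, hb⟩ := key N le_rfl
  rw [hδN, one_smul] at hT hb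
  refine ⟨c, b, hc, hT, le_trans ?_ hb⟩
  have e4 := abs_le.1 ((hd 1 (by simp)).2.1 m)
  have e5 := abs_le.1 ((hd 0 (by simp)).2.1 m)
  have : δ * (g0 / γ) * (d 1 m - d 0 m) ≤ δ * (g0 / γ) * (2 * G) :=
    mul_le_mul_of_nonneg_left (by linarith) (by positivity)
  linarith

theorem transport (hK : KProj V) {y n m : V} (hy : y ≠ 0)
    (hn : ∀ t ∈ Set.Icc (0:ℝ) 1, n + t • m ∉ Submodule.span ℝ {y}) :
    ∃ b : ℝ, Trn y n ((qg y n / qg y (n + m)) • (n + m) + b • y) := by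
  obtain ⟨C, N₀, h⟩ := transport_step hK hy hn
  have h' : ∀ k : ℕ, ∃ c b : ℝ, 0 ≤ c ∧ Trn y n (c • (n + m) + b • y) ∧
        qg y n - C * (1 / ((k:ℝ) + N₀ + 1)) ≤ c * qg y (n + m) := by
    intro k
    have := h (k + N₀ + 1) (by omega) (by omega)
    push_cast at this
    exact this
  choose c b hc hT hb using h'
  have hg1 : 0 < qg y (n + m) := by
    have := hn 1 (by simp)
    rw [one_smul] at this
    exact qg_pos this
  have hcle : ∀ k, c k ≤ qg y n / qg y (n + m) := by
    intro k
    rw [le_div_iff₀ hg1]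
    have := qg_le (hT k)
    rwa [qg_comb, abs_of_nonneg (hc k)] at this
  have hlim : Filter.Tendsto c Filter.atTop (nhds (qg y n / qg y (n + m))) := by
    have hl : Filter.Tendsto (fun k : ℕ => (qg y n - C * (1 / ((k:ℝ) + N₀ + 1))) / qg y (n + m))
        Filter.atTop (nhds (qg y n / qg y (n + m))) := by
      have h0 : Filter.Tendsto (fun k : ℕ => (1 / ((k:ℝ) + N₀ + 1))) Filter.atTop (nhds 0) := by
        have := (Filter.tendsto_add_atTop_iff_nat (N₀)).2
          (tendsto_one_div_add_atTop_nhds_zero_nat (𝕜 := ℝ))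
        refine this.congr fun k => ?_
        push_cast; ring
      have := ((h0.const_mul C).const_sub (qg y n)).div_const (qg y (n + m))
      simpa using this
    refine tendsto_of_tendsto_of_tendsto_of_le_of_le hl tendsto_const_nhds (fun k => ?_) hcle
    show _ / _ ≤ c k
    rw [div_le_iff₀ hg1]
    exact hb k
  set R := (‖n‖ + (qg y n / qg y (n + m)) * ‖n + m‖) / ‖y‖ with hR
  have hy' : 0 < ‖y‖ := norm_pos_iff.2 hy
  have hbR : ∀ k, b k ∈ Set.Icc (-R) R := by
    intro k
    rw [Set.mem_Icc, ← abs_le, hR, le_div_iff₀ hy', ← Real.norm_eq_abs, ← norm_smul]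
    have h1 := hT k 0
    simp only [zero_smul, add_zero] at h1
    have h2 : b k • y = (c k • (n + m) + b k • y) - c k • (n + m) := by abel
    rw [h2]
    refine (norm_sub_le _ _).trans ?_
    rw [norm_smul, Real.norm_eq_abs, abs_of_nonneg (hc k)]
    have := mul_le_mul_of_nonneg_right (hcle k) (norm_nonneg (n + m))
    linarith
  obtain ⟨β, -, φ, hφ, hβ⟩ := isCompact_Icc.tendsto_subseq hbR
  refine ⟨β, fun s => ?_⟩
  have hl := hlim.comp hφ.tendsto_atTop
  have : Filter.Tendsto (fun k => ‖c (φ k) • (n + m) + b (φ k) • y + s • y‖) Filter.atTop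
      (nhds ‖(qg y n / qg y (n + m)) • (n + m) + β • y + s • y‖) :=
    (((hl.smul_const _).add (hβ.smul_const _)).add_const _).norm
  exact le_of_tendsto' this fun k => hT (φ k) s

/-- every line not through the origin has a symmetric norm -/
theorem halfturn (hK : KProj V) {y a b : V} (hy : y ≠ 0)
    (hab : ∀ r s t : ℝ, r • a + s • b + t • y = 0 → r = 0 ∧ s = 0) :
    ∃ β : ℝ, ∀ s : ℝ, ‖a + s • y‖ = ‖a + (-β - s) • y‖ := by
  have hns : ∀ r s : ℝ, (r ≠ 0 ∨ s ≠ 0) → r • a + s • b ∉ Submodule.span ℝ {y} := by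
    intro r s hrs hmem
    obtain ⟨t, ht⟩ := Submodule.mem_span_singleton.1 hmem
    have := hab r s (-t) (by rw [← ht]; simp)
    tauto
  obtain ⟨b1, h1⟩ := transport hK (n := a) (m := b - a) hy (by
    intro t ht
    have : a + t • (b - a) = (1 - t) • a + t • b := by module
    rw [this]
    apply hns
    by_contra! h
    linarith [h.1, h.2])
  obtain ⟨b2, h2⟩ := transport hK (n := b) (m := -a - b) hy (by
    intro t ht
    have : b + t • (-a - b) = (-t) • a + (1 - t) • b := by module
    rw [this]
    apply hns
    by_contra! h
    linarith [h.1, h.2])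
  rw [show a + (b - a) = b by abel] at h1
  rw [show b + (-a - b) = -a by abel] at h2
  have ga : 0 < qg y a := by
    have := hns 1 0 (by simp)
    simp only [one_smul, zero_smul, add_zero] at this
    exact qg_pos this
  have gb : 0 < qg y b := by
    have := hns 0 1 (by simp)
    simp only [one_smul, zero_smul, zero_add] at this
    exact qg_pos this
  have gna : qg y (-a) = qg y a := by
    have := qg_comb y a (-1) 0
    simpa using this
  rw [gna] at h2
  have h3 := (h2.smul (div_pos ga gb)).shift b1
  have h4 := h1.trans h3
  set β := qg y a / qg y b * b2 + b1 with hβ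
  have h5 : (qg y a / qg y b) • ((qg y b / qg y a) • -a + b2 • y) + b1 • y = -a + β • y := by
    rw [smul_add, smul_smul, smul_smul, div_mul_div_cancel₀ gb.ne', div_self ga.ne', hβ]
    module
  rw [h5] at h4
  have h6 : ∀ s : ℝ, ‖a + (-β - s) • y‖ ≤ ‖a + s • y‖ := by
    intro s
    have := h4 s
    rw [← norm_neg] at this
    have e : -(-a + β • y + s • y) = a + (-β - s) • y := by module
    rwa [e] at this
  refine ⟨β, fun s => le_antisymm ?_ (h6 s)⟩
  have := h6 (-β - s)
  simpa using this

end Kak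

section Planar
open MeasureTheory

def om (x v : ℝ × ℝ) : ℝ := x.1 * v.2 - x.2 * v.1

def SymPair (M : ℝ × ℝ → ℝ) (z y : ℝ × ℝ) : Prop :=
  ∀ r s : ℝ, M (r • z + s • y) = M (-(r • z) + s • y)

noncomputable def rflx (z y : ℝ × ℝ) : (ℝ × ℝ) →ₗ[ℝ] (ℝ × ℝ) where
  toFun v := v - (2 * om y v / om y z) • z
  map_add' a b := by
    ext <;> simp [om] <;> ring
  map_smul' r a := by
    ext <;> simp [om] <;> ring

theorem om_rflx {z y : ℝ × ℝ} (h : om y z ≠ 0) (x v : ℝ × ℝ) :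
    om (rflx z y x) (rflx z y v) = - om x v := by
  have h' : y.1 * z.2 - y.2 * z.1 ≠ 0 := h
  simp only [rflx, om, LinearMap.coe_mk, AddHom.coe_mk, Prod.fst_sub, Prod.snd_sub, Prod.smul_fst,
    Prod.smul_snd, smul_eq_mul]
  field_simp
  ring

theorem rflx_rflx {z y : ℝ × ℝ} (h : om y z ≠ 0) (x : ℝ × ℝ) :
    rflx z y (rflx z y x) = x := by
  have h' : y.1 * z.2 - y.2 * z.1 ≠ 0 := h
  ext <;>
  · simp only [rflx, om, LinearMap.coe_mk, AddHom.coe_mk, Prod.fst_sub, Prod.snd_sub, Prod.smul_fst,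
      Prod.smul_snd, smul_eq_mul]
    field_simp
    ring

theorem decomp {z y : ℝ × ℝ} (h : om y z ≠ 0) (x : ℝ × ℝ) :
    x = (om y x / om y z) • z + (om x z / om y z) • y := by
  have h' : y.1 * z.2 - y.2 * z.1 ≠ 0 := h
  ext <;>
  · simp only [om, Prod.fst_add, Prod.snd_add, Prod.smul_fst,
      Prod.smul_snd, smul_eq_mul]
    field_simp
    ring

theorem rflx_apply {z y : ℝ × ℝ} (h : om y z ≠ 0) (r s : ℝ) :
    rflx z y (r • z + s • y) = -(r • z) + s • y := by
  have h1 : om y (r • z + s • y) = r * om y z := by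
    simp only [om, Prod.fst_add, Prod.snd_add, Prod.smul_fst, Prod.smul_snd, smul_eq_mul]
    ring
  have h2 : rflx z y (r • z + s • y) =
    (r • z + s • y) - (2 * om y (r • z + s • y) / om y z) • z := rfl
  rw [h2, h1, show 2 * (r * om y z) / om y z = 2 * r by field_simp]
  module

theorem M_rflx {M : ℝ × ℝ → ℝ} {z y : ℝ × ℝ} (h : om y z ≠ 0) (hs : SymPair M z y) (x : ℝ × ℝ) :
    M (rflx z y x) = M x := by
  rw [decomp h x, rflx_apply h]
  exact (hs _ _).symm

theorem integral_rflx {M : ℝ × ℝ → ℝ} {z y : ℝ × ℝ} (h : om y z ≠ 0)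
    (hs : SymPair M z y) (f : ℝ × ℝ → ℝ) :
    ∫ v in {v | M v ≤ 1}, f (rflx z y v) = ∫ v in {v | M v ≤ 1}, f v := by
  set R := LinearEquiv.ofInvolutive (rflx z y) (rflx_rflx h) with hR
  have hdet : LinearMap.det (rflx z y) * LinearMap.det (rflx z y) = 1 := by
    rw [← LinearMap.det_comp]
    have : (rflx z y) ∘ₗ (rflx z y) = LinearMap.id := by
      ext1 <;> ext1 <;> exact rflx_rflx h _
    rw [this, LinearMap.det_id]
  have hdet0 : LinearMap.det (rflx z y) ≠ 0 := by
    intro h0; rw [h0] at hdet; simp at hdet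
  have habs : |(LinearMap.det (rflx z y))⁻¹| = 1 := by
    have : |LinearMap.det (rflx z y)| = 1 := by
      have h1 : |LinearMap.det (rflx z y)| * |LinearMap.det (rflx z y)| = 1 := by
        rw [← abs_mul, hdet, abs_one]
      nlinarith [abs_nonneg (LinearMap.det (rflx z y))]
    rw [abs_inv, this, inv_one]
  have hemb : MeasurableEmbedding (rflx z y) :=
    R.toContinuousLinearEquiv.toHomeomorph.measurableEmbedding
  have hmp : MeasurePreserving (rflx z y) volume volume := by
    refine ⟨hemb.measurable, ?_⟩
    rw [Measure.map_linearMap_addHaar_eq_smul_addHaar volume hdet0, habs]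
    simp
  have := hmp.setIntegral_preimage_emb hemb f {v | M v ≤ 1}
  rw [← this]
  congr 2
  ext v
  simp [M_rflx h hs]

theorem planar (M : ℝ × ℝ → ℝ) (hc : Continuous M) (hh : ∀ (r : ℝ) v, M (r • v) = |r| * M v)
    (hp : ∀ v, v ≠ 0 → 0 < M v)
    (hsym : ∀ y : ℝ × ℝ, y ≠ 0 → ∃ z, om y z ≠ 0 ∧ SymPair M z y) :
    M (1, 1) ^ 2 + M (1, -1) ^ 2 = 2 * M (1, 0) ^ 2 + 2 * M (0, 1) ^ 2 := by
  have h00 : M 0 = 0 := by have := hh 0 0; simpa using this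
  have hKc : IsCompact {v | M v ≤ 1} := by
    rw [Metric.isCompact_iff_isClosed_bounded]
    refine ⟨isClosed_le hc continuous_const, ?_⟩
    obtain ⟨e, he, hmin⟩ := (isCompact_sphere (0 : ℝ × ℝ) 1).exists_isMinOn
      ⟨(1, 0), by simp⟩ hc.continuousOn
    have he0 : e ≠ 0 := by
      rintro rfl; simp at he
    have hpe := hp e he0
    refine (Metric.isBounded_iff_subset_closedBall 0).2 ⟨1 / M e, fun v hv => ?_⟩
    rw [mem_closedBall_zero_iff, le_div_iff₀ hpe]
    by_cases hv0 : v = 0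
    · subst hv0; simp
    have hn : 0 < ‖v‖ := norm_pos_iff.2 hv0
    have h1 : M e ≤ M (‖v‖⁻¹ • v) := hmin (by
      rw [mem_sphere_zero_iff_norm, norm_smul, norm_inv, norm_norm, inv_mul_cancel₀ hn.ne'])
    rw [hh, abs_of_pos (inv_pos.2 hn)] at h1
    have h2 : M v ≤ 1 := hv
    calc ‖v‖ * M e ≤ ‖v‖ * (‖v‖⁻¹ * M v) := by gcongr
      _ = M v := by rw [mul_inv_cancel_left₀ hn.ne']
      _ ≤ 1 := h2
  have hInt : ∀ f : ℝ × ℝ → ℝ, Continuous f → IntegrableOn f {v | M v ≤ 1} volume :=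
    fun f hf => hf.continuousOn.integrableOn_compact hKc
  set Q : ℝ × ℝ → ℝ := fun x => ∫ v in {v | M v ≤ 1}, (om x v) ^ 2 with hQ
  set A := ∫ v in {v : ℝ × ℝ | M v ≤ 1}, v.2 ^ 2
  set B := ∫ v in {v : ℝ × ℝ | M v ≤ 1}, v.1 * v.2
  set C := ∫ v in {v : ℝ × ℝ | M v ≤ 1}, v.1 ^ 2
  have hQe : ∀ x, Q x = x.1 ^ 2 * A - 2 * x.1 * x.2 * B + x.2 ^ 2 * C := by
    intro x
    have i1 := (hInt (fun v => v.2 ^ 2) (by fun_prop)).const_mul (x.1 ^ 2)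
    have i2 := (hInt (fun v => v.1 * v.2) (by fun_prop)).const_mul (2 * x.1 * x.2)
    have i3 := (hInt (fun v => v.1 ^ 2) (by fun_prop)).const_mul (x.2 ^ 2)
    have : ∀ v : ℝ × ℝ, om x v ^ 2 = x.1 ^ 2 * v.2 ^ 2 - 2 * x.1 * x.2 * (v.1 * v.2)
        + x.2 ^ 2 * v.1 ^ 2 := by
      intro v; simp only [om]; ring
    simp only [hQ, this]
    have i12 : Integrable (fun v : ℝ × ℝ => x.1 ^ 2 * v.2 ^ 2 - 2 * x.1 * x.2 * (v.1 * v.2))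
      (volume.restrict {v | M v ≤ 1}) := i1.sub i2
    rw [integral_add i12 i3, integral_sub i1 i2]
    simp only [integral_const_mul]
    rfl
  have hQpos : ∀ x, x ≠ 0 → 0 < Q x := by
    intro x hx
    have hcont : Continuous fun v => om x v ^ 2 := by unfold om; fun_prop
    rw [hQ]
    show 0 < ∫ v in {v | M v ≤ 1}, (om x v) ^ 2
    rw [setIntegral_pos_iff_support_of_nonneg_ae (Filter.Eventually.of_forall fun v => sq_nonneg _)
      (hInt _ hcont)]
    have hopen : IsOpen ({v | M v < 1} ∩ {v | om x v ^ 2 ≠ 0}) :=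
      (isOpen_lt hc continuous_const).inter (isOpen_ne_fun hcont continuous_const)
    refine lt_of_lt_of_le (hopen.measure_pos volume ?_) (measure_mono ?_)
    · set w : ℝ × ℝ := (-x.2, x.1) with hw
      have hMw : 0 ≤ M w := by
        by_cases h : w = 0
        · rw [h, h00]
        · exact (hp w h).le
      refine ⟨(1 / (M w + 1)) • w, ?_, ?_⟩
      · show M _ < 1
        rw [hh, abs_of_pos (by positivity), one_div, inv_mul_lt_iff₀ (by positivity)]
        linarith
      · have hxx : 0 < x.1 ^ 2 + x.2 ^ 2 := by
          by_contra! h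
          apply hx
          ext
          · simp; nlinarith [sq_nonneg x.1, sq_nonneg x.2]
          · simp; nlinarith [sq_nonneg x.1, sq_nonneg x.2]
        have : om x ((1 / (M w + 1)) • w) = (1 / (M w + 1)) * (x.1 ^ 2 + x.2 ^ 2) := by
          simp [om, hw]; ring
        show om x _ ^ 2 ≠ 0
        rw [this]
        positivity
    · rintro v ⟨h1, h2⟩
      exact ⟨h2, (show M v < 1 from h1).le⟩
  have hQsym : ∀ z y, om y z ≠ 0 → SymPair M z y → SymPair Q z y := by
    intro z y h hs r s
    rw [← rflx_apply h]
    set x := r • z + s • y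
    simp only [hQ]
    rw [← integral_rflx h hs (fun v => om (rflx z y x) v ^ 2)]
    simp [om_rflx h]
  have heq : ∀ x x', Q x = Q x' → M x = M x' := by
    intro x x' hxx
    by_cases hy : x + x' = 0
    · have : x' = (-1 : ℝ) • x := by
        rw [neg_one_smul]; exact (neg_eq_of_add_eq_zero_right hy).symm
      rw [this, hh]; simp
    obtain ⟨z, hz, hs⟩ := hsym _ hy
    have hb := hQsym z _ hz hs 1 1
    have hQy := hQpos _ hy
    have hd := decomp hz (x - x')
    set y := x + x' with hyd
    set r := om y (x - x') / om y z
    set s := om (x - x') z / om y z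
    have e1 : x = (r/2) • z + ((1 + s)/2) • y := by
      have : x = (1/2 : ℝ) • (y + (x - x')) := by rw [hyd]; module
      rw [this, hd]; module
    have e2 : x' = (-r/2) • z + ((1 - s)/2) • y := by
      have : x' = (1/2 : ℝ) • (y - (x - x')) := by rw [hyd]; module
      rw [this, hd]; module
    have hs0 : s = 0 := by
      clear_value r s y
      rw [hQe, hQe] at hb
      rw [e1, e2, hQe, hQe] at hxx
      rw [hQe] at hQy
      simp only [Prod.fst_add, Prod.snd_add, Prod.smul_fst, Prod.smul_snd, smul_eq_mul,
        Prod.fst_neg, Prod.snd_neg, one_mul] at hb hxx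
      have : s * (y.1 ^ 2 * A - 2 * y.1 * y.2 * B + y.2 ^ 2 * C) = 0 := by
        linear_combination hxx - r / 4 * hb
      rcases mul_eq_zero.1 this with h | h
      · exact h
      · exact absurd h hQy.ne'
    rw [hs0] at e1 e2
    have h1 := hs (r/2) (1/2)
    have e1' : x = (r/2) • z + (1/2 : ℝ) • y := by rw [e1]; module
    have e2' : x' = -((r/2) • z) + (1/2 : ℝ) • y := by rw [e2]; module
    rw [e1', e2', h1]
  have hQe1 : 0 < Q (1, 0) := hQpos _ (by simp)
  have hfin : ∀ v, M v ^ 2 = M (1, 0) ^ 2 / Q (1, 0) * Q v := by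
    intro v
    have hQv : 0 ≤ Q v := by
      by_cases h : v = 0
      · rw [h, hQe]; simp
      · exact (hQpos v h).le
    have h1 : Q v = Q (Real.sqrt (Q v / Q (1, 0)) • (1, 0)) := by
      have hA : Q (1, 0) = A := by rw [hQe]; simp
      rw [hQe (_ • _)]
      simp only [Prod.smul_fst, Prod.smul_snd, smul_eq_mul, mul_zero, mul_one]
      rw [Real.sq_sqrt (by positivity), hA]
      have : A ≠ 0 := by rw [← hA]; exact hQe1.ne'
      field_simp
      ring
    rw [heq _ _ h1, hh, mul_pow, sq_abs, Real.sq_sqrt (by positivity)]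
    field_simp
  rw [hfin (1, 1), hfin (1, -1), hfin (0, 1), hQe (1, 1), hQe (1, -1), hQe (0, 1), hQe (1, 0)]
  rw [hQe] at hQe1
  simp only [one_pow, one_mul, mul_one, mul_zero, zero_mul, sub_zero, add_zero, ne_eq,
    OfNat.ofNat_ne_zero, not_false_eq_true, zero_pow] at hQe1 ⊢
  field_simp
  ring

end Planar

section Comb
variable {V : Type*} [NormedAddCommGroup V] [NormedSpace ℝ V]

theorem parallelogram_of_KProj (hK : KProj V) (h3 : Module.finrank ℝ V = 3) (x y : V) :
    ‖x + y‖ * ‖x + y‖ + ‖x - y‖ * ‖x - y‖ = 2 * (‖x‖ * ‖x‖ + ‖y‖ * ‖y‖) := by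
  by_cases hli : ∀ s t : ℝ, s • x + t • y = 0 → s = 0 ∧ t = 0
  swap
  · push Not at hli
    obtain ⟨s, t, hst, hne⟩ := hli
    have key : ∀ (c : ℝ) (v : V), ‖c • v + v‖ * ‖c • v + v‖ + ‖c • v - v‖ * ‖c • v - v‖ =
        2 * (‖c • v‖ * ‖c • v‖ + ‖v‖ * ‖v‖) := by
      intro c v
      have e1 : c • v + v = (c + 1) • v := by module
      have e2 : c • v - v = (c - 1) • v := by module
      rw [e1, e2]
      simp only [norm_smul, Real.norm_eq_abs]
      linear_combination ‖v‖ ^ 2 * (abs_mul_abs_self (c + 1) + abs_mul_abs_self (c - 1)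
        - 2 * abs_mul_abs_self c)
    by_cases hs : s = 0
    · have ht := hne hs
      have hy : y = 0 := by
        rw [hs, zero_smul, zero_add] at hst
        exact (smul_eq_zero.1 hst).resolve_left ht
      subst hy
      simp; ring
    · have hx : x = (-t / s) • y := by
        have : s • x = (-t) • y := by
          rw [neg_smul]; exact eq_neg_of_add_eq_zero_left hst
        rw [div_eq_inv_mul, mul_smul, ← this, smul_smul, inv_mul_cancel₀ hs, one_smul]
      rw [hx]
      exact key _ _
  obtain ⟨b, hb⟩ : ∃ b : V, b ∉ Submodule.span ℝ {x, y} := by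
    by_contra! h
    have htop : Submodule.span ℝ ({x, y} : Set V) = ⊤ := by
      rw [eq_top_iff]; intro v _; exact h v
    classical
    have := finrank_span_finset_le_card (R := ℝ) ({x, y} : Finset V)
    rw [Finset.coe_pair, Set.finrank, htop, finrank_top, h3] at this
    have h2 := Finset.card_le_two (a := x) (b := y)
    omega
  set M : ℝ × ℝ → ℝ := fun v => ‖v.1 • x + v.2 • y‖ with hM
  have := planar M (by rw [hM]; fun_prop) ?_ ?_ ?_
  · simp only [hM, one_smul, zero_smul, add_zero, zero_add, neg_smul, ← sub_eq_add_neg] at this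
    linarith
  · intro r v
    simp only [hM, Prod.smul_fst, Prod.smul_snd, smul_eq_mul]
    rw [← Real.norm_eq_abs, ← norm_smul, smul_add, smul_smul, smul_smul]
  · intro v hv
    refine norm_pos_iff.2 fun h => hv ?_
    obtain ⟨h1, h2⟩ := hli _ _ h
    exact Prod.ext h1 h2
  · intro w hw
    set Y := w.1 • x + w.2 • y with hY
    set A := (-w.2) • x + w.1 • y with hA
    have hw2 : w.1 ^ 2 + w.2 ^ 2 ≠ 0 := by
      intro h
      apply hw
      ext
      · simp; nlinarith [sq_nonneg w.1, sq_nonneg w.2]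
      · simp; nlinarith [sq_nonneg w.1, sq_nonneg w.2]
    have hY0 : Y ≠ 0 := by
      intro h
      obtain ⟨h1, h2⟩ := hli _ _ h
      exact hw (Prod.ext h1 h2)
    obtain ⟨β, hβ⟩ := halfturn hK (y := Y) (a := A) (b := b) hY0 (by
      intro r s t h
      have hs : s = 0 := by
        by_contra hs
        apply hb
        have e : b = (-s⁻¹ * (-r * w.2 + t * w.1)) • x + (-s⁻¹ * (r * w.1 + t * w.2)) • y := by
          have : s • b = -(r • A + t • Y) := by
            rw [eq_neg_iff_add_eq_zero, ← h]; abel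
          calc b = s⁻¹ • (s • b) := by rw [smul_smul, inv_mul_cancel₀ hs, one_smul]
            _ = _ := by rw [this, hA, hY]; module
        rw [e]
        exact Submodule.mem_span_pair.2 ⟨_, _, rfl⟩
      refine ⟨?_, hs⟩
      rw [hs, hA, hY] at h
      obtain ⟨h1, h2⟩ := hli (-r * w.2 + t * w.1) (r * w.1 + t * w.2) (by rw [← h]; module)
      have : r * (w.1 ^ 2 + w.2 ^ 2) = 0 := by linear_combination w.1 * h2 - w.2 * h1
      exact (mul_eq_zero.1 this).resolve_right hw2)
    have hMl : ∀ r s : ℝ, M (r • ((-w.2, w.1) - (β/2) • w) + s • w) =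
        ‖r • A + (s - r * β / 2) • Y‖ := by
      intro r s
      simp only [hM, hA, hY]
      congr 1
      simp only [Prod.fst_add, Prod.snd_add, Prod.smul_fst, Prod.smul_snd, Prod.fst_sub,
        Prod.snd_sub, smul_eq_mul]
      module
    refine ⟨(-w.2, w.1) - (β/2) • w, ?_, ?_⟩
    · have : om w ((-w.2, w.1) - (β/2) • w) = w.1 ^ 2 + w.2 ^ 2 := by
        simp only [om, Prod.smul_fst, Prod.smul_snd, Prod.fst_sub,
          Prod.snd_sub, smul_eq_mul]
        ring
      rwa [this]
    · intro r s
      rw [← neg_smul, hMl, hMl]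
      by_cases hr : r = 0
      · simp [hr]
      obtain ⟨q, rfl⟩ : ∃ q, s = r * q := ⟨s / r, by field_simp⟩
      have e1 : r • A + (r * q - r * β / 2) • Y = r • (A + (q - β / 2) • Y) := by module
      have e2 : (-r) • A + (r * q - -r * β / 2) • Y = (-r) • (A + (-β - (q - β / 2)) • Y) := by
        module
      rw [e1, e2, norm_smul, norm_smul, norm_neg, hβ]

theorem isom_of_KProj (hK : KProj V) (h3 : Module.finrank ℝ V = 3) :
    ∃ S : V ≃ₗ[ℝ] EuclideanSpace ℝ (Fin 3), ∀ v, ‖S v‖ = ‖v‖ := by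
  have : FiniteDimensional ℝ V := Module.finite_of_finrank_pos (by omega)
  let _ : InnerProductSpace ℝ V := InnerProductSpace.ofNorm ℝ (parallelogram_of_KProj hK h3)
  let b := (stdOrthonormalBasis ℝ V).reindex (finCongr h3)
  exact ⟨b.repr.toLinearEquiv, fun v => b.repr.norm_map v⟩

end Comb

theorem isom_of_N {V : Type*} [AddCommGroup V] [Module ℝ V] (h3 : Module.finrank ℝ V = 3)
    (N : V → ℝ) (h0 : ∀ v, 0 ≤ N v) (hadd : ∀ v w, N (v + w) ≤ N v + N w)
    (hsmul : ∀ (r : ℝ) v, N (r • v) = |r| * N v) (hdef : ∀ v, N v = 0 → v = 0)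
    (hK : ∀ y n : V, y ≠ 0 → n ∉ Submodule.span ℝ {y} → ∃ P : V →ₗ[ℝ] V, P y = y ∧ P n = n ∧
    (∀ x, P x ∈ Submodule.span ℝ {y, n}) ∧ ∀ x, N (P x) ≤ N x) :
    ∃ S : V ≃ₗ[ℝ] EuclideanSpace ℝ (Fin 3), ∀ v, ‖S v‖ = N v := by
  let _ : Norm V := ⟨N⟩
  have core : NormedSpace.Core ℝ V :=
    { norm_nonneg := h0
      norm_smul := hsmul
      norm_triangle := hadd
      norm_eq_zero_iff := fun x => ⟨hdef x, fun h => by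
        have := hsmul 0 0
        rw [zero_smul, abs_zero, zero_mul] at this
        rw [h]; exact this⟩ }
  let _ := NormedAddCommGroup.ofCore core
  let _ := NormedSpace.ofCore core
  exact isom_of_KProj (V := V) hK h3

section Body
open scoped RealInnerProductSpace



def PP (B : Set (EuclideanSpace ℝ (Fin 3))) : Prop :=
  ∀ u : EuclideanSpace ℝ (Fin 3), u ≠ 0 → ∃ f : EuclideanSpace ℝ (Fin 3) →ₗ[ℝ] ℝ, ∃ c : ℝ,
    f u = 1 ∧ ∀ x ∈ B, x - (f x - c) • u ∈ B

theorem exists_perp (u v : (EuclideanSpace ℝ (Fin 3))) : ∃ w : (EuclideanSpace ℝ (Fin 3)), ‖w‖ = 1 ∧ ⟪w, u⟫ = 0 ∧ ⟪w, v⟫ = 0 := by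
  classical
  set L := Submodule.span ℝ ({u, v} : Set (EuclideanSpace ℝ (Fin 3))) with hL
  have h1 : Module.finrank ℝ L ≤ 2 := by
    have := finrank_span_finset_le_card (R := ℝ) ({u, v} : Finset (EuclideanSpace ℝ (Fin 3)))
    rw [Finset.coe_pair] at this
    exact this.trans Finset.card_le_two
  have h2 := L.finrank_add_finrank_orthogonal
  rw [finrank_euclideanSpace_fin] at h2
  have h3 : Lᗮ ≠ ⊥ := by
    intro h; rw [h, finrank_bot] at h2; omega
  obtain ⟨x, hx, hx0⟩ := Submodule.exists_mem_ne_zero_of_ne_bot h3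
  have hn : ‖x‖ ≠ 0 := norm_ne_zero_iff.2 hx0
  have hu : ⟪x, u⟫ = 0 := Submodule.inner_left_of_mem_orthogonal
    (Submodule.subset_span (by simp)) hx
  have hv : ⟪x, v⟫ = 0 := Submodule.inner_left_of_mem_orthogonal
    (Submodule.subset_span (by simp)) hx
  refine ⟨‖x‖⁻¹ • x, ?_, ?_, ?_⟩
  · rw [norm_smul, norm_inv, norm_norm, inv_mul_cancel₀ hn]
  · rw [inner_smul_left, hu, mul_zero]
  · rw [inner_smul_left, hv, mul_zero]

theorem stage2 (B : Set (EuclideanSpace ℝ (Fin 3))) (hconv : Convex ℝ B) (hP : PP B)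
    (hle : ∀ y : (EuclideanSpace ℝ (Fin 3)), ∀ p ∈ B, ∀ q ∈ B, ⟪y, p - q⟫ ≤ 2 * ‖y‖)
    (hex : ∀ y : (EuclideanSpace ℝ (Fin 3)), ∃ p ∈ B, ∃ q ∈ B, ⟪y, p - q⟫ = 2 * ‖y‖) :
    ∃ z, B = Metric.closedBall z 1 := by
  choose X hX Y hY hXY using hex
  have hdiff : ∀ w : (EuclideanSpace ℝ (Fin 3)), ‖w‖ = 1 → ∀ p ∈ B, ∀ q ∈ B, ⟪w, p - q⟫ = 2 → p = q + (2:ℝ) • w := by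
    intro w hw p hp q hq h
    have h1 := hle (p - q) p hp q hq
    rw [real_inner_self_eq_norm_sq] at h1
    have h2 : ‖p - q‖ ≤ 2 := by
      by_contra! h'
      nlinarith
    have h3 : ‖(p - q) - (2:ℝ) • w‖ ^ 2 = ‖p - q‖ ^ 2 - 4 * ⟪w, p - q⟫ + 4 * ‖w‖ ^ 2 := by
      rw [norm_sub_sq_real, inner_smul_right, norm_smul, real_inner_comm]
      norm_num
      ring
    have h4 : ‖(p - q) - (2:ℝ) • w‖ = 0 := by
      rw [h, hw] at h3
      have : ‖p - q‖ ^ 2 ≤ 4 := by nlinarith [norm_nonneg (p - q)]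
      nlinarith [norm_nonneg ((p - q) - (2:ℝ) • w)]
    rw [norm_eq_zero, sub_eq_zero, sub_eq_iff_eq_add] at h4
    rw [h4, add_comm]
  have hXY2 : ∀ w : (EuclideanSpace ℝ (Fin 3)), ‖w‖ = 1 → X w = Y w + (2:ℝ) • w := by
    intro w hw
    refine hdiff w hw _ (hX w) _ (hY w) ?_
    rw [hXY, hw]; norm_num
  have hmax : ∀ w : (EuclideanSpace ℝ (Fin 3)), ‖w‖ = 1 → ∀ p ∈ B, ⟪w, p⟫ ≤ ⟪w, X w⟫ := by
    intro w hw p hp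
    have h1 := hle w p hp _ (hY w)
    have h2 := hXY w
    rw [inner_sub_right] at h1 h2
    linarith
  have huniq : ∀ w : (EuclideanSpace ℝ (Fin 3)), ‖w‖ = 1 → ∀ p ∈ B, ⟪w, p⟫ = ⟪w, X w⟫ → p = X w := by
    intro w hw p hp h
    rw [hXY2 w hw]
    refine hdiff w hw _ hp _ (hY w) ?_
    have h2 := hXY w
    rw [inner_sub_right] at h2 ⊢
    rw [h, h2, hw]; norm_num
  have hYneg : ∀ w : (EuclideanSpace ℝ (Fin 3)), ‖w‖ = 1 → Y w = X (-w) := by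
    intro w hw
    have hw' : ‖-w‖ = 1 := by rw [norm_neg, hw]
    refine huniq (-w) hw' _ (hY w) (le_antisymm (hmax _ hw' _ (hY w)) ?_)
    have h1 := hle w _ (hX w) _ (hX (-w))
    have h2 := hXY w
    rw [inner_sub_right] at h1 h2
    rw [inner_neg_left, inner_neg_left]
    linarith
  have hc : ∀ u w w' : (EuclideanSpace ℝ (Fin 3)), ‖w‖ = 1 → ‖w'‖ = 1 → ⟪w, u⟫ = 0 → ⟪w', u⟫ = 0 →
      ⟪u, X w⟫ = ⟪u, X w'⟫ := by
    intro u w w' hw hw' hwu hwu'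
    by_cases hu : u = 0
    · simp [hu]
    obtain ⟨f, c, hfu, hf⟩ := hP u hu
    have hfX : ∀ w : (EuclideanSpace ℝ (Fin 3)), ‖w‖ = 1 → ⟪w, u⟫ = 0 → f (X w) = c := by
      intro w hw hwu
      have h1 := huniq w hw _ (hf _ (hX w)) (by
        rw [inner_sub_right, inner_smul_right, hwu, mul_zero, sub_zero])
      have h2 : (f (X w) - c) • u = 0 := by
        simpa using h1
      have := (smul_eq_zero.1 h2).resolve_right hu
      linarith
    have hf0 : ∀ w : (EuclideanSpace ℝ (Fin 3)), ‖w‖ = 1 → ⟪w, u⟫ = 0 → f w = 0 := by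
      intro w hw hwu
      have h1 := hfX w hw hwu
      have h2 := hfX (-w) (by rw [norm_neg, hw]) (by rw [inner_neg_left, hwu, neg_zero])
      rw [← hYneg w hw] at h2
      rw [hXY2 w hw, map_add, map_smul, h2, smul_eq_mul] at h1
      linarith
    have hf0' : ∀ v : (EuclideanSpace ℝ (Fin 3)), ⟪v, u⟫ = 0 → f v = 0 := by
      intro v hv
      by_cases hv0 : v = 0
      · simp [hv0]
      have hn : ‖v‖ ≠ 0 := norm_ne_zero_iff.2 hv0
      have := hf0 (‖v‖⁻¹ • v) (by rw [norm_smul, norm_inv, norm_norm, inv_mul_cancel₀ hn])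
        (by rw [inner_smul_left, hv, mul_zero])
      rw [map_smul, smul_eq_mul] at this
      exact (mul_eq_zero.1 this).resolve_left (inv_ne_zero hn)
    have huu : ⟪u, u⟫ ≠ 0 := inner_self_ne_zero.2 hu
    have hfin : ∀ x : (EuclideanSpace ℝ (Fin 3)), ⟪u, x⟫ = f x * ⟪u, u⟫ := by
      intro x
      have h1 := hf0' (x - (⟪u, x⟫ / ⟪u, u⟫) • u) (by
        rw [inner_sub_left, inner_smul_left, real_inner_comm]
        simp only [conj_trivial]
        field_simp
        ring)
      rw [map_sub, map_smul, hfu, smul_eq_mul, mul_one, sub_eq_zero] at h1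
      rw [h1]
      field_simp
    rw [hfin (X w), hfin (X w'), hfX w hw hwu, hfX w' hw' hwu']
  have hW : ∀ u : (EuclideanSpace ℝ (Fin 3)), ∃ w : (EuclideanSpace ℝ (Fin 3)), ‖w‖ = 1 ∧ ⟪w, u⟫ = 0 := by
    intro u
    obtain ⟨w, h1, h2, -⟩ := exists_perp u 0
    exact ⟨w, h1, h2⟩
  choose W hW1 hW2 using hW
  let cl : (EuclideanSpace ℝ (Fin 3)) →ₗ[ℝ] ℝ :=
    { toFun := fun u => ⟪u, X (W u)⟫
      map_add' := by
        intro u v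
        obtain ⟨w, h1, h2, h3⟩ := exists_perp u v
        rw [hc u (W u) w (hW1 u) h1 (hW2 u) h2, hc v (W v) w (hW1 v) h1 (hW2 v) h3,
          hc (u + v) (W (u + v)) w (hW1 _) h1 (hW2 _) (by rw [inner_add_right, h2, h3, add_zero]),
          inner_add_left]
      map_smul' := by
        intro r u
        rw [hc (r • u) (W (r • u)) (W u) (hW1 _) (hW1 u) (hW2 _)
          (by rw [inner_smul_right, hW2, mul_zero]), inner_smul_left]
        simp }
  obtain ⟨z, hz⟩ : ∃ z : (EuclideanSpace ℝ (Fin 3)), ∀ u w : (EuclideanSpace ℝ (Fin 3)), ‖w‖ = 1 → ⟪w, u⟫ = 0 → ⟪u, X w⟫ = ⟪u, z⟫ := by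
    refine ⟨(InnerProductSpace.toDual ℝ (EuclideanSpace ℝ (Fin 3))).symm (LinearMap.toContinuousLinearMap cl), ?_⟩
    intro u w hw hwu
    rw [real_inner_comm ((InnerProductSpace.toDual ℝ (EuclideanSpace ℝ (Fin 3))).symm _) u,
      InnerProductSpace.toDual_symm_apply]
    exact hc u w (W u) hw (hW1 u) hwu (hW2 u)
  set k : (EuclideanSpace ℝ (Fin 3)) → ℝ := fun w => ⟪w, X w - z⟫ with hk
  have hXk : ∀ w : (EuclideanSpace ℝ (Fin 3)), ‖w‖ = 1 → X w = z + k w • w := by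
    intro w hw
    set r := X w - z - k w • w with hr
    have hww : ⟪w, w⟫ = (1:ℝ) := by rw [real_inner_self_eq_norm_sq, hw]; norm_num
    have h1 : ⟪w, r⟫ = 0 := by
      rw [hr, inner_sub_right, inner_smul_right, hww]
      simp [hk]
    have h2 := hz r w hw h1
    have h3 : ⟪r, r⟫ = (0:ℝ) := by
      conv_lhs => rw [hr]
      rw [← hr, inner_sub_left, inner_smul_left, h1, mul_zero, sub_zero, real_inner_comm,
        inner_sub_right, h2, sub_self]
    have h4 : r = 0 := inner_self_eq_zero.1 h3
    rw [hr, sub_sub, sub_eq_zero] at h4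
    exact h4
  have hkle : ∀ w w' : (EuclideanSpace ℝ (Fin 3)), ‖w‖ = 1 → ‖w'‖ = 1 → k w * ⟪w', w⟫ ≤ k w' := by
    intro w w' hw hw'
    have h1 := hmax w' hw' _ (hX w)
    rw [hXk w hw, hXk w' hw', inner_add_right, inner_add_right, inner_smul_right,
      inner_smul_right, real_inner_self_eq_norm_sq, hw'] at h1
    linarith
  have hkneg : ∀ w : (EuclideanSpace ℝ (Fin 3)), ‖w‖ = 1 → k w + k (-w) = 2 := by
    intro w hw
    have h1 := hXY2 w hw
    rw [hYneg w hw, hXk w hw, hXk (-w) (by rw [norm_neg, hw])] at h1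
    have h2 : (k w + k (-w) - 2) • w = 0 := by
      have : (k w + k (-w) - 2) • w = (z + k w • w) - (z + k (-w) • -w + (2:ℝ) • w) := by module
      rw [this, h1, sub_self]
    have hw0 : w ≠ 0 := by rintro rfl; simp at hw
    have := (smul_eq_zero.1 h2).resolve_right hw0
    linarith
  have hk0 : ∀ w : (EuclideanSpace ℝ (Fin 3)), ‖w‖ = 1 → 0 ≤ k w := by
    intro w hw
    have := hkle (W w) w (hW1 w) hw
    rwa [real_inner_comm, hW2, mul_zero] at this
  have hk2 : ∀ w : (EuclideanSpace ℝ (Fin 3)), ‖w‖ = 1 → k w ≤ 2 := by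
    intro w hw
    have := hk0 (-w) (by rw [norm_neg, hw])
    linarith [hkneg w hw]
  have hk1 : ∀ w : (EuclideanSpace ℝ (Fin 3)), ‖w‖ = 1 → k w = 1 := by
    intro w hw
    obtain ⟨v, hv, hvw⟩ : ∃ v : (EuclideanSpace ℝ (Fin 3)), ‖v‖ = 1 ∧ ⟪v, w⟫ = 0 := ⟨W w, hW1 w, hW2 w⟩
    set o : ℝ → (EuclideanSpace ℝ (Fin 3)) := fun θ => Real.cos θ • w + Real.sin θ • v with ho
    have hin : ∀ a b, ⟪o a, o b⟫ = Real.cos (a - b) := by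
      intro a b
      simp only [ho, inner_add_left, inner_add_right, inner_smul_left, inner_smul_right,
        conj_trivial, hvw, real_inner_comm v w, real_inner_self_eq_norm_sq, hv, hw]
      rw [Real.cos_sub]; ring
    have hon : ∀ a, ‖o a‖ = 1 := by
      intro a
      have := hin a a
      rw [real_inner_self_eq_norm_sq, sub_self, Real.cos_zero] at this
      nlinarith [norm_nonneg (o a)]
    have hest : ∀ a b, k (o a) - k (o b) ≤ (a - b) ^ 2 := by
      intro a b
      have h1 := hkle (o a) (o b) (hon a) (hon b)
      rw [hin] at h1
      have h2 := Real.one_sub_sq_div_two_le_cos (x := b - a)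
      have h3 := hk0 _ (hon a)
      have h4 := hk2 _ (hon a)
      have h5 := Real.cos_le_one (b - a)
      nlinarith
    have hder : ∀ a, HasDerivAt (fun t => k (o t)) 0 a := by
      intro a
      have h1 : HasFDerivAt (fun t => k (o t) - k (o a)) (0 : ℝ →L[ℝ] ℝ) a := by
        refine Asymptotics.IsBigO.hasFDerivAt (n := 2) ?_ (by norm_num)
        refine Asymptotics.IsBigO.of_bound 1 (Filter.Eventually.of_forall fun t => ?_)
        rw [one_mul, Real.norm_eq_abs, Real.norm_eq_abs, Real.norm_eq_abs, sq_abs, abs_sq, abs_le]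
        constructor
        · have := hest a t
          nlinarith
        · exact hest t a
      have h2 := h1.hasDerivAt.add_const (k (o a))
      simpa using h2
    have hconst := is_const_of_deriv_eq_zero (f := fun t => k (o t))
      (fun a => (hder a).differentiableAt) (fun a => (hder a).deriv) 0 Real.pi
    simp only [ho, Real.cos_zero, Real.sin_zero, Real.cos_pi, Real.sin_pi, one_smul, zero_smul,
      add_zero, neg_smul] at hconst
    have := hkneg w hw
    linarith
  refine ⟨z, Set.Subset.antisymm ?_ ?_⟩
  · intro x hx
    rw [Metric.mem_closedBall, dist_eq_norm]
    by_cases h : x - z = 0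
    · rw [h]; simp
    have hn : ‖x - z‖ ≠ 0 := norm_ne_zero_iff.2 h
    have hw : ‖‖x - z‖⁻¹ • (x - z)‖ = 1 := by
      rw [norm_smul, norm_inv, norm_norm, inv_mul_cancel₀ hn]
    have h1 := hmax _ hw x hx
    have h2 := hk1 _ hw
    simp only [hk] at h2
    rw [inner_sub_right] at h2
    have h3 : ⟪‖x - z‖⁻¹ • (x - z), x - z⟫ = ‖x - z‖ := by
      rw [inner_smul_left, real_inner_self_eq_norm_sq]
      simp only [conj_trivial]
      field_simp
    rw [inner_sub_right] at h3
    linarith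
  · intro x hx
    rw [Metric.mem_closedBall, dist_eq_norm] at hx
    obtain ⟨w, hw, hxw⟩ : ∃ w : (EuclideanSpace ℝ (Fin 3)), ‖w‖ = 1 ∧ x - z = ‖x - z‖ • w := by
      by_cases h : x - z = 0
      · exact ⟨W 0, hW1 0, by rw [h]; simp⟩
      have hn : ‖x - z‖ ≠ 0 := norm_ne_zero_iff.2 h
      refine ⟨‖x - z‖⁻¹ • (x - z), ?_, ?_⟩
      · rw [norm_smul, norm_inv, norm_norm, inv_mul_cancel₀ hn]
      · rw [smul_smul, mul_inv_cancel₀ hn, one_smul]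
    have hw' : ‖-w‖ = 1 := by rw [norm_neg, hw]
    have h1 := hX w
    have h2 := hX (-w)
    rw [hXk w hw, hk1 w hw] at h1
    rw [hXk _ hw', hk1 _ hw'] at h2
    have h0 := norm_nonneg (x - z)
    have := hconv h1 h2 (a := (1 + ‖x - z‖) / 2) (b := (1 - ‖x - z‖) / 2) (by linarith)
      (by linarith) (by ring)
    have e : x = z + ‖x - z‖ • w := by rw [← hxw]; abel
    convert this using 1
    conv_lhs => rw [e]
    module

end Body

section Final
open scoped RealInnerProductSpace



theorem crossing {B : Set (EuclideanSpace ℝ (Fin 3))} (hc : IsClosed B) {q b : (EuclideanSpace ℝ (Fin 3))} (hq : q ∈ interior B) (hb : b ∉ B) :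
    ∃ τ : ℝ, 0 ≤ τ ∧ τ < 1 ∧ q + τ • (b - q) ∈ frontier B := by
  have hpre : IsPreconnected (segment ℝ q b) := (convex_segment q b).isPreconnected
  have h : ∃ p ∈ segment ℝ q b, p ∈ frontier B := by
    by_contra hno
    push Not at hno
    obtain ⟨p, -, hp1, hp2⟩ := hpre (interior B) Bᶜ isOpen_interior hc.isOpen_compl (by
      intro p hp
      by_cases h1 : p ∈ B
      · left
        by_contra h2
        exact hno p hp ⟨subset_closure h1, h2⟩
      · right; exact h1) ⟨q, left_mem_segment ℝ q b, hq⟩ ⟨b, right_mem_segment ℝ q b, hb⟩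
    exact hp2 (interior_subset hp1)
  obtain ⟨p, hp, hpf⟩ := h
  rw [segment_eq_image'] at hp
  obtain ⟨τ, ⟨h0, h1⟩, rfl⟩ := hp
  refine ⟨τ, h0, lt_of_le_of_ne h1 ?_, hpf⟩
  rintro rfl
  have := hc.frontier_subset hpf
  simp at this
  exact hb this

theorem PP_of_weakBlaschke (B : Set (EuclideanSpace ℝ (Fin 3))) (hcomp : IsCompact B) (hconv : Convex ℝ B)
    (hbla : WeakBlaschke B) : PP B := by
  intro u hu
  obtain ⟨H, hH, x, ⟨q, ⟨h, hh, rfl⟩, hqi⟩, hsup⟩ := hbla u hu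
  simp only at hqi
  have huH : u ∉ H := by
    intro huH
    obtain ⟨R, hR⟩ := hcomp.isBounded.exists_norm_le
    have hun : 0 < ‖u‖ := norm_pos_iff.2 hu
    set s : ℝ := (|R| + ‖h + x‖ + 1) / ‖u‖ with hs
    have hs0 : 0 ≤ s := by positivity
    have hbn : h + x + s • u ∉ B := by
      intro hb
      have h1 := hR _ hb
      have h2 : ‖s • u‖ = |R| + ‖h + x‖ + 1 := by
        rw [norm_smul, Real.norm_of_nonneg hs0, hs]
        field_simp
      have h3 : ‖s • u‖ ≤ ‖h + x + s • u‖ + ‖h + x‖ := by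
        have := norm_sub_le (h + x + s • u) (h + x)
        simpa using this
      have := le_abs_self R
      linarith
    obtain ⟨τ, -, -, hτ⟩ := crossing hcomp.isClosed hqi hbn
    refine hsup _ ⟨⟨h + τ • s • u, H.add_mem hh (H.smul_mem _ (H.smul_mem _ huH)), ?_⟩, hτ⟩
      (-(τ * s)) ?_
    · simp only
      module
    · convert hqi using 1
      module
  obtain ⟨g, hgu, hgH⟩ := Submodule.exists_le_ker_of_notMem huH
  set f : (EuclideanSpace ℝ (Fin 3)) →ₗ[ℝ] ℝ := (g u)⁻¹ • g with hf
  have hfu : f u = 1 := by simp [hf, hgu]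
  have hfH : H ≤ LinearMap.ker f := by
    intro z hz
    have : g z = 0 := hgH hz
    simp [hf, this]
  have hker : H = LinearMap.ker f := by
    apply Submodule.eq_of_le_of_finrank_eq hfH
    have h1 := LinearMap.finrank_range_add_finrank_ker f
    have h2 : LinearMap.range f = ⊤ := by
      rw [LinearMap.range_eq_top]
      intro r
      exact ⟨r • u, by simp [hfu]⟩
    rw [h2, finrank_top, finrank_euclideanSpace_fin, Module.finrank_self] at h1
    omega
  refine ⟨f, f x, hfu, ?_⟩
  intro b hb
  by_contra hb'
  obtain ⟨τ, h0, h1, hτ⟩ := crossing hcomp.isClosed hqi hb'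
  have hfh : f h = 0 := hfH hh
  refine hsup _ ⟨⟨h + τ • (b - (f b - f x) • u - (h + x)), ?_, ?_⟩, hτ⟩ (τ * (f b - f x)) ?_
  · rw [hker]
    simp [hfu, hfh]
  · simp only
    module
  · have := hconv.combo_interior_self_mem_interior hqi hb (a := 1 - τ) (b := τ)
      (by linarith) h0 (by ring)
    convert this using 1
    module

theorem stage1 (B : Set (EuclideanSpace ℝ (Fin 3))) (hcomp : IsCompact B) (hInt : (interior B).Nonempty) (hP : PP B) :
    ∃ S : (EuclideanSpace ℝ (Fin 3)) ≃ₗ[ℝ] (EuclideanSpace ℝ (Fin 3)), (∀ y, ∀ p ∈ B, ∀ q ∈ B, ⟪y, p - q⟫ ≤ ‖S y‖) ∧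
      ∀ y, ∃ p ∈ B, ∃ q ∈ B, ⟪y, p - q⟫ = ‖S y‖ := by
  have hne : B.Nonempty := hInt.mono interior_subset
  have hmax : ∀ y : (EuclideanSpace ℝ (Fin 3)), ∃ a : (EuclideanSpace ℝ (Fin 3)) × (EuclideanSpace ℝ (Fin 3)), a ∈ B ×ˢ B ∧ ∀ b ∈ B ×ˢ B,
      ⟪y, b.1 - b.2⟫ ≤ ⟪y, a.1 - a.2⟫ := by
    intro y
    obtain ⟨a, ha, hm⟩ := (hcomp.prod hcomp).exists_isMaxOn (hne.prod hne)
      (f := fun b : (EuclideanSpace ℝ (Fin 3)) × (EuclideanSpace ℝ (Fin 3)) => ⟪y, b.1 - b.2⟫) (by fun_prop)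
    exact ⟨a, ha, fun b hb => hm hb⟩
  choose a ha hm using hmax
  set N : (EuclideanSpace ℝ (Fin 3)) → ℝ := fun y => ⟪y, (a y).1 - (a y).2⟫ with hN
  have hle : ∀ y, ∀ p ∈ B, ∀ q ∈ B, ⟪y, p - q⟫ ≤ N y := fun y p hp q hq => hm y (p, q) ⟨hp, hq⟩
  have hex : ∀ y, ∃ p ∈ B, ∃ q ∈ B, ⟪y, p - q⟫ = N y :=
    fun y => ⟨(a y).1, (ha y).1, (a y).2, (ha y).2, rfl⟩
  clear_value N
  clear ha hm hN
  obtain ⟨S, hS⟩ := isom_of_N (V := (EuclideanSpace ℝ (Fin 3))) finrank_euclideanSpace_fin N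
    (by
      intro v
      obtain ⟨p, hp⟩ := hne
      simpa using hle v p hp p hp)
    (by
      intro v w
      obtain ⟨p, hp, q, hq, h⟩ := hex (v + w)
      rw [← h, inner_add_left]
      exact add_le_add (hle v p hp q hq) (hle w p hp q hq))
    (by
      have key : ∀ (r : ℝ) (v : (EuclideanSpace ℝ (Fin 3))), N (r • v) ≤ |r| * N v := by
        intro r v
        obtain ⟨p, hp, q, hq, h⟩ := hex (r • v)
        rw [← h, inner_smul_left]
        simp only [conj_trivial]
        have h1 := hle v p hp q hq
        have h2 := hle v q hq p hp
        rw [← neg_sub, inner_neg_right] at h2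
        rcases abs_cases r with ⟨h3, h4⟩ | ⟨h3, h4⟩ <;> rw [h3] <;> nlinarith
      intro r v
      apply le_antisymm (key r v)
      obtain ⟨p, hp, q, hq, h⟩ := hex v
      have h1 := hle (r • v) p hp q hq
      have h2 := hle (r • v) q hq p hp
      rw [← neg_sub, inner_neg_right] at h2
      rw [inner_smul_left, h] at h1 h2
      simp only [conj_trivial] at h1 h2
      rcases abs_cases r with ⟨h3, h4⟩ | ⟨h3, h4⟩ <;> rw [h3] <;> linarith)
    (by
      intro v hv
      obtain ⟨q, hq⟩ := hInt
      have hcont : Continuous fun t : ℝ => q + t • v := by fun_prop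
      have hnhds : (fun t : ℝ => q + t • v) ⁻¹' interior B ∈ nhds (0 : ℝ) :=
        (isOpen_interior.preimage hcont).mem_nhds (by simpa using hq)
      obtain ⟨ε, hε, hb⟩ := Metric.mem_nhds_iff.1 hnhds
      have h1 : q + (ε / 2) • v ∈ interior B := hb (by
        rw [Metric.mem_ball, dist_zero_right, Real.norm_of_nonneg (by positivity)]
        linarith)
      have h2 := hle v _ (interior_subset h1) q (interior_subset hq)
      rw [add_sub_cancel_left, inner_smul_right, hv, real_inner_self_eq_norm_sq] at h2
      have h3 : ‖v‖ ^ 2 ≤ 0 := by nlinarith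
      have h4 : ‖v‖ = 0 := by nlinarith [norm_nonneg v]
      exact norm_eq_zero.1 h4)
    (by
      intro y n hy hn
      obtain ⟨u, hu1, huy, hun⟩ := exists_perp y n
      have hu0 : u ≠ 0 := by
        rintro rfl
        simp at hu1
      obtain ⟨f, c, hfu, hf⟩ := hP u hu0
      set F : (EuclideanSpace ℝ (Fin 3)) := (InnerProductSpace.toDual ℝ (EuclideanSpace ℝ (Fin 3))).symm (LinearMap.toContinuousLinearMap f) with hF
      have hFf : ∀ z, ⟪F, z⟫ = f z := by
        intro z
        rw [hF, InnerProductSpace.toDual_symm_apply]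
        rfl
      have hPdef : ∃ P : (EuclideanSpace ℝ (Fin 3)) →ₗ[ℝ] (EuclideanSpace ℝ (Fin 3)), ∀ z, P z = z - ⟪u, z⟫ • F := by
        refine ⟨LinearMap.id - LinearMap.toSpanSingleton ℝ (EuclideanSpace ℝ (Fin 3)) F ∘ₗ (innerₛₗ ℝ u), ?_⟩
        intro z
        simp
      obtain ⟨P, hPz⟩ := hPdef
      refine ⟨P, ?_, ?_, ?_, ?_⟩
      · rw [hPz, huy]; simp
      · rw [hPz, hun]; simp
      · have hspan : Submodule.span ℝ ({y, n} : Set (EuclideanSpace ℝ (Fin 3))) = (Submodule.span ℝ {u})ᗮ := by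
          apply Submodule.eq_of_le_of_finrank_eq
          · rw [Submodule.span_le]
            rintro z (rfl | rfl)
            · exact Submodule.mem_orthogonal_singleton_iff_inner_right.2 huy
            · exact Submodule.mem_orthogonal_singleton_iff_inner_right.2 hun
          · haveI : Fact (Module.finrank ℝ (EuclideanSpace ℝ (Fin 3)) = 2 + 1) := ⟨finrank_euclideanSpace_fin⟩
            rw [Submodule.finrank_orthogonal_span_singleton (n := 2) hu0]
            have hli : LinearIndependent ℝ ![n, y] := by
              rw [linearIndependent_fin2]
              refine ⟨hy, ?_⟩
              intro r hr
              exact hn (Submodule.mem_span_singleton.2 ⟨r, hr⟩)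
            have := finrank_span_eq_card hli
            rw [Matrix.range_cons, Matrix.range_cons, Matrix.range_empty, Set.union_empty,
              Set.singleton_union, Set.pair_comm] at this
            simpa using this
        intro z
        rw [hspan, Submodule.mem_orthogonal_singleton_iff_inner_right, hPz, inner_sub_right,
          inner_smul_right, real_inner_comm F u, hFf, hfu, mul_one, sub_self]
      · intro z
        obtain ⟨p, hp, q, hq, h⟩ := hex (P z)
        have h1 := hle z _ (hf p hp) _ (hf q hq)
        have e : p - (f p - c) • u - (q - (f q - c) • u) = (p - q) - (f p - f q) • u := by module
        rw [e, inner_sub_right, inner_smul_right] at h1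
        rw [← h, hPz, inner_sub_left, inner_smul_left, hFf, map_sub, real_inner_comm z u]
        simp only [conj_trivial]
        linarith)
  exact ⟨S, fun y p hp q hq => (hS y).symm ▸ hle y p hp q hq, fun y => by
    rw [hS y]; exact hex y⟩

theorem ellipsoid_of_PP (B : Set (EuclideanSpace ℝ (Fin 3))) (hcomp : IsCompact B) (hconv : Convex ℝ B)
    (hInt : (interior B).Nonempty) (hP : PP B) :
    ∃ T : (EuclideanSpace ℝ (Fin 3)) ≃ᵃ[ℝ] (EuclideanSpace ℝ (Fin 3)), B = T '' Metric.closedBall 0 1 := by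
  obtain ⟨S, hle, hex⟩ := stage1 B hcomp hInt hP
  have hA : ∃ A : (EuclideanSpace ℝ (Fin 3)) ≃ₗ[ℝ] (EuclideanSpace ℝ (Fin 3)), ∀ y x, ⟪y, A x⟫ = ⟪(2 : ℝ) • S.symm y, x⟫ := by
    set M : (EuclideanSpace ℝ (Fin 3)) →ₗ[ℝ] (EuclideanSpace ℝ (Fin 3)) := LinearMap.adjoint ((2 : ℝ) • (S.symm : (EuclideanSpace ℝ (Fin 3)) →ₗ[ℝ] (EuclideanSpace ℝ (Fin 3)))) with hM
    have hMi : ∀ y x, ⟪y, M x⟫ = ⟪(2 : ℝ) • S.symm y, x⟫ := by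
      intro y x
      rw [hM, LinearMap.adjoint_inner_right]
      rfl
    have hinj : Function.Injective M := by
      rw [injective_iff_map_eq_zero]
      intro x hx
      have h1 := hMi (S x) x
      rw [hx, inner_zero_right, S.symm_apply_apply, inner_smul_left] at h1
      simpa using h1.symm
    exact ⟨LinearEquiv.ofInjectiveEndo M hinj, fun y x => hMi y x⟩
  obtain ⟨A, hA⟩ := hA
  have hPA : PP (A '' B) := by
    intro u hu
    obtain ⟨f, c, hfu, hf⟩ := hP (A.symm u) (by simpa using hu)
    refine ⟨f ∘ₗ (A.symm : (EuclideanSpace ℝ (Fin 3)) →ₗ[ℝ] (EuclideanSpace ℝ (Fin 3))), c, by simpa using hfu, ?_⟩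
    rintro _ ⟨x, hx, rfl⟩
    refine ⟨_, hf x hx, ?_⟩
    simp
  have hn : ∀ y : (EuclideanSpace ℝ (Fin 3)), ‖S ((2 : ℝ) • S.symm y)‖ = 2 * ‖y‖ := by
    intro y
    rw [map_smul, S.apply_symm_apply, norm_smul]
    norm_num
  obtain ⟨z, hz⟩ := stage2 (A '' B) (hconv.linear_image (A : (EuclideanSpace ℝ (Fin 3)) →ₗ[ℝ] (EuclideanSpace ℝ (Fin 3)))) hPA
    (by
      rintro y _ ⟨p, hp, rfl⟩ _ ⟨q, hq, rfl⟩
      rw [← map_sub, hA, ← hn]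
      exact hle _ p hp q hq)
    (by
      intro y
      obtain ⟨p, hp, q, hq, h⟩ := hex ((2 : ℝ) • S.symm y)
      refine ⟨A p, ⟨p, hp, rfl⟩, A q, ⟨q, hq, rfl⟩, ?_⟩
      rw [← map_sub, hA, ← hn, h])
  refine ⟨(AffineEquiv.constVAdd ℝ (EuclideanSpace ℝ (Fin 3)) z).trans A.symm.toAffineEquiv, ?_⟩
  ext b
  have h1 : b ∈ B ↔ A b ∈ Metric.closedBall z 1 := by
    rw [← hz]
    exact (A.injective.mem_set_image).symm
  rw [h1, mem_closedBall_iff_norm]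
  constructor
  · intro h
    refine ⟨A b - z, by simpa using h, ?_⟩
    simp
  · rintro ⟨x, hx, rfl⟩
    simpa using hx

end Final

/-- A convex body in ℝ³ with the weak Blaschke property is an ellipsoid. -/
theorem stmt_17 (B : Set (EuclideanSpace ℝ (Fin 3)))
    (hBcomp : IsCompact B) (hBconv : Convex ℝ B)
    (hBint : (interior B).Nonempty) (hB0 : (0 : EuclideanSpace ℝ (Fin 3)) ∈ B)
    (hbla : WeakBlaschke B) :
    ∃ T : EuclideanSpace ℝ (Fin 3) ≃ᵃ[ℝ] EuclideanSpace ℝ (Fin 3),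
      B = T '' Metric.closedBall 0 1 :=
  ellipsoid_of_PP B hBcomp hBconv hBint (PP_of_weakBlaschke B hBcomp hBconv hbla)
end

section
/- Let B ⊆ ℝ³ be a convex body with the weak Blaschke property. Then B has the weak dual Blaschke property: for every two-dimensional linear subspace H ⊆ ℝ³ there exist a vector x ∈ ℝ³ and a nonzero vector u ∈ ℝ³ such that the affine plane H + x meets the interior of B and every point p ∈ (H + x) ∩ ∂B lies on a B-supporting line with direction u. -/
lemma wb_exit {B : Set (EuclideanSpace ℝ (Fin 3))} {o p : (EuclideanSpace ℝ (Fin 3))} (hc : IsClosed B) (ho : o ∈ interior B) (hp : p ∉ B) :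
    ∃ t : ℝ, 0 < t ∧ t < 1 ∧ (1 - t) • o + t • p ∈ frontier B := by
  have h : (segment ℝ o p ∩ frontier B).Nonempty := by
    by_contra hne
    have hsub : segment ℝ o p ⊆ interior B ∪ Bᶜ := by
      intro z hz
      by_cases hzB : z ∈ B
      · left
        by_contra hzi
        exact hne ⟨z, hz, subset_closure hzB, hzi⟩
      · exact Or.inr hzB
    obtain ⟨z, -, hz1, hz2⟩ := (convex_segment (𝕜 := ℝ) o p).isPreconnected _ _ isOpen_interior
      hc.isOpen_compl hsub ⟨o, left_mem_segment ℝ o p, ho⟩ ⟨p, right_mem_segment ℝ o p, hp⟩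
    exact hz2 (interior_subset hz1)
  obtain ⟨z, ⟨s, t, hs, ht, hst, rfl⟩, hz⟩ := h
  have hs' : s = 1 - t := by linarith
  subst hs'
  refine ⟨t, lt_of_le_of_ne ht ?_, lt_of_le_of_ne (by linarith) ?_, hz⟩
  · rintro rfl
    simp at hz
    exact hz.2 ho
  · rintro rfl
    simp at hz
    exact hp (hc.frontier_subset hz)

lemma wb_normal (H : Submodule ℝ (EuclideanSpace ℝ (Fin 3))) (hH : Module.finrank ℝ H = 2) :
    ∃ n : (EuclideanSpace ℝ (Fin 3)), ‖n‖ = 1 ∧ ∀ x, x ∈ H ↔ inner ℝ n x = 0 := by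
  have h1 : Module.finrank ℝ Hᗮ = 1 := by
    have := Submodule.finrank_add_finrank_orthogonal H
    simp [hH] at this
    omega
  obtain ⟨⟨v, hv⟩, hv0, hspan⟩ := finrank_eq_one_iff'.1 h1
  have hvne : v ≠ 0 := by
    intro h; apply hv0; ext1; exact h
  refine ⟨‖v‖⁻¹ • v, by simp [norm_smul, hvne], fun x => ?_⟩
  rw [← Submodule.orthogonal_orthogonal H, Submodule.mem_orthogonal]
  rw [real_inner_smul_left, mul_eq_zero]
  constructor
  · intro h; right; exact h v hv
  · intro h w hw
    rcases h with h | h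
    · simp [hvne] at h
    · obtain ⟨c, hc⟩ := hspan ⟨w, hw⟩
      have : c • v = w := congrArg Subtype.val hc
      rw [← this, real_inner_smul_left, h, mul_zero]

/-- admissible planes for direction `u`. -/
def WBAdm (B : Set (EuclideanSpace ℝ (Fin 3))) (u a : (EuclideanSpace ℝ (Fin 3))) (c : ℝ) : Prop :=
  inner ℝ a u = 1 ∧ ∀ b ∈ B, b + (c - inner ℝ a b) • u ∈ B

lemma wb_plane {B : Set (EuclideanSpace ℝ (Fin 3))} (hB : IsCompact B) (hb : WeakBlaschke B) {u : (EuclideanSpace ℝ (Fin 3))} (hu : u ≠ 0) :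
    ∃ (a : (EuclideanSpace ℝ (Fin 3))) (c : ℝ) (o : (EuclideanSpace ℝ (Fin 3))), inner ℝ a u = 1 ∧ o ∈ interior B ∧ inner ℝ a o = c ∧
      ∀ p ∈ frontier B, inner ℝ a p = c → ∀ t : ℝ, p + t • u ∉ interior B := by
  obtain ⟨H, hH, x, ⟨o, ⟨h, hh, rfl⟩, ho⟩, hs⟩ := hb u hu
  obtain ⟨n, hn, hnH⟩ := wb_normal H hH
  simp only at ho
  have key : ∀ p ∈ frontier B, inner ℝ n p = inner ℝ n x → ∀ t : ℝ, p + t • u ∉ interior B := by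
    intro p hp hpx
    refine hs p ⟨⟨p - x, ?_, by simp⟩, hp⟩
    simp only [SetLike.mem_coe]
    rw [hnH, inner_sub_right, hpx, sub_self]
  have hox : inner ℝ n (h + x) = inner ℝ n x := by
    rw [inner_add_right, (hnH h).1 hh, zero_add]
  have hnu : inner ℝ n u ≠ 0 := by
    intro h0
    obtain ⟨R, hR⟩ := hB.isBounded.subset_closedBall (h + x)
    have hfar : (h + x) + ((|R| + 1) / ‖u‖) • u ∉ B := by
      intro hm
      have := hR hm
      simp only [Metric.mem_closedBall, dist_eq_norm, add_sub_cancel_left, norm_smul] at this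
      rw [Real.norm_of_nonneg (by positivity), div_mul_cancel₀ _ (norm_ne_zero_iff.2 hu)] at this
      linarith [le_abs_self R]
    obtain ⟨t, ht0, ht1, hf⟩ := wb_exit hB.isClosed ho hfar
    refine key _ hf ?_ (-(t * ((|R| + 1) / ‖u‖))) ?_
    · simp only [inner_add_right, real_inner_smul_right, h0] at hox ⊢
      linear_combination hox
    · convert ho using 1
      module
  refine ⟨(inner ℝ n u)⁻¹ • n, _, h + x, ?_, ho, rfl, ?_⟩
  · rw [real_inner_smul_left, inv_mul_cancel₀ hnu]
  · intro p hp hpc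
    simp only [real_inner_smul_left] at hpc
    exact key p hp ((mul_left_cancel₀ (inv_ne_zero hnu) hpc).trans hox)

lemma wb_adm {B : Set (EuclideanSpace ℝ (Fin 3))} (hB : IsCompact B) (hconv : Convex ℝ B) {u a o : (EuclideanSpace ℝ (Fin 3))} {c : ℝ}
    (hau : inner ℝ a u = 1) (ho : o ∈ interior B) (hao : inner ℝ a o = c)
    (hs : ∀ p ∈ frontier B, inner ℝ a p = c → ∀ t : ℝ, p + t • u ∉ interior B) :
    WBAdm B u a c := by
  refine ⟨hau, fun b hb => ?_⟩
  by_contra hp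
  obtain ⟨t, ht0, ht1, hf⟩ := wb_exit hB.isClosed ho hp
  refine hs _ hf ?_ (-(t * (c - inner ℝ a b))) ?_
  · simp only [inner_add_right, real_inner_smul_right, hau, hao]
    ring
  · have := hconv.combo_interior_self_mem_interior ho hb (a := 1 - t) (b := t)
      (by linarith) ht0.le (by ring)
    convert this using 1
    module

lemma wb_exists_adm {B : Set (EuclideanSpace ℝ (Fin 3))} (hB : IsCompact B) (hconv : Convex ℝ B) (hb : WeakBlaschke B)
    {u : (EuclideanSpace ℝ (Fin 3))} (hu : u ≠ 0) :
    ∃ (a : (EuclideanSpace ℝ (Fin 3))) (c : ℝ), WBAdm B u a c ∧ ∃ o ∈ interior B, inner ℝ a o = c := by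
  obtain ⟨a, c, o, h1, h2, h3, h4⟩ := wb_plane hB hb hu
  exact ⟨a, c, wb_adm hB hconv h1 h2 h3 h4, o, h2, h3⟩

lemma wb_support {B : Set (EuclideanSpace ℝ (Fin 3))} (hconv : Convex ℝ B) {u a o : (EuclideanSpace ℝ (Fin 3))} {c : ℝ}
    (h : WBAdm B u a c) (ho : o ∈ interior B) (hao : inner ℝ a o = c) {p : (EuclideanSpace ℝ (Fin 3))}
    (hp : p ∈ frontier B) (hpc : inner ℝ a p = c) (t : ℝ) : p + t • u ∉ interior B := by
  intro hi
  obtain ⟨r, hr, hrB⟩ := Metric.isOpen_iff.1 isOpen_interior _ hi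
  set e : ℝ := r / (2 * (‖p - o‖ + 1)) with he
  have hpos : 0 < ‖p - o‖ + 1 := by positivity
  have he0 : 0 < e := by positivity
  have hm : p + t • u + e • (p - o) ∈ B := by
    apply interior_subset
    apply hrB
    rw [Metric.mem_ball, dist_eq_norm, add_sub_cancel_left, norm_smul, Real.norm_of_nonneg he0.le, he]
    rw [div_mul_eq_mul_div, div_lt_iff₀ (by positivity)]
    nlinarith [norm_nonneg (p - o)]
  have hq : p + e • (p - o) ∈ B := by
    convert h.2 _ hm using 1
    simp only [inner_add_right, inner_sub_right, real_inner_smul_right, h.1, hao, hpc]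
    module
  have := hconv.combo_interior_self_mem_interior ho hq (a := e / (1 + e)) (b := 1 / (1 + e))
    (by positivity) (by positivity) (by field_simp; ring)
  apply hp.2
  convert this using 1
  rw [← sub_eq_zero]
  match_scalars <;> field_simp <;> ring

lemma wb_orth4 {v w a x : (EuclideanSpace ℝ (Fin 3))} (hv : v ≠ 0) (hw : w ≠ 0) (ha : a ≠ 0)
    (hvw : inner ℝ v w = 0) (hva : inner ℝ v a = 0) (hwa : inner ℝ w a = 0)
    (hvx : inner ℝ v x = 0) (hwx : inner ℝ w x = 0) (hax : inner ℝ a x = 0) : x = 0 := by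
  by_contra hx
  have := linearIndependent_of_ne_zero_of_inner_eq_zero (𝕜 := ℝ) (v := ![v, w, a, x])
    (by intro i; fin_cases i <;> simp [hv, hw, ha, hx])
    (by
      intro i j hij
      fin_cases i <;> fin_cases j <;>
        first
          | exact absurd rfl hij
          | simpa using hvw | simpa using hva | simpa using hwa
          | simpa using hvx | simpa using hwx | simpa using hax
          | (simp; rw [real_inner_comm]; assumption))
  have := this.fintype_card_le_finrank
  simp at this

lemma wb_exists_orth (x y : (EuclideanSpace ℝ (Fin 3))) : ∃ w : (EuclideanSpace ℝ (Fin 3)), w ≠ 0 ∧ inner ℝ x w = 0 ∧ inner ℝ y w = 0 := by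
  have h1 : Module.finrank ℝ (Submodule.span ℝ ({x, y} : Set (EuclideanSpace ℝ (Fin 3)))) ≤ 2 := by
    have := finrank_span_finset_le_card (R := ℝ) ({x, y} : Finset (EuclideanSpace ℝ (Fin 3)))
    simp only [Finset.coe_insert, Finset.coe_singleton] at this
    exact this.trans Finset.card_le_two
  have h2 := Submodule.finrank_add_finrank_orthogonal (Submodule.span ℝ ({x, y} : Set (EuclideanSpace ℝ (Fin 3))))
  simp only [finrank_euclideanSpace, Fintype.card_fin] at h2
  have h3 : (Submodule.span ℝ ({x, y} : Set (EuclideanSpace ℝ (Fin 3))))ᗮ ≠ ⊥ := by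
    intro h
    rw [h, finrank_bot] at h2
    omega
  obtain ⟨w, hw, hw0⟩ := Submodule.exists_mem_ne_zero_of_ne_bot h3
  rw [Submodule.mem_orthogonal] at hw
  exact ⟨w, hw0, hw x (Submodule.subset_span (by simp)), hw y (Submodule.subset_span (by simp))⟩

lemma wb_nondeg_aux {B : Set (EuclideanSpace ℝ (Fin 3))} (hB : IsCompact B) (hconv : Convex ℝ B) (hb : WeakBlaschke B)
    {u a b0 : (EuclideanSpace ℝ (Fin 3))} {c : ℝ} (h : WBAdm B u a c) (hb0 : b0 ∈ interior B) (hab : c < inner ℝ a b0)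
    (hno : ∀ o ∈ interior B, inner ℝ a o ≠ c) : False := by
  have hge : ∀ b ∈ B, c ≤ inner ℝ a b := by
    intro b hbB
    by_contra hlt
    push Not at hlt
    set t := (inner ℝ a b0 - c) / (inner ℝ a b0 - inner ℝ a b) with ht
    have hpos : 0 < inner ℝ a b0 - inner ℝ a b := by linarith
    have ht0 : 0 < t := div_pos (by linarith) hpos
    have ht1 : t < 1 := by rw [ht, div_lt_one hpos]; linarith
    have := hconv.combo_interior_self_mem_interior hb0 hbB (a := 1 - t) (b := t)
      (by linarith) ht0.le (by ring)
    apply hno _ this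
    simp only [inner_add_right, real_inner_smul_right]
    have : t * (inner ℝ a b0 - inner ℝ a b) = inner ℝ a b0 - c := div_mul_cancel₀ _ hpos.ne'
    linarith
  obtain ⟨r, hr, hrB⟩ := Metric.isOpen_iff.1 isOpen_interior _ hb0
  set q0 : (EuclideanSpace ℝ (Fin 3)) := b0 + (c - inner ℝ a b0) • u with hq0
  have haq0 : inner ℝ a q0 = c := by
    rw [hq0, inner_add_right, real_inner_smul_right, h.1]; ring
  have hq : ∀ x : (EuclideanSpace ℝ (Fin 3)), ‖x‖ < r → inner ℝ a x = 0 → q0 + x ∈ B := by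
    intro x hx hax
    have : b0 + x ∈ B := interior_subset (hrB (by simpa [dist_eq_norm] using hx))
    have := h.2 _ this
    rw [inner_add_right, hax, add_zero] at this
    convert this using 1
    rw [hq0]; module
  set F : Set (EuclideanSpace ℝ (Fin 3)) := B ∩ {x | inner ℝ a x = c} with hF
  have hFc : IsCompact F := hB.inter_right (isClosed_eq (by fun_prop) continuous_const)
  have hFne : F.Nonempty := ⟨q0, by simpa using hq 0 (by simpa using hr) (by simp), haq0⟩
  obtain ⟨e, heF, hext⟩ := hFc.extremePoints_nonempty hFne
  have ha0 : a ≠ 0 := by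
    rintro rfl
    have := h.1
    simp at this
  set v : (EuclideanSpace ℝ (Fin 3)) := e - q0 with hv
  have hav : inner ℝ a v = 0 := by
    rw [hv, inner_sub_right, haq0, heF.2, sub_self]
  obtain ⟨w', hw'0, haw', hvw'⟩ := wb_exists_orth a v
  obtain ⟨w, hw0, haw, hvw, hwr⟩ : ∃ w : (EuclideanSpace ℝ (Fin 3)), w ≠ 0 ∧ inner ℝ a w = 0 ∧ inner ℝ v w = 0 ∧ ‖w‖ < r := by
    have hn : 0 < ‖w'‖ := norm_pos_iff.2 hw'0
    refine ⟨(r / (2 * ‖w'‖)) • w', smul_ne_zero (by positivity) hw'0, ?_, ?_, ?_⟩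
    · rw [real_inner_smul_right, haw', mul_zero]
    · rw [real_inner_smul_right, hvw', mul_zero]
    · rw [norm_smul, Real.norm_of_nonneg (by positivity)]
      have : r / (2 * ‖w'‖) * ‖w'‖ = r / 2 := by field_simp
      linarith
  have hw1 : q0 + w ∈ F := ⟨hq w hwr haw, by
    simp only [Set.mem_ofPred_eq]; rw [inner_add_right, haw, haq0, add_zero]⟩
  have hw2 : q0 + (-w) ∈ F := ⟨hq (-w) (by simpa using hwr) (by simp [haw]), by
    simp only [Set.mem_ofPred_eq]; rw [inner_add_right, inner_neg_right, haw, haq0]; ring⟩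
  have hv0 : v ≠ 0 := by
    intro hv0
    have heq : e = q0 := sub_eq_zero.1 hv0
    have := hext hw1 hw2 ⟨1/2, 1/2, by norm_num, by norm_num, by norm_num, by rw [heq]; module⟩
    rw [heq] at this
    simp at this
    exact hw0 this
  have huv : inner ℝ a (u + v) = 1 := by rw [inner_add_right, h.1, hav, add_zero]
  have huv0 : u + v ≠ 0 := by
    intro h0; rw [h0] at huv; simp at huv
  obtain ⟨a', c', h', o', ho', hao'⟩ := wb_exists_adm hB hconv hb huv0
  have claim : ∀ q ∈ F, ∃ t : ℝ, 0 ≤ t ∧ q + t • v ∈ F ∧ inner ℝ a' (q + t • v) = c' := by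
    intro q hqF
    set S : Set ℝ := {t | 0 ≤ t ∧ q + t • v ∈ B} with hS
    have hSc : IsClosed S := by
      refine (isClosed_le continuous_const continuous_id).inter ?_
      exact hB.isClosed.preimage (by fun_prop)
    have hSb : BddAbove S := by
      obtain ⟨R, hR⟩ := hB.isBounded.subset_closedBall q
      refine ⟨R / ‖v‖, ?_⟩
      rintro t ⟨ht0, ht⟩
      have := hR ht
      rw [Metric.mem_closedBall, dist_eq_norm, add_sub_cancel_left, norm_smul,
        Real.norm_of_nonneg ht0] at this
      rwa [le_div_iff₀ (norm_pos_iff.2 hv0)]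
    have hSn : S.Nonempty := ⟨0, le_rfl, by simpa using hqF.1⟩
    have hmem := hSc.csSup_mem hSn hSb
    set t := sSup S with ht
    have hat : inner ℝ a (q + t • v) = c := by
      rw [inner_add_right, real_inner_smul_right, hav, mul_zero, add_zero]; exact hqF.2
    refine ⟨t, hmem.1, ⟨hmem.2, hat⟩, ?_⟩
    have hB1 := h'.2 _ hmem.2
    set s := c' - inner ℝ a' (q + t • v) with hs
    have hs0 : 0 ≤ s := by
      have := hge _ hB1
      rw [inner_add_right, hat, real_inner_smul_right, huv] at this
      linarith
    have hB2 := h.2 _ hB1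
    rw [inner_add_right, hat, real_inner_smul_right, huv] at hB2
    have hmem2 : t + s ∈ S := by
      refine ⟨add_nonneg hmem.1 hs0, ?_⟩
      convert hB2 using 1
      module
    have := le_csSup hSb hmem2
    linarith
  have hae : inner ℝ a' e = c' := by
    obtain ⟨t, ht0, htF, htc⟩ := claim e heF
    rcases ht0.eq_or_lt with rfl | hlt
    · simpa using htc
    · exfalso
      have hq0F : q0 ∈ F := ⟨by simpa using hq 0 (by simpa using hr) (by simp), haq0⟩
      have := hext hq0F htF ⟨t / (1 + t), 1 / (1 + t), by positivity, by positivity,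
        by field_simp; ring, by
          have he : e = q0 + v := by rw [hv]; module
          rw [he, ← sub_eq_zero]
          match_scalars <;> field_simp <;> ring⟩
      apply hv0
      rw [hv, this, sub_self]
  obtain ⟨t1, -, h1F, h1c⟩ := claim _ hw1
  obtain ⟨t2, -, h2F, h2c⟩ := claim _ hw2
  have he : e = q0 + v := by rw [hv]; module
  rw [he] at hae
  simp only [inner_add_right, inner_neg_right, real_inner_smul_right] at h1c h2c hae
  by_cases hav' : inner ℝ a' v = 0
  · have e1 : inner ℝ a' q0 = c' := by rw [hav'] at hae; linarith
    have e2 : inner ℝ a' w = 0 := by rw [hav'] at h1c; linarith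
    have hpar : a' = a := by
      have hx := wb_orth4 (x := a' - (inner ℝ a a' / inner ℝ a a) • a) hv0 hw0 ha0 hvw
        (by rw [real_inner_comm]; exact hav) (by rw [real_inner_comm]; exact haw)
        (by rw [inner_sub_right, real_inner_smul_right, real_inner_comm, hav',
              real_inner_comm a v, hav]; simp)
        (by rw [inner_sub_right, real_inner_smul_right, real_inner_comm, e2,
              real_inner_comm a w, haw]; simp)
        (by rw [inner_sub_right, real_inner_smul_right, div_mul_cancel₀ _ (by simpa using ha0),
              sub_self])
      have hx' := sub_eq_zero.1 hx
      have := h'.1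
      rw [hx', real_inner_smul_left, huv, mul_one] at this
      rw [this, one_smul] at hx'
      exact hx'
    apply hno o' ho'
    rw [← hpar, hao', ← e1, hpar, haq0]
  · have ht : (t1 + t2) / 2 = 1 := by
      have : ((t1 + t2) / 2 - 1) * inner ℝ a' v = 0 := by linear_combination (h1c + h2c)/2 - hae
      rcases mul_eq_zero.1 this with h | h
      · linarith
      · exact absurd h hav'
    have := hext h1F h2F ⟨1/2, 1/2, by norm_num, by norm_num, by norm_num, by
      have : t2 = 2 - t1 := by linarith
      rw [he, this]; module⟩
    rw [he] at this
    have h3 : inner ℝ w (q0 + w + t1 • v) = inner ℝ w (q0 + v) := by rw [this]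
    simp only [inner_add_right, real_inner_smul_right] at h3
    rw [real_inner_comm v w, hvw] at h3
    have : inner ℝ w w = 0 := by linarith
    exact hw0 (inner_self_eq_zero.1 this)

lemma wb_nondeg {B : Set (EuclideanSpace ℝ (Fin 3))} (hB : IsCompact B) (hconv : Convex ℝ B) (hi : (interior B).Nonempty)
    (hb : WeakBlaschke B)
    {u a : (EuclideanSpace ℝ (Fin 3))} {c : ℝ} (h : WBAdm B u a c) : ∃ o ∈ interior B, inner ℝ a o = c := by
  by_contra hno
  push Not at hno
  obtain ⟨b0, hb0⟩ := hi
  rcases lt_or_gt_of_ne (hno b0 hb0) with hlt | hgt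
  · refine wb_nondeg_aux (u := -u) (a := -a) (c := -c) hB hconv hb ⟨?_, ?_⟩ hb0 ?_ ?_
    · rw [inner_neg_neg, h.1]
    · intro b hbB
      convert h.2 b hbB using 1
      rw [inner_neg_left]; module
    · rw [inner_neg_left]; linarith
    · intro o ho
      rw [inner_neg_left]
      exact fun h => hno o ho (neg_injective h)
  · exact wb_nondeg_aux hB hconv hb h hb0 hgt hno

open MeasureTheory in
lemma wb_det {B : Set (EuclideanSpace ℝ (Fin 3))} {H : Submodule ℝ (EuclideanSpace ℝ (Fin 3))} {n : (EuclideanSpace ℝ (Fin 3))} (hnH : ∀ x, x ∈ H ↔ inner ℝ n x = 0)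
    {u u' a : (EuclideanSpace ℝ (Fin 3))} {c : ℝ} (hu : inner ℝ n u = 1) (hu' : inner ℝ n u' = 1) (hau : inner ℝ a u = 1)
    {S : Set H} (hS : ∀ y ∈ S, (y : (EuclideanSpace ℝ (Fin 3))) + (c - inner ℝ a (y : (EuclideanSpace ℝ (Fin 3)))) • u ∈ B) :
    ENNReal.ofReal |inner ℝ a u'| * volume S ≤
      volume {y : H | ∃ b ∈ B, (y : (EuclideanSpace ℝ (Fin 3))) = b - (inner ℝ n b : ℝ) • u'} := by
  have hd : u' - u ∈ H := by rw [hnH, inner_sub_right, hu, hu', sub_self]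
  let d : H := ⟨u' - u, hd⟩
  let f : H →ₗ[ℝ] ℝ := (innerₛₗ ℝ a).comp H.subtype
  have hf : ∀ y : H, f y = inner ℝ a (y : (EuclideanSpace ℝ (Fin 3))) := fun y => rfl
  have hdet : (LinearMap.transvection f d).det = inner ℝ a u' := by
    rw [LinearMap.transvection.det, hf]
    simp only [d, inner_sub_right, hau]
    ring
  have h1 := Measure.addHaar_image_linearMap (volume : Measure H) (LinearMap.transvection f d) S
  rw [hdet] at h1
  rw [← h1, ← measure_preimage_add_right volume (c • d)]
  apply measure_mono
  rintro z hz
  obtain ⟨y, hy, hyz⟩ := hz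
  refine ⟨_, hS y hy, ?_⟩
  have hz' : z = (LinearMap.transvection f d) y - c • d := by rw [hyz]; simp
  rw [hz']
  have hny : inner ℝ n (y : (EuclideanSpace ℝ (Fin 3))) = 0 := (hnH _).1 y.2
  simp only [LinearMap.transvection.apply, hf, inner_add_right, real_inner_smul_right, hu, hny]
  simp only [Submodule.coe_sub, Submodule.coe_add, Submodule.coe_smul, d]
  module

/-- Area of the projection of `B` to `H` along `u`. -/
noncomputable def wbV (B : Set (EuclideanSpace ℝ (Fin 3))) (H : Submodule ℝ (EuclideanSpace ℝ (Fin 3))) (n u : (EuclideanSpace ℝ (Fin 3))) : ℝ :=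
  (MeasureTheory.volume {y : H | ∃ b ∈ B, (y : (EuclideanSpace ℝ (Fin 3))) = b - (inner ℝ n b : ℝ) • u}).toReal

open MeasureTheory in
lemma wb_fin {B : Set (EuclideanSpace ℝ (Fin 3))} (hB : IsCompact B) (H : Submodule ℝ (EuclideanSpace ℝ (Fin 3))) (n u : (EuclideanSpace ℝ (Fin 3))) :
    volume {y : H | ∃ b ∈ B, (y : (EuclideanSpace ℝ (Fin 3))) = b - (inner ℝ n b : ℝ) • u} < ⊤ := by
  apply Bornology.IsBounded.measure_lt_top
  have hK : IsCompact ((fun b : (EuclideanSpace ℝ (Fin 3)) => b - (inner ℝ n b : ℝ) • u) '' B) :=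
    hB.image (by fun_prop)
  obtain ⟨R, hR⟩ := hK.isBounded.subset_closedBall 0
  refine Metric.isBounded_closedBall (x := (0 : H)) (r := R) |>.subset ?_
  rintro y ⟨b, hb, hy⟩
  have := hR ⟨b, hb, rfl⟩
  simp only [← hy] at this
  simpa using this

open MeasureTheory in
lemma wb_det_real {B : Set (EuclideanSpace ℝ (Fin 3))} (hB : IsCompact B) {H : Submodule ℝ (EuclideanSpace ℝ (Fin 3))} {n : (EuclideanSpace ℝ (Fin 3))}
    (hnH : ∀ x, x ∈ H ↔ inner ℝ n x = 0)
    {u u' a : (EuclideanSpace ℝ (Fin 3))} {c : ℝ} (hu : inner ℝ n u = 1) (hu' : inner ℝ n u' = 1) (hau : inner ℝ a u = 1)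
    {S : Set H} (hS : ∀ y ∈ S, (y : (EuclideanSpace ℝ (Fin 3))) + (c - inner ℝ a (y : (EuclideanSpace ℝ (Fin 3)))) • u ∈ B) :
    |inner ℝ a u'| * (volume S).toReal ≤ wbV B H n u' := by
  have := ENNReal.toReal_mono (wb_fin hB H n u').ne (wb_det hnH hu hu' hau hS)
  rwa [ENNReal.toReal_mul, ENNReal.toReal_ofReal (abs_nonneg _)] at this

lemma wb_sub {B : Set (EuclideanSpace ℝ (Fin 3))} (hB : IsCompact B) {H : Submodule ℝ (EuclideanSpace ℝ (Fin 3))} {n : (EuclideanSpace ℝ (Fin 3))}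
    (hnH : ∀ x, x ∈ H ↔ inner ℝ n x = 0)
    {u u' a : (EuclideanSpace ℝ (Fin 3))} {c : ℝ} (hu : inner ℝ n u = 1) (hu' : inner ℝ n u' = 1) (h : WBAdm B u a c) :
    |inner ℝ a u'| * wbV B H n u ≤ wbV B H n u' := by
  refine wb_det_real hB hnH hu hu' h.1 (c := c) ?_
  rintro y ⟨b, hb, hy⟩
  convert h.2 b hb using 1
  rw [hy]
  simp only [inner_sub_right, real_inner_smul_right, h.1]
  module

open MeasureTheory in
lemma wb_coercive {B : Set (EuclideanSpace ℝ (Fin 3))} (hB : IsCompact B) (hi : (interior B).Nonempty)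
    {H : Submodule ℝ (EuclideanSpace ℝ (Fin 3))} {n : (EuclideanSpace ℝ (Fin 3))} (hn : ‖n‖ = 1)
    (hnH : ∀ x, x ∈ H ↔ inner ℝ n x = 0) :
    ∃ κ : ℝ, 0 < κ ∧ ∀ u, inner ℝ n u = 1 → (1 + ‖u - n‖) * κ ≤ wbV B H n u := by
  obtain ⟨b0, hb0⟩ := hi
  obtain ⟨r, hr, hrB⟩ := Metric.isOpen_iff.1 isOpen_interior _ hb0
  have hnn : inner ℝ n n = (1 : ℝ) := by rw [real_inner_self_eq_norm_sq, hn]; norm_num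
  have hy0 : b0 - (inner ℝ n b0 : ℝ) • n ∈ H := by
    rw [hnH, inner_sub_right, real_inner_smul_right, hnn]; ring
  let y0 : H := ⟨_, hy0⟩
  set S : Set H := Metric.ball y0 (r / 3) with hS
  have hfin : volume S < ⊤ := Metric.isBounded_ball.measure_lt_top
  refine ⟨(volume S).toReal, ENNReal.toReal_pos (Metric.measure_ball_pos _ _ (by positivity)).ne'
    hfin.ne, fun u hu => ?_⟩
  set w : (EuclideanSpace ℝ (Fin 3)) := ‖u - n‖⁻¹ • (u - n) with hw
  have hwn : ‖w‖ ≤ 1 := by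
    rw [hw, norm_smul, norm_inv, norm_norm]
    exact inv_mul_le_one
  have hnw : inner ℝ n w = 0 := by
    rw [hw, real_inner_smul_right, inner_sub_right, hu, hnn]; simp
  have hwn' : inner ℝ w n = 0 := by rw [real_inner_comm]; exact hnw
  have h1 : inner ℝ (n + w) n = (1 : ℝ) := by
    rw [inner_add_left, hnn, hwn', add_zero]
  have h2 : inner ℝ (n + w) u = 1 + ‖u - n‖ := by
    have e : inner ℝ w u = inner ℝ w (u - n) := by rw [inner_sub_right, hwn', sub_zero]
    rw [inner_add_left, hu, e, hw, real_inner_smul_left, real_inner_self_eq_norm_sq]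
    rcases eq_or_ne (‖u - n‖) 0 with h | h
    · simp [h]
    · field_simp
  have := wb_det_real hB hnH hnn hu h1 (c := inner ℝ (n + w) b0) (S := S) ?_
  · rwa [h2, abs_of_nonneg (by positivity)] at this
  · intro y hy
    apply interior_subset
    apply hrB
    set x : (EuclideanSpace ℝ (Fin 3)) := (y : (EuclideanSpace ℝ (Fin 3))) - (y0 : (EuclideanSpace ℝ (Fin 3))) with hx
    have hxn : ‖x‖ < r / 3 := by
      rw [hS, Metric.mem_ball, dist_eq_norm] at hy
      exact hy
    have hy' : (y : (EuclideanSpace ℝ (Fin 3))) = b0 - (inner ℝ n b0 : ℝ) • n + x := by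
      rw [hx]; simp only [y0]; module
    rw [Metric.mem_ball, dist_eq_norm]
    have : (y : (EuclideanSpace ℝ (Fin 3))) + (inner ℝ (n + w) b0 - inner ℝ (n + w) (y : (EuclideanSpace ℝ (Fin 3)))) • n - b0
        = x - (inner ℝ (n + w) x) • n := by
      rw [hy']
      rw [inner_add_right (n + w), inner_sub_right, real_inner_smul_right, h1]
      module
    rw [this]
    have h3 : |inner ℝ (n + w) x| ≤ 2 * ‖x‖ := by
      refine (abs_real_inner_le_norm _ _).trans ?_
      gcongr
      exact (norm_add_le _ _).trans (by linarith)
    calc ‖x - (inner ℝ (n + w) x) • n‖ ≤ ‖x‖ + ‖(inner ℝ (n + w) x) • n‖ := norm_sub_le _ _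
      _ ≤ ‖x‖ + 2 * ‖x‖ := by rw [norm_smul, hn, mul_one, Real.norm_eq_abs]; gcongr
      _ < r := by linarith

lemma wb_bound {B : Set (EuclideanSpace ℝ (Fin 3))} (hB : IsCompact B) (hi : (interior B).Nonempty)
    {n : (EuclideanSpace ℝ (Fin 3))} (hn : ‖n‖ = 1) :
    ∃ M : ℝ, ∀ u a c, inner ℝ n u = 1 → WBAdm B u a c → ‖a‖ ≤ M ∧ |c| ≤ M := by
  obtain ⟨b0, hb0⟩ := hi
  obtain ⟨r, hr, hrB⟩ := Metric.isOpen_iff.1 isOpen_interior _ hb0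
  obtain ⟨R, hR⟩ := hB.isBounded.subset_closedBall 0
  have hR' : ∀ b ∈ B, ‖b‖ ≤ R := fun b hb => by simpa using hR hb
  have hR0 : 0 ≤ R := (norm_nonneg _).trans (hR' _ (interior_subset hb0))
  refine ⟨max (8 * R / r) (2 * R + 8 * R / r * R), fun u a c hu h => ?_⟩
  have hun : 1 ≤ ‖u‖ := by
    have := real_inner_le_norm n u
    rwa [hu, hn, one_mul] at this
  have key : ∀ b ∈ B, |c - inner ℝ a b| ≤ 2 * R := by
    intro b hb
    have h1 := hR' _ (h.2 b hb)
    have h2 := hR' b hb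
    have h3 : ‖(c - inner ℝ a b) • u‖ ≤ 2 * R := by
      calc ‖(c - inner ℝ a b) • u‖ = ‖(b + (c - inner ℝ a b) • u) - b‖ := by congr 1; module
        _ ≤ _ := norm_sub_le _ _
        _ ≤ 2 * R := by linarith
    rw [norm_smul, Real.norm_eq_abs] at h3
    nlinarith [abs_nonneg (c - inner ℝ a b)]
  have ha : ‖a‖ ≤ 8 * R / r := by
    rcases eq_or_ne a 0 with rfl | ha
    · rw [norm_zero]; positivity
    have hapos : 0 < ‖a‖ := norm_pos_iff.2 ha
    have hm : b0 + (r / (2 * ‖a‖)) • a ∈ B := by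
      apply interior_subset
      apply hrB
      rw [Metric.mem_ball, dist_eq_norm, add_sub_cancel_left, norm_smul,
        Real.norm_of_nonneg (by positivity)]
      have : r / (2 * ‖a‖) * ‖a‖ = r / 2 := by field_simp
      linarith
    have k1 := abs_le.1 (key _ hm)
    have k2 := abs_le.1 (key _ (interior_subset hb0))
    rw [inner_add_right, real_inner_smul_right, real_inner_self_eq_norm_sq] at k1
    have : r / (2 * ‖a‖) * ‖a‖ ^ 2 = r * ‖a‖ / 2 := by field_simp
    rw [this] at k1
    rw [le_div_iff₀ hr]
    linarith
  refine ⟨ha.trans (le_max_left _ _), le_trans ?_ (le_max_right _ _)⟩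
  have k2 := key _ (interior_subset hb0)
  have k3 : |inner ℝ a b0| ≤ 8 * R / r * R :=
    (abs_real_inner_le_norm _ _).trans (mul_le_mul ha (hR' _ (interior_subset hb0))
      (norm_nonneg _) (by positivity))
  calc |c| = |(c - inner ℝ a b0) + inner ℝ a b0| := by congr 1; ring
    _ ≤ _ := abs_add_le _ _
    _ ≤ _ := by linarith

open Filter Topology in
lemma wb_seq {B : Set (EuclideanSpace ℝ (Fin 3))} (hB : IsCompact B) (hi : (interior B).Nonempty)
    {n : (EuclideanSpace ℝ (Fin 3))} (hn : ‖n‖ = 1) {u : ℕ → (EuclideanSpace ℝ (Fin 3))} {u0 : (EuclideanSpace ℝ (Fin 3))} (hu : ∀ k, inner ℝ n (u k) = 1)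
    (hlim : Tendsto u atTop (𝓝 u0)) {a : ℕ → (EuclideanSpace ℝ (Fin 3))} {c : ℕ → ℝ} (h : ∀ k, WBAdm B (u k) (a k) (c k)) :
    ∃ (a0 : (EuclideanSpace ℝ (Fin 3))) (c0 : ℝ) (φ : ℕ → ℕ), StrictMono φ ∧ Tendsto (a ∘ φ) atTop (𝓝 a0) ∧
      WBAdm B u0 a0 c0 := by
  obtain ⟨M, hM⟩ := wb_bound hB hi hn
  have hbd : Bornology.IsBounded (Metric.closedBall (0 : (EuclideanSpace ℝ (Fin 3))) M ×ˢ Metric.closedBall (0 : ℝ) M) :=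
    Metric.isBounded_closedBall.prod Metric.isBounded_closedBall
  obtain ⟨⟨a0, c0⟩, -, φ, hφ, hconv⟩ := tendsto_subseq_of_bounded hbd (x := fun k => (a k, c k))
    (fun k => by
      have := hM _ _ _ (hu k) (h k)
      exact ⟨by simpa using this.1, by simpa using this.2⟩)
  have ha : Tendsto (a ∘ φ) atTop (𝓝 a0) := (continuous_fst.tendsto _).comp hconv
  have hc : Tendsto (c ∘ φ) atTop (𝓝 c0) := (continuous_snd.tendsto _).comp hconv
  have hu' : Tendsto (u ∘ φ) atTop (𝓝 u0) := hlim.comp hφ.tendsto_atTop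
  refine ⟨a0, c0, φ, hφ, ha, ?_, fun b hb => ?_⟩
  · refine tendsto_nhds_unique (ha.inner hu') ?_
    refine tendsto_const_nhds.congr fun k => ?_
    exact (h (φ k)).1.symm
  · refine hB.isClosed.mem_of_tendsto
      (tendsto_const_nhds.add ((hc.sub (ha.inner tendsto_const_nhds)).smul hu')) ?_
    exact Eventually.of_forall fun k => (h (φ k)).2 b hb

open Filter Topology in
lemma wb_main {B : Set (EuclideanSpace ℝ (Fin 3))} (hB : IsCompact B) (hconv : Convex ℝ B) (hi : (interior B).Nonempty)
    (hb : WeakBlaschke B) {H : Submodule ℝ (EuclideanSpace ℝ (Fin 3))} {n : (EuclideanSpace ℝ (Fin 3))} (hn : ‖n‖ = 1)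
    (hnH : ∀ x, x ∈ H ↔ inner ℝ n x = 0) : ∃ (u : (EuclideanSpace ℝ (Fin 3))) (c : ℝ), WBAdm B u n c := by
  obtain ⟨κ, hκ, hco⟩ := wb_coercive hB hi hn hnH
  have hnn : inner ℝ n n = (1 : ℝ) := by rw [real_inner_self_eq_norm_sq, hn]; norm_num
  set S : Set ℝ := {s | ∃ u, inner ℝ n u = 1 ∧ wbV B H n u = s} with hS
  have hSn : S.Nonempty := ⟨_, n, hnn, rfl⟩
  have hSb : BddBelow S := by
    refine ⟨0, ?_⟩
    rintro _ ⟨u, -, rfl⟩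
    exact ENNReal.toReal_nonneg
  set I := sInf S with hI
  have hle : ∀ u, inner ℝ n u = 1 → I ≤ wbV B H n u := fun u hu => csInf_le hSb ⟨u, hu, rfl⟩
  have hex : ∀ k : ℕ, ∃ u, inner ℝ n u = 1 ∧ wbV B H n u < I + 1 / ((k : ℝ) + 1) := by
    intro k
    obtain ⟨_, ⟨u, hu, rfl⟩, hlt⟩ := exists_lt_of_csInf_lt hSn
      (show sInf S < I + 1 / ((k : ℝ) + 1) by
        have : 0 < 1 / ((k : ℝ) + 1) := by positivity
        linarith)
    exact ⟨u, hu, hlt⟩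
  choose us hus hlt using hex
  have hbd : ∀ k, us k ∈ Metric.closedBall n ((I + 1) / κ) := by
    intro k
    rw [Metric.mem_closedBall, dist_eq_norm, le_div_iff₀ hκ]
    have h1 := hco _ (hus k)
    have h2 := hlt k
    have h3 : 1 / ((k : ℝ) + 1) ≤ 1 := by
      rw [div_le_one (by positivity)]
      linarith [(Nat.cast_nonneg k : (0 : ℝ) ≤ k)]
    nlinarith
  obtain ⟨u0, -, φ, hφ, hlim⟩ := tendsto_subseq_of_bounded Metric.isBounded_closedBall hbd
  have hu0 : inner ℝ n u0 = (1 : ℝ) := by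
    refine tendsto_nhds_unique (tendsto_const_nhds.inner hlim) ?_
    exact tendsto_const_nhds.congr fun k => (hus (φ k)).symm
  have hVlim : Tendsto (fun k => I + 1 / (((φ k : ℕ) : ℝ) + 1)) atTop (𝓝 I) := by
    have := (tendsto_one_div_add_atTop_nhds_zero_nat (𝕜 := ℝ)).comp hφ.tendsto_atTop
    simpa using this.const_add I
  set T : Set (EuclideanSpace ℝ (Fin 3)) := {a | ∃ c, WBAdm B u0 a c} with hT
  by_cases hnT : n ∈ T
  · obtain ⟨c, hc⟩ := hnT
    exact ⟨u0, c, hc⟩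
  exfalso
  have hTconv : Convex ℝ T := by
    rintro a ⟨c, h⟩ a' ⟨c', h'⟩ s t hs ht hst
    refine ⟨s * c + t * c', ?_, fun b hbB => ?_⟩
    · rw [inner_add_left, real_inner_smul_left, real_inner_smul_left, h.1, h'.1]
      linarith
    · convert hconv (h.2 b hbB) (h'.2 b hbB) hs ht hst using 1
      rw [inner_add_left, real_inner_smul_left, real_inner_smul_left]
      have : t = 1 - s := by linarith
      rw [this]
      module
  have hTcl : IsClosed T := by
    rw [← isSeqClosed_iff_isClosed]
    intro x a hx hxa
    choose c hc using hx
    obtain ⟨a0, c0, ψ, hψ, h1, h2⟩ := wb_seq hB hi hn (fun _ => hu0)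
      (tendsto_const_nhds (x := u0)) hc
    have : a0 = a := tendsto_nhds_unique h1 (hxa.comp hψ.tendsto_atTop)
    exact ⟨c0, this ▸ h2⟩
  obtain ⟨f, s, hfs, hsn⟩ := geometric_hahn_banach_closed_point hTconv hTcl hnT
  set d' : (EuclideanSpace ℝ (Fin 3)) := (InnerProductSpace.toDual ℝ (EuclideanSpace ℝ (Fin 3))).symm f with hd'
  have hd'f : ∀ x, inner ℝ d' x = f x := fun x => InnerProductSpace.toDual_symm_apply
  set d : (EuclideanSpace ℝ (Fin 3)) := d' - (f n) • u0 with hd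
  have hnd : inner ℝ n d = 0 := by
    rw [hd, inner_sub_right, real_inner_smul_right, hu0, real_inner_comm, hd'f]; ring
  have hTd : ∀ a ∈ T, inner ℝ a d < 0 := by
    intro a ha
    have := hfs a ha
    obtain ⟨c, hc⟩ := ha
    rw [hd, inner_sub_right, real_inner_smul_right, hc.1, real_inner_comm, hd'f]
    linarith
  set ut : ℕ → (EuclideanSpace ℝ (Fin 3)) := fun k => u0 + (1 / ((k : ℝ) + 1)) • d with hut
  have hut1 : ∀ k, inner ℝ n (ut k) = 1 := by
    intro k
    simp only [hut]
    rw [inner_add_right, real_inner_smul_right, hnd, hu0]; ring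
  have hutl : Tendsto ut atTop (𝓝 u0) := by
    have := ((tendsto_one_div_add_atTop_nhds_zero_nat (𝕜 := ℝ)).smul_const d).const_add u0
    simpa [hut] using this
  have hne : ∀ k, ut k ≠ 0 := by
    intro k h0
    have := hut1 k
    rw [h0] at this
    simp at this
  have hA : ∀ k, ∃ a c, WBAdm B (ut k) a c := by
    intro k
    obtain ⟨a, c, h, -⟩ := wb_exists_adm hB hconv hb (hne k)
    exact ⟨a, c, h⟩
  choose a c hac using hA
  obtain ⟨a0, c0, ψ, hψ, h1, h2⟩ := wb_seq hB hi hn hut1 hutl hac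
  have hneg := hTd a0 ⟨c0, h2⟩
  have hev : ∀ᶠ k in atTop, inner ℝ ((a ∘ ψ) k) d < 0 :=
    (h1.inner (tendsto_const_nhds (x := d))).eventually (gt_mem_nhds hneg)
  obtain ⟨k, hk⟩ := hev.exists
  set j := ψ k with hj
  simp only [Function.comp] at hk
  have hin : 1 < inner ℝ (a j) u0 := by
    have e := (hac j).1
    simp only [hut] at e
    rw [inner_add_right, real_inner_smul_right] at e
    have : 0 < 1 / ((j : ℝ) + 1) := by positivity
    nlinarith
  have hlimit : inner ℝ (a j) u0 * wbV B H n (ut j) ≤ I := by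
    refine le_of_tendsto_of_tendsto'
      (((tendsto_const_nhds (x := a j)).inner hlim).mul_const (wbV B H n (ut j))) hVlim fun i => ?_
    refine le_trans ?_ (hlt (φ i)).le
    refine le_trans ?_ (wb_sub hB hnH (hut1 j) (hus (φ i)) (hac j))
    exact mul_le_mul_of_nonneg_right (le_abs_self _) ENNReal.toReal_nonneg
  have hVpos : 0 < wbV B H n (ut j) := by
    refine lt_of_lt_of_le ?_ (hco _ (hut1 j))
    positivity
  have := hle _ (hut1 j)
  nlinarith


/-- A convex body in ℝ³ with the weak Blaschke property has the weak dual
Blaschke property. -/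
theorem stmt_18 (B : Set (EuclideanSpace ℝ (Fin 3)))
    (hBcomp : IsCompact B) (hBconv : Convex ℝ B)
    (hBint : (interior B).Nonempty) (hB0 : (0 : EuclideanSpace ℝ (Fin 3)) ∈ B)
    (hbla : WeakBlaschke B) :
    ∀ H : Submodule ℝ (EuclideanSpace ℝ (Fin 3)), Module.finrank ℝ H = 2 →
      ∃ x u : EuclideanSpace ℝ (Fin 3), u ≠ 0 ∧
        (((fun h => h + x) '' (H : Set (EuclideanSpace ℝ (Fin 3)))) ∩ interior B).Nonempty ∧
        ∀ p ∈ ((fun h => h + x) '' (H : Set (EuclideanSpace ℝ (Fin 3)))) ∩ frontier B,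
          ∀ t : ℝ, p + t • u ∉ interior B := by
  intro H hH
  obtain ⟨n, hn, hnH⟩ := wb_normal H hH
  obtain ⟨u, c, h⟩ := wb_main hBcomp hBconv hBint hbla hn hnH
  obtain ⟨o, ho, hoc⟩ := wb_nondeg hBcomp hBconv hBint hbla h
  refine ⟨o, u, ?_, ⟨o, ⟨0, H.zero_mem, by simp⟩, ho⟩, ?_⟩
  · rintro rfl
    have := h.1
    simp at this
  · rintro p ⟨⟨y, hy, rfl⟩, hp⟩ t
    refine wb_support hBconv h ho hoc hp ?_ t
    rw [inner_add_right, (hnH y).1 hy, hoc, zero_add]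
end

section
/- Let B ⊆ ℝ³ be a convex body with the weak Blaschke property. Then B has a center of symmetry: there exists a point p ∈ ℝ³ with B = 2p - B. -/
namespace Blaschke

abbrev E3 := EuclideanSpace ℝ (Fin 3)

/-- triple product -/
def trip (x y z : E3) : ℝ :=
  x 0 * (y 1 * z 2 - y 2 * z 1) - x 1 * (y 0 * z 2 - y 2 * z 0) + x 2 * (y 0 * z 1 - y 1 * z 0)

lemma inner_coord (x y : E3) : inner ℝ x y = x 0 * y 0 + x 1 * y 1 + x 2 * y 2 := by
  simp [PiLp.inner_apply, Fin.sum_univ_three]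
  ring

lemma ext3 {x y : E3} (h0 : x 0 = y 0) (h1 : x 1 = y 1) (h2 : x 2 = y 2) : x = y := by
  ext i
  fin_cases i <;> assumption

lemma ne_zero_coord {n : E3} (hn : n ≠ 0) : n 0 ≠ 0 ∨ n 1 ≠ 0 ∨ n 2 ≠ 0 := by
  by_contra! h
  exact hn (ext3 h.1 h.2.1 h.2.2)

lemma trip_eq_zero {n x y z : E3} (hn : n ≠ 0) (hx : inner ℝ n x = 0) (hy : inner ℝ n y = 0)
    (hz : inner ℝ n z = 0) : trip x y z = 0 := by
  rw [inner_coord] at hx hy hz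
  unfold trip
  rcases ne_zero_coord hn with h | h | h
  · apply mul_left_cancel₀ h
    linear_combination (y 1 * z 2 - y 2 * z 1) * hx - (x 1 * z 2 - x 2 * z 1) * hy
      + (x 1 * y 2 - x 2 * y 1) * hz
  · apply mul_left_cancel₀ h
    linear_combination -(y 0 * z 2 - y 2 * z 0) * hx + (x 0 * z 2 - x 2 * z 0) * hy
      - (x 0 * y 2 - x 2 * y 0) * hz
  · apply mul_left_cancel₀ h
    linear_combination (y 0 * z 1 - y 1 * z 0) * hx - (x 0 * z 1 - x 1 * z 0) * hy
      + (x 0 * y 1 - x 1 * y 0) * hz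

/-- cross product -/
noncomputable def cr (y z : E3) : E3 :=
  !₂[y 1 * z 2 - y 2 * z 1, y 2 * z 0 - y 0 * z 2, y 0 * z 1 - y 1 * z 0]

lemma cr0 (y z : E3) : cr y z 0 = y 1 * z 2 - y 2 * z 1 := rfl
lemma cr1 (y z : E3) : cr y z 1 = y 2 * z 0 - y 0 * z 2 := rfl
lemma cr2 (y z : E3) : cr y z 2 = y 0 * z 1 - y 1 * z 0 := rfl

lemma exists_perp (g g' : E3) : ∃ u : E3, u ≠ 0 ∧ inner ℝ g u = 0 ∧ inner ℝ g' u = 0 := by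
  by_cases h : cr g g' = 0
  · by_cases hg : g = 0
    · by_cases hg' : g' = 0
      · exact ⟨EuclideanSpace.single 0 1, by simp, by simp [hg], by simp [hg']⟩
      · rcases ne_zero_coord hg' with h | h | h
        · refine ⟨!₂[g' 1, - g' 0, 0], fun h0 => h ?_, by simp [hg], ?_⟩
          · simpa using congrArg (fun v : E3 => v 1) h0
          · rw [inner_coord]; simp; ring
        · refine ⟨!₂[g' 1, - g' 0, 0], fun h0 => h ?_, by simp [hg], ?_⟩
          · simpa using congrArg (fun v : E3 => v 0) h0
          · rw [inner_coord]; simp; ring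
        · refine ⟨!₂[g' 2, 0, - g' 0], fun h0 => h ?_, by simp [hg], ?_⟩
          · simpa using congrArg (fun v : E3 => v 0) h0
          · rw [inner_coord]; simp; ring
    · have e0 : g 1 * g' 2 - g 2 * g' 1 = 0 := congrArg (fun v : E3 => v 0) h
      have e1 : g 2 * g' 0 - g 0 * g' 2 = 0 := congrArg (fun v : E3 => v 1) h
      have e2 : g 0 * g' 1 - g 1 * g' 0 = 0 := congrArg (fun v : E3 => v 2) h
      rcases ne_zero_coord hg with h | h | h
      · refine ⟨!₂[g 1, - g 0, 0], fun h0 => h ?_, ?_, ?_⟩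
        · simpa using congrArg (fun v : E3 => v 1) h0
        · rw [inner_coord]; simp; ring
        · rw [inner_coord]; simp; linarith
      · refine ⟨!₂[g 1, - g 0, 0], fun h0 => h ?_, ?_, ?_⟩
        · simpa using congrArg (fun v : E3 => v 0) h0
        · rw [inner_coord]; simp; ring
        · rw [inner_coord]; simp; linarith
      · refine ⟨!₂[g 2, 0, - g 0], fun h0 => h ?_, ?_, ?_⟩
        · simpa using congrArg (fun v : E3 => v 0) h0
        · rw [inner_coord]; simp; ring
        · rw [inner_coord]; simp; linarith
  · refine ⟨_, h, ?_, ?_⟩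
    · rw [inner_coord, cr0, cr1, cr2]; ring
    · rw [inner_coord, cr0, cr1, cr2]; ring

lemma plane_normal (H : Submodule ℝ E3) (hH : Module.finrank ℝ H = 2) :
    ∃ n : E3, n ≠ 0 ∧ ∀ y, y ∈ H ↔ inner ℝ n y = 0 := by
  have h1 : Module.finrank ℝ Hᗮ = 1 := by
    have := Submodule.finrank_add_finrank_orthogonal H
    simp [hH] at this
    omega
  obtain ⟨⟨n, hn⟩, hn0, hspan⟩ := finrank_eq_one_iff'.1 h1
  refine ⟨n, fun h => hn0 (by simpa using h), fun y => ⟨fun hy => ?_, fun hy => ?_⟩⟩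
  · exact (Submodule.mem_orthogonal' H n).1 hn y hy
  · rw [← Submodule.orthogonal_orthogonal H, Submodule.mem_orthogonal]
    intro v hv
    obtain ⟨c, hc⟩ := hspan ⟨v, hv⟩
    have : c • n = v := congrArg Subtype.val hc
    rw [← this, inner_smul_left, hy, mul_zero]

/-- Consequence of the weak Blaschke property: a plane with projection along `u` mapping `B`
into itself. -/
lemma key_plane {B : Set E3} (hBcomp : IsCompact B) (hBconv : Convex ℝ B)
    (hbla : WeakBlaschke B) (u : E3) (hu : u ≠ 0) :
    ∃ n : E3, n ≠ 0 ∧ ∃ c : ℝ, ∀ a ∈ B, ∃ t : ℝ, a - t • u ∈ B ∧ inner ℝ n (a - t • u) = c := by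
  obtain ⟨H, hH, x, ⟨q, ⟨h0, hh0, hq⟩, hqi⟩, hfr⟩ := hbla u hu
  obtain ⟨n, hn, hHn⟩ := plane_normal H hH
  have hpl : ∀ y, y ∈ (fun h => h + x) '' (H : Set E3) ↔ inner ℝ n y = inner ℝ n x := by
    intro y
    constructor
    · rintro ⟨h, hh, rfl⟩
      simp only [inner_add_right, (hHn h).1 hh, zero_add]
    · intro hy
      refine ⟨y - x, (hHn _).2 ?_, by simp⟩
      rw [inner_sub_right, hy, sub_self]
  have hq' : inner ℝ n q = inner ℝ n x := (hpl q).1 ⟨h0, hh0, hq⟩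
  have hqB := interior_subset hqi
  have seg : ∀ z, z ∉ B → ∃ θ : ℝ, 0 ≤ θ ∧ θ < 1 ∧ q + θ • (z - q) ∈ frontier B := by
    intro z hz
    obtain ⟨p, hp, hpf⟩ : ∃ p, p ∈ segment ℝ q z ∧ p ∈ frontier B := by
      by_contra! hno
      obtain ⟨y, -, hy1, hy2⟩ := (convex_segment q z).isPreconnected (interior B) Bᶜ
        isOpen_interior hBcomp.isClosed.isOpen_compl (by
          intro y hy
          by_cases hyB : y ∈ B
          · left
            by_contra hyi
            exact hno y hy ⟨subset_closure hyB, hyi⟩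
          · exact Or.inr hyB)
        ⟨q, left_mem_segment ℝ q z, hqi⟩ ⟨z, right_mem_segment ℝ q z, hz⟩
      exact hy2 (interior_subset hy1)
    rw [segment_eq_image'] at hp
    obtain ⟨θ, ⟨h1, h2⟩, rfl⟩ := hp
    refine ⟨θ, h1, lt_of_le_of_ne h2 ?_, hpf⟩
    rintro rfl
    apply hz
    have := hBcomp.isClosed.frontier_subset hpf
    simpa using this
  have hnu : inner ℝ n u ≠ 0 := by
    intro h0
    obtain ⟨R, hR⟩ := hBcomp.isBounded.subset_closedBall q
    obtain ⟨θ, h1, h2, h3⟩ := seg (q + ((|R| + 1) / ‖u‖) • u) (by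
      intro hz
      have := hR hz
      rw [Metric.mem_closedBall, dist_eq_norm] at this
      have hupos : 0 < ‖u‖ := norm_pos_iff.2 hu
      rw [add_sub_cancel_left, norm_smul, Real.norm_eq_abs, abs_of_nonneg (by positivity),
        div_mul_cancel₀ _ hupos.ne'] at this
      linarith [le_abs_self R])
    rw [add_sub_cancel_left, smul_smul] at h3
    refine hfr _ ⟨(hpl _).2 ?_, h3⟩ (-(θ * ((|R| + 1) / ‖u‖))) ?_
    · rw [inner_add_right, inner_smul_right, h0, hq', mul_zero, add_zero]
    · rw [neg_smul, add_neg_cancel_right]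
      exact hqi
  refine ⟨n, hn, inner ℝ n x, fun a ha => ?_⟩
  set t := (inner ℝ n a - inner ℝ n x) / inner ℝ n u with ht
  have hin : inner ℝ n (a - t • u) = inner ℝ n x := by
    rw [inner_sub_right, inner_smul_right, ht, div_mul_cancel₀ _ hnu]
    ring
  refine ⟨t, ?_, hin⟩
  by_contra hcon
  obtain ⟨θ, h1, h2, h3⟩ := seg _ hcon
  refine hfr _ ⟨(hpl _).2 ?_, h3⟩ (θ * t) ?_
  · rw [inner_add_right, inner_smul_right, inner_sub_right, hin, hq']
    ring
  · have : q + θ • (a - t • u - q) + (θ * t) • u = (1 - θ) • q + θ • a := by module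
    rw [this]
    exact hBconv.combo_interior_self_mem_interior hqi ha (by linarith) h1 (by ring)

/-- `a` maximizes `g` on `B`. -/
def IsMx (B : Set E3) (g a : E3) : Prop := a ∈ B ∧ ∀ x ∈ B, inner ℝ g x ≤ inner ℝ g a

lemma exists_mx {B : Set E3} (hBcomp : IsCompact B) (hne : B.Nonempty) (g : E3) :
    ∃ a, IsMx B g a := by
  obtain ⟨a, ha, h⟩ := hBcomp.exists_isMaxOn hne (f := fun x => inner ℝ g x)
    (by fun_prop)
  exact ⟨a, ha, h⟩

lemma uniq_dense {B : Set E3} (hBcomp : IsCompact B) (hne : B.Nonempty) :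
    Dense {g : E3 | (∀ a a', IsMx B g a → IsMx B g a' → a = a') ∧
      (∀ a a', IsMx B (-g) a → IsMx B (-g) a' → a = a')} := by
  choose A hA using exists_mx hBcomp hne
  obtain ⟨R, hR⟩ := hBcomp.isBounded.subset_closedBall 0
  have hR' : ∀ x ∈ B, ‖x‖ ≤ |R| := fun x hx => by
    have := hR hx
    rw [mem_closedBall_zero_iff] at this
    exact this.trans (le_abs_self R)
  set h : E3 → ℝ := fun g => inner ℝ g (A g) with hh
  have hle : ∀ g, ∀ x ∈ B, inner ℝ g x ≤ h g := fun g x hx => (hA g).2 x hx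
  have hlip : LipschitzWith (Real.toNNReal |R|) h := by
    apply LipschitzWith.of_le_add_mul
    intro x y
    rw [Real.coe_toNNReal _ (abs_nonneg R), dist_eq_norm]
    have h1 := hle y (A x) (hA x).1
    have h2 : inner ℝ (x - y) (A x) ≤ ‖x - y‖ * ‖A x‖ := real_inner_le_norm _ _
    have h3 : ‖x - y‖ * ‖A x‖ ≤ ‖x - y‖ * |R| := by
      gcongr
      exact hR' _ (hA x).1
    rw [inner_sub_left] at h2
    simp only [hh] at h1 ⊢
    linarith
  have huniq : ∀ g, DifferentiableAt ℝ h g → ∀ a a', IsMx B g a → IsMx B g a' → a = a' := by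
    intro g hg
    have key : ∀ a, IsMx B g a → ∀ w, inner ℝ a w = fderiv ℝ h g w := by
      intro a ha w
      have h1 : HasFDerivAt (fun y => h y - innerSL ℝ a y) (fderiv ℝ h g - innerSL ℝ a) g :=
        hg.hasFDerivAt.sub (innerSL ℝ a).hasFDerivAt
      have h2 : IsLocalMin (fun y => h y - innerSL ℝ a y) g := by
        apply Filter.Eventually.of_forall
        intro y
        have e1 := hle y a ha.1
        have e2 := ha.2 (A g) (hA g).1
        simp only [innerSL_apply_apply, real_inner_comm y a, real_inner_comm g a]
        rw [real_inner_comm] at e1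
        simp only [hh] at *
        rw [real_inner_comm a g] at *
        rw [real_inner_comm a y] at *
        linarith
      have h3 := h2.hasFDerivAt_eq_zero h1
      have h4 := congrArg (fun L => L w) h3
      simp only [sub_apply, innerSL_apply_apply,
        zero_apply] at h4
      linarith
    intro a a' ha ha'
    apply ext_inner_right ℝ
    intro w
    rw [key a ha w, key a' ha' w]
  have ae1 := hlip.ae_differentiableAt (μ := MeasureTheory.volume)
  have hlip2 : LipschitzWith (Real.toNNReal |R| * 1) (h ∘ Neg.neg) :=
    hlip.comp (LipschitzWith.id.neg)
  have ae2 := hlip2.ae_differentiableAt (μ := MeasureTheory.volume)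
  refine (MeasureTheory.Measure.dense_of_ae (ae1.and ae2)).mono ?_
  rintro g ⟨h1, h2⟩
  refine ⟨huniq g h1, huniq (-g) ?_⟩
  have h3 : DifferentiableAt ℝ ((h ∘ Neg.neg) ∘ Neg.neg) (-g) := by
    apply DifferentiableAt.comp
    · rw [neg_neg]; exact h2
    · fun_prop
  have : (h ∘ Neg.neg) ∘ Neg.neg = h := by ext; simp
  rwa [this] at h3

lemma trip_cont : Continuous fun s : (E3 × E3 × E3) × (E3 × E3 × E3) =>
    trip (s.1.2.1 - s.2.2.1) (s.1.2.1 - s.1.2.2) (s.2.2.1 - s.2.2.2) := by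
  unfold trip
  fun_prop

lemma selection {B : Set E3} (hBcomp : IsCompact B) (hBconv : Convex ℝ B)
    (hne : B.Nonempty) (hbla : WeakBlaschke B) :
    ∃ A C : E3 → E3, (∀ g, IsMx B g (A g) ∧ IsMx B (-g) (C g)) ∧
      ∀ g g', trip (A g - A g') (A g - C g) (A g' - C g') = 0 := by
  set D := {g : E3 | (∀ a a', IsMx B g a → IsMx B g a' → a = a') ∧
      (∀ a a', IsMx B (-g) a → IsMx B (-g) a' → a = a')} with hD
  have hdense : Dense D := uniq_dense hBcomp hne
  set S : Set (E3 × E3 × E3) := {s | s.1 ∈ D ∧ IsMx B s.1 s.2.1 ∧ IsMx B (-s.1) s.2.2} with hS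
  have hin : ∀ g a, (∀ a a', IsMx B g a → IsMx B g a' → a = a') → IsMx B g a →
      ∀ u n : E3, ∀ c : ℝ, inner ℝ g u = 0 →
      (∀ a ∈ B, ∃ t : ℝ, a - t • u ∈ B ∧ inner ℝ n (a - t • u) = c) → inner ℝ n a = c := by
    intro g a hu ha u n c hgu hproj
    obtain ⟨t, h1, h2⟩ := hproj a ha.1
    have : a = a - t • u := by
      apply hu _ _ ha ⟨h1, fun x hx => ?_⟩
      rw [inner_sub_right, inner_smul_right, hgu, mul_zero, sub_zero]
      exact ha.2 x hx
    rw [this]; exact h2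
  have hSS : ∀ s ∈ S ×ˢ S,
      trip (s.1.2.1 - s.2.2.1) (s.1.2.1 - s.1.2.2) (s.2.2.1 - s.2.2.2) = 0 := by
    rintro ⟨⟨g, a, b⟩, ⟨g', a', b'⟩⟩ ⟨⟨⟨hg1, hg2⟩, ha, hb⟩, ⟨⟨hg1', hg2'⟩, ha', hb'⟩⟩
    simp only at *
    obtain ⟨u, hu, hgu, hgu'⟩ := exists_perp g g'
    obtain ⟨n, hn, c, hproj⟩ := key_plane hBcomp hBconv hbla u hu
    have e1 := hin g a hg1 ha u n c hgu hproj
    have e2 := hin (-g) b hg2 hb u n c (by simp [hgu]) hproj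
    have e3 := hin g' a' hg1' ha' u n c hgu' hproj
    have e4 := hin (-g') b' hg2' hb' u n c (by simp [hgu']) hproj
    apply trip_eq_zero hn <;> simp [inner_sub_right, e1, e2, e3, e4]
  have hcl : ∀ s ∈ closure S ×ˢ closure S,
      trip (s.1.2.1 - s.2.2.1) (s.1.2.1 - s.1.2.2) (s.2.2.1 - s.2.2.2) = 0 := by
    rw [← closure_prod_eq]
    exact closure_minimal hSS (isClosed_eq trip_cont continuous_const)
  have hmx : ∀ s ∈ closure S, IsMx B s.1 s.2.1 ∧ IsMx B (-s.1) s.2.2 := by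
    have hsub : S ⊆ {s | IsMx B s.1 s.2.1 ∧ IsMx B (-s.1) s.2.2} := fun s hs => hs.2
    suffices hc : IsClosed {s : E3 × E3 × E3 | IsMx B s.1 s.2.1 ∧ IsMx B (-s.1) s.2.2} from
      fun s hs => closure_minimal hsub hc hs
    have : {s : E3 × E3 × E3 | IsMx B s.1 s.2.1 ∧ IsMx B (-s.1) s.2.2} =
        ((fun s : E3 × E3 × E3 => s.2.1) ⁻¹' B ∩
          ⋂ x ∈ B, {s : E3 × E3 × E3 | inner ℝ s.1 x ≤ inner ℝ s.1 s.2.1}) ∩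
        ((fun s : E3 × E3 × E3 => s.2.2) ⁻¹' B ∩
          ⋂ x ∈ B, {s : E3 × E3 × E3 | inner ℝ (-s.1) x ≤ inner ℝ (-s.1) s.2.2}) := by
      ext s; simp only [IsMx, Set.mem_inter_iff, Set.mem_iInter, Set.mem_ofPred_eq,
        Set.mem_preimage]
    rw [this]
    refine ((hBcomp.isClosed.preimage (by fun_prop)).inter ?_).inter
      ((hBcomp.isClosed.preimage (by fun_prop)).inter ?_)
    · exact isClosed_biInter fun x _ => isClosed_le (by fun_prop) (by fun_prop)
    · exact isClosed_biInter fun x _ => isClosed_le (by fun_prop) (by fun_prop)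
  have hex : ∀ g : E3, ∃ ab : E3 × E3, (g, ab) ∈ closure S := by
    intro g
    obtain ⟨gs, hgs, hlim⟩ := mem_closure_iff_seq_limit.1 (hdense g)
    choose a ha using fun n => exists_mx hBcomp hne (gs n)
    choose b hb using fun n => exists_mx hBcomp hne (-gs n)
    obtain ⟨ab, -, φ, hφ, hconv⟩ := (hBcomp.prod hBcomp).tendsto_subseq
      (x := fun n => (a n, b n)) (fun n => ⟨(ha n).1, (hb n).1⟩)
    refine ⟨ab, mem_closure_of_tendsto
      ((hlim.comp hφ.tendsto_atTop).prodMk_nhds hconv) (Filter.Eventually.of_forall fun n => ?_)⟩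
    exact ⟨hgs _, ha _, hb _⟩
  choose ab hab using hex
  exact ⟨fun g => (ab g).1, fun g => (ab g).2, fun g => hmx _ (hab g),
    fun g g' => hcl ((g, ab g), (g', ab g')) ⟨hab g, hab g'⟩⟩

/-- lower bound for the width. -/
lemma width {B : Set E3} (hBint : (interior B).Nonempty) :
    ∃ r : ℝ, 0 < r ∧ ∀ g a b, IsMx B g a → IsMx B (-g) b → r * ‖g‖ ≤ inner ℝ g (a - b) := by
  obtain ⟨q, hq⟩ := hBint
  obtain ⟨r, hr, hball⟩ := Metric.isOpen_iff.1 isOpen_interior q hq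
  refine ⟨r / 2, by positivity, fun g a b ha hb => ?_⟩
  by_cases hg : g = 0
  · simp [hg]
  have hgp : 0 < ‖g‖ := norm_pos_iff.2 hg
  have hqB := interior_subset hq
  have h1 : q + (r / 2 / ‖g‖) • g ∈ B := by
    apply interior_subset
    apply hball
    rw [Metric.mem_ball, dist_eq_norm, add_sub_cancel_left, norm_smul, Real.norm_eq_abs,
      abs_of_nonneg (by positivity), div_mul_cancel₀ _ hgp.ne']
    linarith
  have h2 := ha.2 _ h1
  have h3 := hb.2 _ hqB
  rw [inner_neg_left, inner_neg_left] at h3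
  rw [inner_add_right, inner_smul_right, real_inner_self_eq_norm_sq] at h2
  have : r / 2 / ‖g‖ * ‖g‖ ^ 2 = r / 2 * ‖g‖ := by field_simp
  rw [inner_sub_right]
  linarith

lemma telescope (f m : ℝ → ℝ) (C : ℝ)
    (h : ∀ x y, 0 ≤ x → x ≤ y → y ≤ 1 → |f y - f x| ≤ C * ((m y - m x) * (y - x))) :
    f 0 = f 1 := by
  have key : ∀ N : ℕ, |f 1 - f 0| ≤ C * (m 1 - m 0) * (1 / ((N : ℝ) + 1)) := by
    intro N
    have hN : (0 : ℝ) < (N : ℝ) + 1 := by positivity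
    have : ∀ i : ℕ, i ≤ N + 1 → |f (i / ((N : ℝ) + 1)) - f 0| ≤
        C * (m (i / ((N : ℝ) + 1)) - m 0) * (1 / ((N : ℝ) + 1)) := by
      intro i
      induction i with
      | zero => intro _; simp
      | succ i ih =>
        intro hi
        have h1 := ih (by omega)
        have hi' : ((i : ℝ) + 1) ≤ (N : ℝ) + 1 := by exact_mod_cast hi
        have h2 := h (i / ((N : ℝ) + 1)) ((i + 1 : ℕ) / ((N : ℝ) + 1)) (by positivity)
          (by push_cast; gcongr; linarith) (by push_cast; rw [div_le_one hN]; exact hi')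
        have e : ((i + 1 : ℕ) / ((N : ℝ) + 1)) - (i / ((N : ℝ) + 1)) = 1 / ((N : ℝ) + 1) := by
          push_cast; field_simp; ring
        rw [e] at h2
        have h3 := abs_sub_le (f ((i + 1 : ℕ) / ((N : ℝ) + 1))) (f (i / ((N : ℝ) + 1))) (f 0)
        linarith
    have := this (N + 1) le_rfl
    push_cast at this
    rwa [div_self hN.ne'] at this
  have hlim : Filter.Tendsto (fun N : ℕ => C * (m 1 - m 0) * (1 / ((N : ℝ) + 1))) Filter.atTop
      (nhds (C * (m 1 - m 0) * 0)) := tendsto_one_div_add_atTop_nhds_zero_nat.const_mul _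
  have := ge_of_tendsto' hlim key
  rw [mul_zero] at this
  have := abs_nonpos_iff.1 this
  linarith


lemma inner_cr (x y z : E3) : inner ℝ x (cr y z) = trip x y z := by
  rw [inner_coord, cr0, cr1, cr2]; unfold trip; ring

lemma par_of_cr {d x : E3} (hd : d ≠ 0) (h : cr d x = 0) : ∃ s : ℝ, x = s • d := by
  have e0 : d 1 * x 2 - d 2 * x 1 = 0 := congrArg (fun v : E3 => v 0) h
  have e1 : d 2 * x 0 - d 0 * x 2 = 0 := congrArg (fun v : E3 => v 1) h
  have e2 : d 0 * x 1 - d 1 * x 0 = 0 := congrArg (fun v : E3 => v 2) h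
  rcases ne_zero_coord hd with h | h | h
  · refine ⟨x 0 / d 0, ext3 ?_ ?_ ?_⟩ <;> simp <;> field_simp <;> linarith
  · refine ⟨x 1 / d 1, ext3 ?_ ?_ ?_⟩ <;> simp <;> field_simp <;> linarith
  · refine ⟨x 2 / d 2, ext3 ?_ ?_ ?_⟩ <;> simp <;> field_simp <;> linarith

lemma comb_of_trip {x y z : E3} (h : trip x y z = 0) (hn : cr y z ≠ 0) :
    ∃ α β : ℝ, x = α • y + β • z := by
  have hN : inner ℝ (cr y z) (cr y z) ≠ 0 := inner_self_ne_zero.2 hn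
  refine ⟨inner ℝ (cr x z) (cr y z) / inner ℝ (cr y z) (cr y z),
    inner ℝ (cr y x) (cr y z) / inner ℝ (cr y z) (cr y z), ?_⟩
  have key : inner ℝ (cr y z) (cr y z) • x =
      inner ℝ (cr x z) (cr y z) • y + inner ℝ (cr y x) (cr y z) • z := by
    unfold trip at h
    apply ext3 <;> simp only [inner_coord, cr0, cr1, cr2, PiLp.add_apply, PiLp.smul_apply,
      smul_eq_mul]
    · linear_combination (y 1 * z 2 - y 2 * z 1) * h
    · linear_combination (y 2 * z 0 - y 0 * z 2) * h
    · linear_combination (y 0 * z 1 - y 1 * z 0) * h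
  rw [div_eq_inv_mul, div_eq_inv_mul, mul_smul, mul_smul, ← smul_add, ← key, smul_smul,
    inv_mul_cancel₀ hN, one_smul]

lemma trip_sub_left (x x' y z : E3) : trip (x - x') y z = trip x y z - trip x' y z := by
  unfold trip; simp; ring

lemma concurrent (A d : E3 → E3) (hpos : ∀ g, g ≠ 0 → 0 < inner ℝ g (d g))
    (htrip : ∀ g g', trip (A g - A g') (d g) (d g') = 0) :
    ∃ p : E3, ∀ g, g ≠ 0 → ∃ s : ℝ, A g - p = s • d g := by
  have hd0 : ∀ g, g ≠ 0 → d g ≠ 0 := fun g hg h => by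
    have := hpos g hg
    rw [h, inner_zero_right] at this
    exact lt_irrefl _ this
  obtain ⟨g1, hg1, -⟩ := exists_perp 0 0
  obtain ⟨g2, hg2, hg2d, -⟩ := exists_perp (d g1) (d g1)
  have hn : cr (d g1) (d g2) ≠ 0 := by
    intro h
    obtain ⟨s, hs⟩ := par_of_cr (hd0 g1 hg1) h
    have := hpos g2 hg2
    rw [hs, inner_smul_right, real_inner_comm, hg2d, mul_zero] at this
    exact lt_irrefl _ this
  set g3 := cr (d g1) (d g2) with hg3
  have h3 : trip (d g3) (d g1) (d g2) ≠ 0 := by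
    rw [← inner_cr, ← hg3, real_inner_comm]
    exact (hpos g3 hn).ne'
  obtain ⟨α, β, hαβ⟩ := comb_of_trip (htrip g1 g2) hn
  set p := A g1 - α • d g1 with hp
  have e1 : A g1 - p = α • d g1 := by rw [hp]; abel
  have e2 : A g2 - p = (-β) • d g2 := by
    rw [hp]
    have : A g2 - (A g1 - α • d g1) = -(A g1 - A g2) + α • d g1 := by abel
    rw [this, hαβ]; module
  have step : ∀ g g' : E3, (∃ s : ℝ, A g' - p = s • d g') →
      inner ℝ (cr (d g) (A g - p)) (d g') = 0 := by
    rintro g g' ⟨s, hs⟩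
    have h := htrip g g'
    have e : A g - A g' = (A g - p) - s • d g' := by rw [← hs]; abel
    rw [e] at h
    rw [inner_coord, cr0, cr1, cr2]
    unfold trip at h
    simp only [PiLp.sub_apply, PiLp.smul_apply, smul_eq_mul] at h ⊢
    linear_combination -h
  have fin : ∀ g, g ≠ 0 → inner ℝ (cr (d g) (A g - p)) (d g3) = 0 →
      ∃ s : ℝ, A g - p = s • d g := by
    intro g hg h
    apply par_of_cr (hd0 g hg)
    by_contra hne
    exact h3 (trip_eq_zero hne h (step g g1 ⟨_, e1⟩) (step g g2 ⟨_, e2⟩))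
  have e3 := fin g3 hn (by rw [inner_coord, cr0, cr1, cr2]; ring)
  exact ⟨p, fun g hg => fin g hg (step g g3 e3)⟩

theorem main (B : Set E3)
    (hBcomp : IsCompact B) (hBconv : Convex ℝ B)
    (hBint : (interior B).Nonempty)
    (hbla : WeakBlaschke B) :
    ∃ p : E3, ∀ x ∈ B, (2 : ℝ) • p - x ∈ B := by
  have hne : B.Nonempty := hBint.mono interior_subset
  obtain ⟨A, C, hAC, htrip⟩ := selection hBcomp hBconv hne hbla
  obtain ⟨r, hr, hwid⟩ := width hBint
  have hw : ∀ g, r * ‖g‖ ≤ inner ℝ g (A g - C g) := fun g => hwid g _ _ (hAC g).1 (hAC g).2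
  have hpos : ∀ g, g ≠ 0 → 0 < inner ℝ g (A g - C g) := fun g hg =>
    lt_of_lt_of_le (mul_pos hr (norm_pos_iff.2 hg)) (hw g)
  obtain ⟨p, hp⟩ := concurrent A (fun g => A g - C g) hpos htrip
  have hp' : ∀ g, ∃ s : ℝ, g ≠ 0 → A g - p = s • (A g - C g) := by
    intro g
    by_cases hg : g = 0
    · exact ⟨0, fun h => absurd hg h⟩
    · obtain ⟨s, hs⟩ := hp g hg
      exact ⟨s, fun _ => hs⟩
  choose s hs using hp'
  obtain ⟨M, hM⟩ := hBcomp.isBounded.subset_closedBall p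
  have hK : ∀ g, g ≠ 0 → |s g| ≤ |M| / r := by
    intro g hg
    have hgp := norm_pos_iff.2 hg
    have h1 : ‖A g - p‖ ≤ |M| := by
      have := hM (hAC g).1.1
      rw [Metric.mem_closedBall, dist_eq_norm] at this
      exact this.trans (le_abs_self M)
    rw [hs g hg, norm_smul, Real.norm_eq_abs] at h1
    have h2 : r ≤ ‖A g - C g‖ := by
      have h3 := (hw g).trans (real_inner_le_norm _ _)
      rw [mul_comm] at h3
      exact le_of_mul_le_mul_left h3 hgp
    rw [le_div_iff₀ hr]
    exact (mul_le_mul_of_nonneg_left h2 (abs_nonneg _)).trans h1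
  have hA' : ∀ g, g ≠ 0 → A g = p + s g • (A g - C g) := fun g hg => by
    rw [← hs g hg]; abel
  have hC' : ∀ g, g ≠ 0 → C g = p + (s g - 1) • (A g - C g) := fun g hg => by
    rw [sub_smul, ← hs g hg]; module
  have ineq1 : ∀ g g', g ≠ 0 → g' ≠ 0 →
      s g * inner ℝ g' (A g - C g) ≤ s g' * inner ℝ g' (A g' - C g') := by
    intro g g' hg hg'
    have h := (hAC g').1.2 (A g) (hAC g).1.1
    have e1 := congrArg (fun v => inner ℝ g' v) (hA' g hg)
    have e2 := congrArg (fun v => inner ℝ g' v) (hA' g' hg')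
    simp only [inner_add_right, inner_smul_right] at e1 e2
    linarith
  have ineq2 : ∀ g g', g ≠ 0 → g' ≠ 0 →
      (1 - s g) * inner ℝ g' (A g - C g) ≤ (1 - s g') * inner ℝ g' (A g' - C g') := by
    intro g g' hg hg'
    have h := (hAC g').2.2 (C g) (hAC g).2.1
    have e1 := congrArg (fun v => inner ℝ g' v) (hC' g hg)
    have e2 := congrArg (fun v => inner ℝ g' v) (hC' g' hg')
    simp only [inner_add_right, inner_smul_right] at e1 e2
    simp only [inner_neg_left] at h
    linarith
  have hconst : ∀ g g', (∀ y : ℝ, 0 ≤ y → y ≤ 1 → g + y • (g' - g) ≠ 0) → s g = s g' := by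
    intro g g' hseg
    obtain ⟨y0, hy0, hmin⟩ := (isCompact_Icc (a := (0:ℝ)) (b := 1)).exists_isMinOn
      ⟨0, by simp⟩ (f := fun y : ℝ => ‖g + y • (g' - g)‖) (by fun_prop)
    set c := ‖g + y0 • (g' - g)‖ with hc
    have hcpos : 0 < c := norm_pos_iff.2 (hseg y0 hy0.1 hy0.2)
    set G : ℝ → E3 := fun y => g + y • (g' - g) with hG
    have := telescope (fun y => s (G y)) (fun y => inner ℝ (g' - g) (A (G y) - C (G y)))
      ((|M| / r + 1) / (r * c)) (by
      intro x y hx hxy hy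
      have hgx : G x ≠ 0 := hseg x hx (hxy.trans hy)
      have hgy : G y ≠ 0 := hseg y (hx.trans hxy) hy
      have i1 := ineq1 (G x) (G y) hgx hgy
      have i2 := ineq2 (G x) (G y) hgx hgy
      have i3 := ineq1 (G y) (G x) hgy hgx
      have i4 := ineq2 (G y) (G x) hgy hgx
      have hwy : r * c ≤ inner ℝ (G y) (A (G y) - C (G y)) := by
        refine le_trans ?_ (hw (G y))
        exact mul_le_mul_of_nonneg_left (hmin ⟨hx.trans hxy, hy⟩) hr.le
      have exy : G y = G x + (y - x) • (g' - g) := by simp only [hG]; module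
      have a1 : inner ℝ (G y) (A (G x) - C (G x)) = inner ℝ (G x) (A (G x) - C (G x))
          + (y - x) * inner ℝ (g' - g) (A (G x) - C (G x)) := by
        conv_lhs => rw [exy, inner_add_left, inner_smul_left]
        simp [G]
      have a2 : inner ℝ (G y) (A (G y) - C (G y)) = inner ℝ (G x) (A (G y) - C (G y))
          + (y - x) * inner ℝ (g' - g) (A (G y) - C (G y)) := by
        have : inner ℝ (G y) (A (G y) - C (G y)) =
          inner ℝ (G x + (y - x) • (g' - g)) (A (G y) - C (G y)) := by rw [← exy]
        rw [this, inner_add_left, inner_smul_left]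
        simp
      have b := abs_le.1 (hK (G x) hgx)
      generalize inner ℝ (G y) (A (G x) - C (G x)) = wyx at *
      generalize inner ℝ (G y) (A (G y) - C (G y)) = wy at *
      generalize inner ℝ (G x) (A (G x) - C (G x)) = wx at *
      generalize inner ℝ (G x) (A (G y) - C (G y)) = wxy at *
      generalize inner ℝ (g' - g) (A (G y) - C (G y)) = my at *
      generalize inner ℝ (g' - g) (A (G x) - C (G x)) = mx at *
      generalize s (G x) = sx at *
      generalize s (G y) = sy at *
      generalize |M| / r = K at *
      have he0 : 0 ≤ wy - wyx := by linarith
      have he1 : wy - wyx ≤ (my - mx) * (y - x) := by linarith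
      have hK0 : 0 ≤ K := by linarith
      have j1 : (sy - sx) * wy ≤ (K + 1) * ((my - mx) * (y - x)) := by
        have : (1 - sx) * (wy - wyx) ≤ (K + 1) * (wy - wyx) :=
          mul_le_mul_of_nonneg_right (by linarith) he0
        have : (K + 1) * (wy - wyx) ≤ (K + 1) * ((my - mx) * (y - x)) :=
          mul_le_mul_of_nonneg_left he1 (by linarith)
        linarith
      have j2 : -(sy - sx) * wy ≤ (K + 1) * ((my - mx) * (y - x)) := by
        have : sx * (wy - wyx) ≤ (K + 1) * (wy - wyx) :=
          mul_le_mul_of_nonneg_right (by linarith) he0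
        have : (K + 1) * (wy - wyx) ≤ (K + 1) * ((my - mx) * (y - x)) :=
          mul_le_mul_of_nonneg_left he1 (by linarith)
        linarith
      have hrc : 0 < r * c := mul_pos hr hcpos
      have j3 : |sy - sx| * wy ≤ (K + 1) * ((my - mx) * (y - x)) := by
        rcases abs_choice (sy - sx) with h | h <;> rw [h] <;> assumption
      rw [div_mul_eq_mul_div, le_div_iff₀ hrc]
      exact (mul_le_mul_of_nonneg_left hwy (abs_nonneg _)).trans j3)
    simpa [hG] using this
  have hperp : ∀ g g', g ≠ 0 → g' ≠ 0 → inner ℝ g g' = 0 → s g = s g' := by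
    intro g g' hg hg' h
    apply hconst
    intro y hy0 hy1 h0
    have e1 := congrArg (fun v => inner ℝ g v) h0
    have e2 := congrArg (fun v => inner ℝ g' v) h0
    simp only [inner_add_right, inner_smul_right, inner_sub_right, h, inner_zero_right,
      real_inner_comm g g'] at e1 e2
    have p1 : inner ℝ g g ≠ 0 := inner_self_ne_zero.2 hg
    have p2 : inner ℝ g' g' ≠ 0 := inner_self_ne_zero.2 hg'
    have q1 : (1 - y) * inner ℝ g g = 0 := by linarith
    have q2 : y * inner ℝ g' g' = 0 := by linarith
    have r1 := (mul_eq_zero.1 q1).resolve_right p1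
    have r2 := (mul_eq_zero.1 q2).resolve_right p2
    linarith
  have hhalf : ∀ g, g ≠ 0 → s g = 1 / 2 := by
    intro g hg
    obtain ⟨g', hg', hgg', -⟩ := exists_perp g g
    have hng : -g ≠ 0 := neg_ne_zero.2 hg
    have e1 := hperp g g' hg hg' hgg'
    have e2 := hperp (-g) g' hng hg' (by simp [hgg'])
    have m1 : inner ℝ g (A (-g)) = inner ℝ g (C g) := by
      have h1 := (hAC g).2.2 _ (hAC (-g)).1.1
      have h2 := (hAC (-g)).1.2 _ (hAC g).2.1
      simp only [inner_neg_left] at h1 h2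
      linarith
    have m2 : inner ℝ g (C (-g)) = inner ℝ g (A g) := by
      have h1 := (hAC g).1.2 _ (hAC (-g)).2.1
      have h2 := (hAC (-g)).2.2 _ (hAC g).1.1
      simp only [neg_neg] at h2
      linarith
    have f1 := congrArg (fun v => inner ℝ g v) (hs g hg)
    have f2 := congrArg (fun v => inner ℝ g v) (hs (-g) hng)
    simp only [inner_sub_right, inner_smul_right, m1, m2] at f1 f2
    have hwp := hpos g hg
    rw [inner_sub_right] at hwp
    rw [e2, ← e1] at f2
    have : (2 * s g - 1) * (inner ℝ g (A g) - inner ℝ g (C g)) = 0 := by linarith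
    have := (mul_eq_zero.1 this).resolve_right hwp.ne'
    linarith
  refine ⟨p, fun x hx => ?_⟩
  by_contra hcon
  obtain ⟨f, u, hf1, hf2⟩ := geometric_hahn_banach_closed_point hBconv hBcomp.isClosed hcon
  set g := (InnerProductSpace.toDual ℝ E3).symm f with hgdef
  have hfg : ∀ y, f y = inner ℝ g y := fun y => by
    rw [hgdef, InnerProductSpace.toDual_symm_apply]
  have hg : g ≠ 0 := by
    intro h0
    have h1 := hf1 x hx
    rw [hfg, h0, inner_zero_left] at h1 hf2
    linarith
  have h1 := hf1 (A g) (hAC g).1.1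
  have h2 := (hAC g).2.2 x hx
  have h3 := congrArg (fun v => inner ℝ g v) (hs g hg)
  rw [hfg] at h1 hf2
  simp only [inner_sub_right, inner_smul_right, inner_neg_left, hhalf g hg] at h1 h2 h3 hf2
  linarith

end Blaschke

/-- A convex body in ℝ³ with the weak Blaschke property has a center of
symmetry. -/
theorem stmt_19 (B : Set (EuclideanSpace ℝ (Fin 3)))
    (hBcomp : IsCompact B) (hBconv : Convex ℝ B)
    (hBint : (interior B).Nonempty) (hB0 : (0 : EuclideanSpace ℝ (Fin 3)) ∈ B)
    (hbla : WeakBlaschke B) :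
    ∃ p : EuclideanSpace ℝ (Fin 3), B = (fun x => (2 : ℝ) • p - x) '' B := by
  obtain ⟨p, hp⟩ := Blaschke.main B hBcomp hBconv hBint hbla
  refine ⟨p, Set.Subset.antisymm (fun x hx => ⟨_, hp x hx, by simp⟩) ?_⟩
  rintro _ ⟨x, hx, rfl⟩
  exact hp x hx
end
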